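/- arXiv:math/0509527 — 3 statements merged into one kernel-verified Lean document; each statement's English description precedes it below -/
import Mathlib

section
/- Let Γ be a finitely generated group that is quasi-isometric to ℤⁿ (with its standard word metric). Then Γ has a finite index subgroup isomorphic to ℤⁿ. -/
open scoped BigOperators

noncomputable section

/-- Word length with respect to a generating set `S`. -/
def wordLength {G : Type*} [Group G] (S : Set G) (g : G) : ℕ :=
  sInf {n : ℕ | ∃ l : List G, l.length = n ∧ (∀ x ∈ l, x ∈ S) ∧ l.prod = g}

/-- The word metric on a group with generating set `S`. -/
def wordDist {G : Type*} [Group G] (S : Set G) (g h : G) : ℝ :=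
  (wordLength S (g⁻¹ * h) : ℝ)

/-- The ℓ¹ metric on `ℤⁿ` (the word metric of the standard generating set). -/
def zDist {n : ℕ} (x y : Fin n → ℤ) : ℝ :=
  ∑ i, |((x i : ℝ) - (y i : ℝ))|

namespace QIZ

open scoped Classical

/-- A finite symmetric generating set. -/
structure IsGen {G : Type*} [Group G] (S : Finset G) : Prop where
  inv_mem : ∀ s ∈ S, s⁻¹ ∈ S
  gen : Subgroup.closure (S : Set G) = ⊤

section word
variable {G : Type*} [Group G] {S : Finset G}

/-- Word length for a finite set. -/
abbrev wl (S : Finset G) (g : G) : ℕ := wordLength (S : Set G) g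

theorem wl_le_of_list {l : List G} (hl : ∀ x ∈ l, x ∈ S) : wl S l.prod ≤ l.length :=
  Nat.sInf_le ⟨l, rfl, hl, rfl⟩

theorem exists_list (hS : IsGen S) (g : G) : ∃ l : List G, (∀ x ∈ l, x ∈ S) ∧ l.prod = g := by
  have hg : g ∈ Subgroup.closure (S : Set G) := by rw [hS.gen]; trivial
  induction hg using Subgroup.closure_induction with
  | mem x hx => exact ⟨[x], by simpa using hx, by simp⟩
  | one => exact ⟨[], by simp, by simp⟩
  | mul x y _ _ hx hy =>
    obtain ⟨l, hl, rfl⟩ := hx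
    obtain ⟨m, hm, rfl⟩ := hy
    refine ⟨l ++ m, ?_, by simp⟩
    intro x hx
    rcases List.mem_append.1 hx with h | h
    · exact hl x h
    · exact hm x h
  | inv x _ hx =>
    obtain ⟨l, hl, rfl⟩ := hx
    refine ⟨(l.map fun x => x⁻¹).reverse, ?_, ?_⟩
    · intro x hx
      simp only [List.mem_reverse, List.mem_map] at hx
      obtain ⟨a, ha, rfl⟩ := hx
      exact hS.inv_mem a (hl a ha)
    · exact (List.prod_inv_reverse l).symm

theorem exists_word (hS : IsGen S) (g : G) :
    ∃ l : List G, l.length = wl S g ∧ (∀ x ∈ l, x ∈ S) ∧ l.prod = g := by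
  obtain ⟨l, hl, hg⟩ := exists_list hS g
  exact Nat.sInf_mem (s := {n : ℕ | ∃ l : List G, l.length = n ∧ (∀ x ∈ l, x ∈ (S : Set G)) ∧ l.prod = g})
    ⟨l.length, l, rfl, hl, hg⟩

theorem wl_one : wl S (1 : G) = 0 := by
  have := wl_le_of_list (S := S) (l := ([] : List G)) (by simp)
  simpa using this

theorem wl_mem {s : G} (hs : s ∈ S) : wl S s ≤ 1 := by
  have := wl_le_of_list (S := S) (l := [s]) (by simpa using hs)
  simpa using this

theorem wl_mul (hS : IsGen S) (g h : G) : wl S (g * h) ≤ wl S g + wl S h := by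
  obtain ⟨l, hl, hl', rfl⟩ := exists_word hS g
  obtain ⟨m, hm, hm', rfl⟩ := exists_word hS h
  rw [← hl, ← hm, ← List.prod_append, ← List.length_append]
  apply wl_le_of_list
  intro x hx
  rcases List.mem_append.1 hx with h | h
  · exact hl' x h
  · exact hm' x h

theorem wl_inv_le (hS : IsGen S) (g : G) : wl S g⁻¹ ≤ wl S g := by
  obtain ⟨l, hl, hl', rfl⟩ := exists_word hS g
  rw [← hl, List.prod_inv_reverse]
  refine (wl_le_of_list ?_).trans (by simp)
  intro x hx
  simp only [List.mem_reverse, List.mem_map] at hx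
  obtain ⟨a, ha, rfl⟩ := hx
  exact hS.inv_mem a (hl' a ha)

theorem wl_inv (hS : IsGen S) (g : G) : wl S g⁻¹ = wl S g :=
  le_antisymm (wl_inv_le hS g) (by simpa using wl_inv_le hS g⁻¹)

theorem eq_one_of_wl (hS : IsGen S) {g : G} (h : wl S g = 0) : g = 1 := by
  obtain ⟨l, hl, hl', rfl⟩ := exists_word hS g
  rw [h] at hl
  rw [List.length_eq_zero_iff.1 hl]; rfl

/-- Balls in the word metric. -/
def ball (S : Finset G) : ℕ → Finset G
  | 0 => {1}
  | r + 1 => ball S r ∪ (ball S r ×ˢ S).image (fun p => p.1 * p.2)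

theorem wl_succ (hS : IsGen S) {g : G} {r : ℕ} (h : wl S g = r + 1) :
    ∃ g' s, s ∈ S ∧ g = g' * s ∧ wl S g' ≤ r := by
  obtain ⟨l, hl, hl', rfl⟩ := exists_word hS g
  rw [h] at hl
  have hne : l ≠ [] := by rintro rfl; simp at hl
  refine ⟨l.dropLast.prod, l.getLast hne, hl' _ (List.getLast_mem hne), ?_, ?_⟩
  · conv_lhs => rw [← List.dropLast_append_getLast hne]
    simp
  · refine (wl_le_of_list fun x hx => hl' x (List.mem_of_mem_dropLast hx)).trans ?_
    simp [hl]

theorem mem_ball (hS : IsGen S) {g : G} {r : ℕ} : g ∈ ball S r ↔ wl S g ≤ r := by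
  induction r generalizing g with
  | zero =>
    simp only [ball, Finset.mem_singleton, Nat.le_zero]
    exact ⟨fun h => h ▸ wl_one, eq_one_of_wl hS⟩
  | succ r ih =>
    simp only [ball, Finset.mem_union, Finset.mem_image, Finset.mem_product, Prod.exists]
    constructor
    · rintro (h | ⟨a, s, ⟨ha, hs⟩, rfl⟩)
      · exact (ih.1 h).trans (Nat.le_succ _)
      · exact (wl_mul hS a s).trans (add_le_add (ih.1 ha) (wl_mem hs))
    · intro h
      rcases Nat.lt_or_ge r (wl S g) with h' | h'
      · obtain ⟨a, s, hs, rfl, ha⟩ := wl_succ hS (le_antisymm h h')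
        exact Or.inr ⟨a, s, ⟨ih.2 ha, hs⟩, rfl⟩
      · exact Or.inl (ih.2 h')

theorem ball_mono (hS : IsGen S) {r t : ℕ} (h : r ≤ t) : ball S r ⊆ ball S t := fun g hg =>
  (mem_ball hS).2 (((mem_ball hS).1 hg).trans h)

theorem one_mem_ball (hS : IsGen S) (r : ℕ) : (1 : G) ∈ ball S r := by
  rw [mem_ball hS, wl_one]; exact Nat.zero_le _

theorem ball_card_pos (hS : IsGen S) (r : ℕ) : 0 < (ball S r).card :=
  Finset.card_pos.2 ⟨1, one_mem_ball hS r⟩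

end word
end QIZ

namespace QIZ
open scoped Classical

/-- Integer version of the ℓ¹ metric. -/
def zdN {n : ℕ} (x y : Fin n → ℤ) : ℕ := ∑ i, (x i - y i).natAbs

theorem zDist_eq {n : ℕ} (x y : Fin n → ℤ) : zDist x y = (zdN x y : ℝ) := by
  simp [zDist, zdN, Nat.cast_natAbs]

theorem zdN_coord {n : ℕ} (x y : Fin n → ℤ) (i : Fin n) : (x i - y i).natAbs ≤ zdN x y :=
  Finset.single_le_sum (f := fun i => (x i - y i).natAbs) (fun _ _ => Nat.zero_le _)
    (Finset.mem_univ i)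

/-- Box in `ℤⁿ`. -/
def box {n : ℕ} (z : Fin n → ℤ) (t : ℕ) : Finset (Fin n → ℤ) :=
  Fintype.piFinset fun i => Finset.Icc (z i - t) (z i + t)

theorem mem_box {n : ℕ} {z w : Fin n → ℤ} {t : ℕ} : w ∈ box z t ↔ ∀ i, (w i - z i).natAbs ≤ t := by
  simp only [box, Fintype.mem_piFinset, Finset.mem_Icc]
  refine forall_congr' fun i => ?_
  omega

theorem card_box {n : ℕ} (z : Fin n → ℤ) (t : ℕ) : (box z t).card = (2 * t + 1) ^ n := by
  simp only [box, Fintype.card_piFinset, Int.card_Icc]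
  rw [Finset.prod_congr rfl (g := fun _ => 2 * t + 1) (fun i _ => by omega)]
  simp

/-- quasi-isometry with natural number constants -/
structure IsQI {G : Type*} [Group G] (S : Finset G) {n : ℕ} (f : G → (Fin n → ℤ)) (c C : ℕ) : Prop
    where
  low : ∀ x y, wl S (x⁻¹ * y) ≤ c * (zdN (f x) (f y) + C)
  up : ∀ x y, zdN (f x) (f y) ≤ c * wl S (x⁻¹ * y) + C
  dense : ∀ z, ∃ x, zdN (f x) z ≤ C

theorem isQI_of {G : Type*} [Group G] (S : Finset G) {n : ℕ} (f : G → (Fin n → ℤ)) (c : ℝ)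
    (hc : 1 ≤ c) (C : ℝ)
    (hlower : ∀ x y : G, (1 / c) * wordDist (S : Set G) x y - C ≤ zDist (f x) (f y))
    (hupper : ∀ x y : G, zDist (f x) (f y) ≤ c * wordDist (S : Set G) x y + C)
    (hdense : ∀ z : Fin n → ℤ, ∃ x : G, zDist (f x) z ≤ C) : IsQI S f ⌈c⌉₊ ⌈C⌉₊ := by
  have h1 : c ≤ (⌈c⌉₊ : ℝ) := Nat.le_ceil c
  have h2 : C ≤ (⌈C⌉₊ : ℝ) := Nat.le_ceil C
  have hc0 : 0 < c := by linarith
  refine ⟨fun x y => ?_, fun x y => ?_, fun z => ?_⟩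
  · have := hlower x y
    rw [zDist_eq, wordDist] at this
    have h3 : (wordLength (S : Set G) (x⁻¹ * y) : ℝ) ≤ c * (zdN (f x) (f y) + C) := by
      have : (1 / c) * (wordLength (S : Set G) (x⁻¹ * y) : ℝ) ≤ zdN (f x) (f y) + C := by linarith
      rw [one_div, inv_mul_le_iff₀ hc0] at this
      linarith
    have h4 : (wordLength (S : Set G) (x⁻¹ * y) : ℝ) ≤ (⌈c⌉₊ : ℝ) * (zdN (f x) (f y) + ⌈C⌉₊) := by
      refine h3.trans ?_
      have h5 : (0:ℝ) ≤ zdN (f x) (f y) + ⌈C⌉₊ := by positivity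
      nlinarith
    exact_mod_cast h4
  · have := hupper x y
    rw [zDist_eq, wordDist] at this
    have h4 : (zdN (f x) (f y) : ℝ) ≤ (⌈c⌉₊ : ℝ) * (wordLength (S : Set G) (x⁻¹ * y) : ℝ) + ⌈C⌉₊ := by
      have h5 : (0:ℝ) ≤ (wordLength (S : Set G) (x⁻¹ * y) : ℝ) := by positivity
      nlinarith
    exact_mod_cast h4
  · obtain ⟨x, hx⟩ := hdense z
    refine ⟨x, ?_⟩
    rw [zDist_eq] at hx
    exact_mod_cast hx.trans h2

section
variable {G : Type*} [Group G] {S : Finset G} {n : ℕ} {f : G → (Fin n → ℤ)} {c C : ℕ}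

theorem growth_upper (hS : IsGen S) (hf : IsQI S f c C) :
    ∃ P : ℕ, ∀ r, (ball S r).card ≤ P * (r + 1) ^ n := by
  refine ⟨(ball S (c * C)).card * (2 * (c + C) + 1) ^ n, fun r => ?_⟩
  have h1 : (ball S r).card ≤ (ball S (c * C)).card * (box (f 1) (c * r + C)).card := by
    refine Finset.card_le_mul_card_image_of_maps_to (f := f) ?_ _ ?_
    · intro x hx
      rw [mem_box]
      intro i
      refine (zdN_coord (f x) (f 1) i).trans ((hf.up x 1).trans ?_)
      rw [mul_one, wl_inv hS]
      have := (mem_ball hS).1 hx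
      gcongr
    · intro z _
      by_cases hne : ((ball S r).filter fun x => f x = z).Nonempty
      · obtain ⟨x0, hx0⟩ := hne
        refine Finset.card_le_card_of_injOn (fun x => x0⁻¹ * x) ?_ ?_
        · intro x hx
          simp only [Finset.coe_filter, Set.mem_ofPred_eq, Finset.mem_filter] at hx hx0
          refine Finset.mem_coe.2 ((mem_ball hS).2 ?_)
          have := hf.low x0 x
          rw [hx.2, hx0.2] at this
          simpa [zdN] using this
        · intro x _ y _ h
          exact mul_left_cancel h
      · rw [Finset.not_nonempty_iff_eq_empty.1 hne]; simp
  rw [card_box] at h1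
  refine h1.trans ?_
  rw [mul_assoc, ← mul_pow]
  gcongr
  nlinarith [Nat.zero_le c, Nat.zero_le C, Nat.zero_le r, Nat.zero_le (C * r)]

theorem growth_lower (hS : IsGen S) (hf : IsQI S f c C) :
    ∃ Q : ℕ, ∀ r, (r + 1) ^ n ≤ Q * (ball S r).card := by
  set w := c * (n + 2 * C) + 1 with hw
  refine ⟨w ^ n * (2 * C + 1) ^ n, fun r => ?_⟩
  have hw0 : 0 < w := by omega
  set T := r / w with hT
  have h1 : (2 * T + 1) ^ n ≤ (2 * C + 1) ^ n * (ball S r).card := by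
    rcases Nat.eq_zero_or_pos T with h0 | h0
    · rw [h0]
      have := ball_card_pos hS r
      have h3 : 0 < (2 * C + 1) ^ n := by positivity
      have h4 := Nat.mul_pos h3 this
      simp only [mul_zero, zero_add, one_pow]
      exact h4
    · choose x hx using hf.dense
      have hwT : T * w ≤ r := Nat.div_mul_le_self r w
      rw [← card_box (f 1) T]
      refine Finset.card_le_mul_card_image_of_maps_to (f := x) ?_ _ ?_
      · intro z hz
        rw [mem_box] at hz
        rw [mem_ball hS]
        have h2 := hf.low 1 (x z)
        have h3 : zdN (f 1) (f (x z)) ≤ n * T + C := by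
          have h4 : zdN (f 1) (f (x z)) ≤ ∑ i, ((z i - f 1 i).natAbs + (f (x z) i - z i).natAbs) := by
            refine Finset.sum_le_sum fun i _ => ?_
            omega
          rw [Finset.sum_add_distrib] at h4
          have h5 : ∑ i, (z i - f 1 i).natAbs ≤ ∑ _i : Fin n, T := Finset.sum_le_sum fun i _ => hz i
          have h6 := hx z
          rw [zdN] at h6
          simp at h5
          omega
        have h7 : wl S (x z) ≤ c * (n * T + C + C) := by
          rw [inv_one, one_mul] at h2
          exact h2.trans (by gcongr)
        have h8 : c * (n * T + C + C) ≤ T * w := by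
          have : n * T + C + C ≤ (n + 2 * C) * T := by nlinarith
          calc c * (n * T + C + C) ≤ c * ((n + 2 * C) * T) := by gcongr
            _ ≤ T * w := by rw [hw]; nlinarith
        omega
      · intro g _
        rw [← card_box (f g) C]
        refine Finset.card_le_card ?_
        intro z hz
        rw [Finset.mem_filter] at hz
        rw [mem_box]
        intro i
        have := (zdN_coord (f (x z)) z i).trans (hx z)
        rw [hz.2] at this
        omega
  have h2 : r + 1 ≤ w * (2 * T + 1) := by
    have := Nat.lt_div_mul_add (a := r) hw0
    rw [← hT] at this
    nlinarith
  calc (r + 1) ^ n ≤ (w * (2 * T + 1)) ^ n := by gcongr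
    _ = w ^ n * (2 * T + 1) ^ n := mul_pow _ _ _
    _ ≤ w ^ n * ((2 * C + 1) ^ n * (ball S r).card) := by gcongr
    _ = _ := by ring

theorem doubling (hS : IsGen S) (hf : IsQI S f c C) :
    ∃ K : ℕ, 1 ≤ K ∧ ∀ r, (ball S (2 * r)).card ≤ K * (ball S r).card := by
  obtain ⟨P, hP⟩ := growth_upper hS hf
  obtain ⟨Q, hQ⟩ := growth_lower hS hf
  refine ⟨P * 2 ^ n * Q + 1, by omega, fun r => ?_⟩
  calc (ball S (2 * r)).card ≤ P * (2 * r + 1) ^ n := hP _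
    _ ≤ P * (2 * (r + 1)) ^ n := by gcongr; omega
    _ = P * 2 ^ n * (r + 1) ^ n := by rw [mul_pow]; ring
    _ ≤ P * 2 ^ n * (Q * (ball S r).card) := by gcongr; exact hQ r
    _ ≤ _ := by nlinarith

end
end QIZ

namespace QIZ
open scoped Classical

section kl
variable {G : Type*} [Group G] {S : Finset G}

/-- harmonic functions for right multiplication by elements of `S` -/
def Harm (S : Finset G) (u : G → ℝ) : Prop := ∀ x, ∑ s ∈ S, (u (x * s) - u x) = 0

/-- squared gradient -/
def grad2 (S : Finset G) (u : G → ℝ) (x : G) : ℝ := ∑ s ∈ S, (u (x * s) - u x) ^ 2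

theorem grad2_nonneg (u : G → ℝ) (x : G) : 0 ≤ grad2 S u x :=
  Finset.sum_nonneg fun _ _ => sq_nonneg _

/-- energy on a ball -/
def En (S : Finset G) (u : G → ℝ) (r : ℕ) : ℝ := ∑ x ∈ ball S r, grad2 S u x

/-- L2 norm squared on a ball -/
def Qn (S : Finset G) (u : G → ℝ) (r : ℕ) : ℝ := ∑ x ∈ ball S r, u x ^ 2

theorem En_mono (hS : IsGen S) (u : G → ℝ) {r t : ℕ} (h : r ≤ t) : En S u r ≤ En S u t :=
  Finset.sum_le_sum_of_subset_of_nonneg (ball_mono hS h) fun _ _ _ => grad2_nonneg _ _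

theorem Qn_mono (hS : IsGen S) (u : G → ℝ) {r t : ℕ} (h : r ≤ t) : Qn S u r ≤ Qn S u t :=
  Finset.sum_le_sum_of_subset_of_nonneg (ball_mono hS h) fun _ _ _ => sq_nonneg _

theorem Qn_nonneg (u : G → ℝ) (r : ℕ) : 0 ≤ Qn S u r := Finset.sum_nonneg fun _ _ => sq_nonneg _

theorem En_nonneg (u : G → ℝ) (r : ℕ) : 0 ≤ En S u r :=
  Finset.sum_nonneg fun _ _ => grad2_nonneg _ _

theorem diff_le (hS : IsGen S) (u : G → ℝ) (r k : ℕ) (g : G) (hg : wl S g ≤ k) :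
    ∑ x ∈ ball S r, (u (x * g) - u x) ^ 2 ≤ (k : ℝ) ^ 2 * En S u (r + k) := by
  induction k generalizing g with
  | zero =>
    rw [eq_one_of_wl hS (Nat.le_zero.1 hg)]
    simp
  | succ k ih =>
    rcases Nat.lt_or_ge k (wl S g) with hlt | hle
    · obtain ⟨g', s, hs, rfl, hg'⟩ := wl_succ hS (le_antisymm hg hlt)
      have ha := ih g' hg'
      have hb : ∑ x ∈ ball S r, (u (x * g' * s) - u (x * g')) ^ 2 ≤ En S u (r + (k + 1)) := by
        calc ∑ x ∈ ball S r, (u (x * g' * s) - u (x * g')) ^ 2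
            ≤ ∑ x ∈ ball S r, grad2 S u (x * g') := Finset.sum_le_sum fun x _ =>
              Finset.single_le_sum (f := fun s => (u (x * g' * s) - u (x * g')) ^ 2)
                (fun _ _ => sq_nonneg _) hs
          _ = ∑ y ∈ (ball S r).image (fun x => x * g'), grad2 S u y := by
              rw [Finset.sum_image]
              intro x _ y _ h
              exact mul_right_cancel h
          _ ≤ En S u (r + (k + 1)) := by
              refine Finset.sum_le_sum_of_subset_of_nonneg ?_ fun _ _ _ => grad2_nonneg _ _
              intro y hy
              obtain ⟨x, hx, rfl⟩ := Finset.mem_image.1 hy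
              rw [mem_ball hS] at hx ⊢
              have := wl_mul hS x g'
              omega
      have hmono : En S u (r + k) ≤ En S u (r + (k + 1)) := En_mono hS u (by omega)
      have hE := En_nonneg (S := S) u (r + (k + 1))
      simp only [← mul_assoc]
      rcases Nat.eq_zero_or_pos k with hk | hk
      · subst hk
        have := eq_one_of_wl hS (Nat.le_zero.1 hg')
        subst this
        simpa using hb
      · have hk' : (0:ℝ) < k := by exact_mod_cast hk
        have key : (k:ℝ) * ∑ x ∈ ball S r, (u (x * g' * s) - u x) ^ 2
            ≤ (k + 1) * ∑ x ∈ ball S r, (u (x * g') - u x) ^ 2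
              + k * (k + 1) * ∑ x ∈ ball S r, (u (x * g' * s) - u (x * g')) ^ 2 := by
          rw [Finset.mul_sum, Finset.mul_sum, Finset.mul_sum, ← Finset.sum_add_distrib]
          refine Finset.sum_le_sum fun x _ => ?_
          nlinarith [sq_nonneg ((u (x * g') - u x) - k * (u (x * g' * s) - u (x * g')))]
        have h1 : (k:ℝ) * ∑ x ∈ ball S r, (u (x * g' * s) - u x) ^ 2
            ≤ k * ((k + 1) ^ 2 * En S u (r + (k + 1))) := by
          refine key.trans ?_
          have h2 : ((k:ℝ) + 1) * ∑ x ∈ ball S r, (u (x * g') - u x) ^ 2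
              ≤ (k + 1) * (k ^ 2 * En S u (r + (k + 1))) := by
            gcongr
            exact ha.trans (by gcongr)
          have h3 : (k:ℝ) * (k + 1) * ∑ x ∈ ball S r, (u (x * g' * s) - u (x * g')) ^ 2
              ≤ k * (k + 1) * En S u (r + (k + 1)) := by gcongr
          refine (add_le_add h2 h3).trans (le_of_eq ?_)
          ring
        push_cast
        exact le_of_mul_le_mul_left h1 hk'
    · refine (ih g hle).trans ?_
      have := En_mono hS u (show r + k ≤ r + (k + 1) by omega)
      have hE := En_nonneg (S := S) u (r + k)
      push_cast
      gcongr
      linarith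

theorem poincare (hS : IsGen S) {K : ℕ} (hK : ∀ r, (ball S (2 * r)).card ≤ K * (ball S r).card)
    (u : G → ℝ) (r : ℕ) (h0 : ∑ x ∈ ball S r, u x = 0) :
    Qn S u r ≤ 2 * K * r ^ 2 * En S u (3 * r) := by
  have h1 : ∑ x ∈ ball S r, ∑ y ∈ ball S r, (u y - u x) ^ 2 = 2 * (ball S r).card * Qn S u r := by
    have : ∀ x ∈ ball S r, ∑ y ∈ ball S r, (u y - u x) ^ 2
        = Qn S u r + (ball S r).card * u x ^ 2 - 2 * u x * ∑ y ∈ ball S r, u y := by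
      intro x _
      rw [Qn, Finset.mul_sum, ← nsmul_eq_mul, ← Finset.sum_const, ← Finset.sum_add_distrib,
        ← Finset.sum_sub_distrib]
      exact Finset.sum_congr rfl fun y _ => by ring
    rw [Finset.sum_congr rfl this, h0]
    simp only [mul_zero, sub_zero, Finset.sum_add_distrib, Finset.sum_const, nsmul_eq_mul,
      ← Finset.mul_sum]
    rw [← Qn]; ring
  have h2 : ∑ x ∈ ball S r, ∑ y ∈ ball S r, (u y - u x) ^ 2
      ≤ ∑ x ∈ ball S r, ∑ g ∈ ball S (2 * r), (u (x * g) - u x) ^ 2 := by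
    refine Finset.sum_le_sum fun x hx => ?_
    calc ∑ y ∈ ball S r, (u y - u x) ^ 2
        = ∑ g ∈ (ball S r).image (fun y => x⁻¹ * y), (u (x * g) - u x) ^ 2 := by
          rw [Finset.sum_image]
          · simp
          · intro a _ b _ h
            exact mul_left_cancel h
      _ ≤ _ := by
          refine Finset.sum_le_sum_of_subset_of_nonneg ?_ fun _ _ _ => sq_nonneg _
          intro g hg
          obtain ⟨y, hy, rfl⟩ := Finset.mem_image.1 hg
          rw [mem_ball hS] at hx hy ⊢
          have := wl_mul hS x⁻¹ y
          rw [wl_inv hS] at this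
          omega
  have h3 : ∑ x ∈ ball S r, ∑ g ∈ ball S (2 * r), (u (x * g) - u x) ^ 2
      ≤ (ball S (2 * r)).card * (((2 * r : ℕ) : ℝ) ^ 2 * En S u (r + 2 * r)) := by
    rw [Finset.sum_comm, ← nsmul_eq_mul, ← Finset.sum_const]
    exact Finset.sum_le_sum fun g hg => diff_le hS u r (2 * r) g ((mem_ball hS).1 hg)
  have h4 : ((ball S (2 * r)).card : ℝ) ≤ K * (ball S r).card := by exact_mod_cast hK r
  have hpos : (0:ℝ) < (ball S r).card := by exact_mod_cast ball_card_pos hS r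
  have hE := En_nonneg (S := S) u (r + 2 * r)
  have h5 : 2 * (ball S r).card * Qn S u r
      ≤ K * (ball S r).card * (((2 * r : ℕ) : ℝ) ^ 2 * En S u (r + 2 * r)) := by
    rw [← h1]
    exact (h2.trans h3).trans (by gcongr)
  have h6 : r + 2 * r = 3 * r := by ring
  rw [h6] at h5
  push_cast at h5
  have h7 : (2 * (ball S r).card : ℝ) * Qn S u r
      ≤ (2 * (ball S r).card) * (2 * K * r ^ 2 * En S u (3 * r)) := by
    refine h5.trans (le_of_eq (by ring))
  exact le_of_mul_le_mul_left h7 (by positivity)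

theorem cacc_pt (a b u v : ℝ) : (a ^ 2 + b ^ 2) * (u - v) ^ 2 / 4 - (a - b) ^ 2 * (u + v) ^ 2 / 2
    ≤ (a ^ 2 * u - b ^ 2 * v) * (u - v) := by
  nlinarith [sq_nonneg ((a + b) * (u - v) / 2 + (a - b) * (u + v)), 
    mul_nonneg (sq_nonneg (a - b)) (sq_nonneg (u - v))]

/-- cutoff function -/
def cut (S : Finset G) (r : ℕ) (x : G) : ℝ := ((min r (2 * r - wl S x) : ℕ) : ℝ)

theorem cut_diff (hS : IsGen S) (r : ℕ) (x s : G) (hs : s ∈ S) :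
    (cut S r x - cut S r (x * s)) ^ 2 ≤ 1 := by
  have h1 := wl_mul hS x s
  have h2 := wl_mul hS (x * s) s⁻¹
  rw [mul_inv_cancel_right] at h2
  have h3 := wl_mem hs
  have h4 := wl_mem (hS.inv_mem s hs)
  unfold cut
  rw [sq_le_one_iff_abs_le_one, abs_le]
  constructor
  · have : min r (2 * r - wl S (x * s)) ≤ min r (2 * r - wl S x) + 1 := by omega
    have : ((min r (2 * r - wl S (x * s)) : ℕ) : ℝ) ≤ (min r (2 * r - wl S x) : ℕ) + 1 := by
      exact_mod_cast this
    linarith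
  · have : min r (2 * r - wl S x) ≤ min r (2 * r - wl S (x * s)) + 1 := by omega
    have : ((min r (2 * r - wl S x) : ℕ) : ℝ) ≤ (min r (2 * r - wl S (x * s)) : ℕ) + 1 := by
      exact_mod_cast this
    linarith

theorem caccioppoli (hS : IsGen S) (u : G → ℝ) (hu : Harm S u) (r : ℕ) :
    r ^ 2 * En S u r ≤ 8 * S.card * Qn S u (2 * r + 1) := by
  set B := ball S (2 * r + 1) with hB
  set A := (B ×ˢ S).filter (fun p => p.1 * p.2 ∈ B) with hA
  have memA : ∀ p, p ∈ A ↔ (p.1 ∈ B ∧ p.2 ∈ S) ∧ p.1 * p.2 ∈ B := by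
    intro p; simp [hA, Finset.mem_filter, Finset.mem_product]
  -- the involution
  have inv : ∀ F : G → G → ℝ, ∑ p ∈ A, F p.1 (p.1 * p.2) = ∑ p ∈ A, F (p.1 * p.2) p.1 := by
    intro F
    refine Finset.sum_nbij' (fun p => (p.1 * p.2, p.2⁻¹)) (fun p => (p.1 * p.2, p.2⁻¹)) ?_ ?_ ?_ ?_ ?_
    · intro p hp
      rw [memA] at hp ⊢
      exact ⟨⟨hp.2, hS.inv_mem _ hp.1.2⟩, by simpa using hp.1.1⟩
    · intro p hp
      rw [memA] at hp ⊢
      exact ⟨⟨hp.2, hS.inv_mem _ hp.1.2⟩, by simpa using hp.1.1⟩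
    · intro p _; simp
    · intro p _; simp
    · intro p _; simp
  set η := cut S r with hη
  have hz : ∑ p ∈ A, η p.1 ^ 2 * u p.1 * (u p.1 - u (p.1 * p.2)) = 0 := by
    have h1 : ∑ p ∈ B ×ˢ S, η p.1 ^ 2 * u p.1 * (u p.1 - u (p.1 * p.2)) = 0 := by
      rw [Finset.sum_product]
      refine Finset.sum_eq_zero fun x _ => ?_
      dsimp only
      rw [← Finset.mul_sum]
      have := hu x
      have h2 : ∑ s ∈ S, (u x - u (x * s)) = 0 := by
        rw [← neg_eq_zero, ← Finset.sum_neg_distrib, ← this]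
        exact Finset.sum_congr rfl fun _ _ => by ring
      simp only [h2, mul_zero]
    rw [← h1]
    refine Finset.sum_subset (Finset.filter_subset _ _) ?_
    intro p hp hp'
    have h3 : ¬ (p.1 * p.2 ∈ B) := fun h => hp' ((memA p).2 ⟨Finset.mem_product.1 hp, h⟩)
    rw [hB, mem_ball hS] at h3
    have h4 := wl_mul hS p.1 p.2
    have h5 := wl_mem (Finset.mem_product.1 hp).2
    have : η p.1 = 0 := by
      rw [hη, cut]
      have : min r (2 * r - wl S p.1) = 0 := by omega
      rw [this]; simp
    rw [this]; ring
  have hsym : ∑ p ∈ A, (η p.1 ^ 2 * u p.1 - η (p.1 * p.2) ^ 2 * u (p.1 * p.2))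
      * (u p.1 - u (p.1 * p.2)) = 0 := by
    have h1 := inv fun x y => η x ^ 2 * u x * (u x - u y)
    rw [hz] at h1
    have : ∀ p ∈ A, (η p.1 ^ 2 * u p.1 - η (p.1 * p.2) ^ 2 * u (p.1 * p.2))
      * (u p.1 - u (p.1 * p.2)) = η p.1 ^ 2 * u p.1 * (u p.1 - u (p.1 * p.2))
        + η (p.1 * p.2) ^ 2 * u (p.1 * p.2) * (u (p.1 * p.2) - u p.1) := fun p _ => by ring
    rw [Finset.sum_congr rfl this, Finset.sum_add_distrib, hz, ← h1]; simp
  have h1 : ∑ p ∈ A, (η p.1 ^ 2 + η (p.1 * p.2) ^ 2) * (u p.1 - u (p.1 * p.2)) ^ 2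
      ≤ 4 * ∑ p ∈ A, (u p.1 ^ 2 + u (p.1 * p.2) ^ 2) := by
    have h2 : ∑ p ∈ A, ((η p.1 ^ 2 + η (p.1 * p.2) ^ 2) * (u p.1 - u (p.1 * p.2)) ^ 2 / 4
        - (u p.1 ^ 2 + u (p.1 * p.2) ^ 2)) ≤ 0 := by
      rw [← hsym]
      refine Finset.sum_le_sum fun p hp => ?_
      refine le_trans ?_ (cacc_pt _ _ _ _)
      have h3 := cut_diff hS r p.1 p.2 ((memA p).1 hp).1.2
      rw [← hη] at h3
      nlinarith [sq_nonneg (u p.1 - u (p.1 * p.2)), sq_nonneg (u p.1 + u (p.1 * p.2))]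
    rw [Finset.sum_sub_distrib, ← Finset.sum_div] at h2
    linarith
  have h2 : ∑ p ∈ A, (u p.1 ^ 2 + u (p.1 * p.2) ^ 2) ≤ 2 * (S.card * Qn S u (2 * r + 1)) := by
    rw [Finset.sum_add_distrib, ← inv fun x _ => u x ^ 2, ← two_mul]
    gcongr
    calc ∑ p ∈ A, u p.1 ^ 2 ≤ ∑ p ∈ B ×ˢ S, u p.1 ^ 2 :=
          Finset.sum_le_sum_of_subset_of_nonneg (Finset.filter_subset _ _) fun _ _ _ => sq_nonneg _
      _ = _ := by
          rw [Finset.sum_product]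
          simp only [Finset.sum_const, nsmul_eq_mul]
          rw [← Finset.mul_sum, Qn]
  have h3 : r ^ 2 * En S u r
      ≤ ∑ p ∈ A, (η p.1 ^ 2 + η (p.1 * p.2) ^ 2) * (u p.1 - u (p.1 * p.2)) ^ 2 := by
    calc r ^ 2 * En S u r = ∑ p ∈ ball S r ×ˢ S, r ^ 2 * (u p.1 - u (p.1 * p.2)) ^ 2 := by
          rw [En, Finset.mul_sum, Finset.sum_product]
          refine Finset.sum_congr rfl fun x _ => ?_
          rw [grad2, Finset.mul_sum]
          exact Finset.sum_congr rfl fun s _ => by ring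
      _ ≤ ∑ p ∈ ball S r ×ˢ S, (η p.1 ^ 2 + η (p.1 * p.2) ^ 2) * (u p.1 - u (p.1 * p.2)) ^ 2 := by
          refine Finset.sum_le_sum fun p hp => ?_
          have h5 := (mem_ball hS).1 (Finset.mem_product.1 hp).1
          have : η p.1 = r := by
            rw [hη, cut]
            have : min r (2 * r - wl S p.1) = r := by omega
            rw [this]
          rw [this]
          gcongr
          nlinarith [sq_nonneg (η (p.1 * p.2))]
      _ ≤ _ := by
          refine Finset.sum_le_sum_of_subset_of_nonneg ?_ fun _ _ _ => by positivity
          intro p hp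
          have h5 := (mem_ball hS).1 (Finset.mem_product.1 hp).1
          have h6 := (Finset.mem_product.1 hp).2
          have h7 := wl_mul hS p.1 p.2
          have h8 := wl_mem h6
          rw [memA]
          refine ⟨⟨(mem_ball hS).2 (by omega), h6⟩, (mem_ball hS).2 (by omega)⟩
  linarith

end kl
end QIZ

namespace QIZ
open scoped Classical Matrix

theorem det_le_one {D N : ℕ} (A : Matrix (Fin D) (Fin D) ℝ) (hA : A.PosSemidef) (δ : ℝ)
    (hδ : 0 ≤ δ) (hδ1 : δ ≤ 1) (h1 : ∀ x : Fin D → ℝ, x ⬝ᵥ A *ᵥ x ≤ x ⬝ᵥ x)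
    (l : (Fin D → ℝ) →ₗ[ℝ] (Fin N → ℝ))
    (h2 : ∀ x : Fin D → ℝ, l x = 0 → x ⬝ᵥ A *ᵥ x ≤ δ * (x ⬝ᵥ x)) : A.det ≤ δ ^ (D - N) := by
  set lam := hA.1.eigenvalues with hlam
  set v : Fin D → Fin D → ℝ := fun i => ⇑(hA.1.eigenvectorBasis i) with hv
  have hAv : ∀ i, A *ᵥ v i = lam i • v i := fun i => hA.1.mulVec_eigenvectorBasis i
  have hort : ∀ i j, v i ⬝ᵥ v j = if i = j then 1 else 0 := by
    intro i j
    have := orthonormal_iff_ite.1 hA.1.eigenvectorBasis.orthonormal j i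
    rw [EuclideanSpace.inner_eq_star_dotProduct] at this
    simpa [eq_comm] using this
  have hlam1 : ∀ i, lam i ≤ 1 := by
    intro i
    have := h1 (v i)
    rw [hAv, dotProduct_smul, hort] at this
    simpa using this
  have hlam0 : ∀ i, 0 ≤ lam i := fun i => hA.eigenvalues_nonneg i
  set I := Finset.univ.filter (fun i => δ < lam i) with hI
  have hcard : I.card ≤ N := by
    by_contra hcon
    push Not at hcon
    let L : (I → ℝ) →ₗ[ℝ] (Fin D → ℝ) := Fintype.linearCombination ℝ (fun i : I => v i)
    have hker : LinearMap.ker (l ∘ₗ L) ≠ ⊥ := by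
      apply LinearMap.ker_ne_bot_of_finrank_lt
      simpa using hcon
    obtain ⟨c, hc, hc0⟩ := (Submodule.ne_bot_iff _).1 hker
    have hLc : L c = ∑ i : I, c i • v i := by simp [L, Fintype.linearCombination_apply]
    have e1 : L c ⬝ᵥ L c = ∑ i : I, c i ^ 2 := by
      rw [hLc]
      simp only [sum_dotProduct, dotProduct_sum, smul_dotProduct, dotProduct_smul, hort, smul_eq_mul]
      refine Finset.sum_congr rfl fun i _ => ?_
      rw [Finset.sum_eq_single i]
      · simp; ring
      · intro j _ hj
        simp [hj]
      · simp
    have e2 : L c ⬝ᵥ A *ᵥ L c = ∑ i : I, lam i * c i ^ 2 := by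
      rw [hLc]
      simp only [Matrix.mulVec_sum, Matrix.mulVec_smul, hAv, sum_dotProduct, dotProduct_sum,
        smul_dotProduct, dotProduct_smul, hort, smul_eq_mul]
      refine Finset.sum_congr rfl fun i _ => ?_
      rw [Finset.sum_eq_single i]
      · simp; ring
      · intro j _ hj
        simp [hj]
      · simp
    have h3 := h2 (L c) hc
    rw [e1, e2, Finset.mul_sum] at h3
    obtain ⟨i0, hi0⟩ := Function.ne_iff.1 hc0
    have : ∑ i : I, δ * c i ^ 2 < ∑ i : I, lam i * c i ^ 2 := by
      refine Finset.sum_lt_sum (fun i _ => ?_) ⟨i0, Finset.mem_univ _, ?_⟩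
      · have := (Finset.mem_filter.1 i.2).2
        gcongr
      · have := (Finset.mem_filter.1 i0.2).2
        have h4 : c i0 ≠ 0 := hi0
        gcongr
    linarith
  have hdet : A.det = ∏ i, lam i := by
    rw [hA.1.det_eq_prod_eigenvalues]; simp [hlam]
  rw [hdet]
  calc ∏ i, lam i ≤ ∏ i, (if i ∈ I then 1 else δ) := by
        refine Finset.prod_le_prod (fun i _ => hlam0 i) fun i _ => ?_
        split_ifs with h
        · exact hlam1 i
        · by_contra hcon
          exact h (Finset.mem_filter.2 ⟨Finset.mem_univ _, not_le.1 hcon⟩)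
    _ = δ ^ (D - I.card) := by
        rw [Finset.prod_ite]
        simp only [Finset.prod_const_one, one_mul, Finset.prod_const]
        congr 1
        rw [Finset.filter_not, Finset.card_sdiff_of_subset (Finset.filter_subset _ _)]
        simp
    _ ≤ δ ^ (D - N) := pow_le_pow_of_le_one hδ hδ1 (by omega)

theorem det_le_two {D N : ℕ} (A A' : Matrix (Fin D) (Fin D) ℝ) (hA : A.PosSemidef)
    (hA' : A'.PosDef) (δ : ℝ)
    (hδ : 0 ≤ δ) (hδ1 : δ ≤ 1) (h1 : ∀ x : Fin D → ℝ, x ⬝ᵥ A *ᵥ x ≤ x ⬝ᵥ A' *ᵥ x)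
    (l : (Fin D → ℝ) →ₗ[ℝ] (Fin N → ℝ))
    (h2 : ∀ x : Fin D → ℝ, l x = 0 → x ⬝ᵥ A *ᵥ x ≤ δ * (x ⬝ᵥ A' *ᵥ x)) :
    A.det ≤ δ ^ (D - N) * A'.det := by
  obtain ⟨B, hB⟩ : ∃ B : Matrix (Fin D) (Fin D) ℝ, A' = Bᴴ * B := by
    open scoped MatrixOrder in
    exact CStarAlgebra.nonneg_iff_eq_star_mul_self.mp hA'.posSemidef.nonneg
  rw [Matrix.conjTranspose_eq_transpose_of_trivial] at hB
  have hdet : A'.det = B.det ^ 2 := by rw [hB, Matrix.det_mul, Matrix.det_transpose]; ring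
  have hpos : 0 < A'.det := hA'.det_pos
  have hB0 : B.det ≠ 0 := by
    intro h; rw [hdet, h] at hpos; simp at hpos
  have hu : IsUnit B.det := isUnit_iff_ne_zero.2 hB0
  set T := B⁻¹ with hT
  have hBT : B * T = 1 := Matrix.mul_nonsing_inv B hu
  have q : ∀ (M : Matrix (Fin D) (Fin D) ℝ) (x : Fin D → ℝ),
      x ⬝ᵥ (Tᵀ * M * T) *ᵥ x = (T *ᵥ x) ⬝ᵥ M *ᵥ (T *ᵥ x) := by
    intro M x
    rw [← Matrix.mulVec_mulVec, ← Matrix.mulVec_mulVec, Matrix.dotProduct_mulVec,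
      Matrix.vecMul_transpose]
  have hone : Tᵀ * A' * T = 1 := by
    rw [hB]
    calc Tᵀ * (Bᵀ * B) * T = (B * T)ᵀ * (B * T) := by
          rw [Matrix.transpose_mul]; simp only [Matrix.mul_assoc]
      _ = 1 := by rw [hBT]; simp
  have hx : ∀ x, x ⬝ᵥ x = (T *ᵥ x) ⬝ᵥ A' *ᵥ (T *ᵥ x) := by
    intro x; rw [← q, hone, Matrix.one_mulVec]
  have hps : (Tᵀ * A * T).PosSemidef := by
    have := hA.conjTranspose_mul_mul_same T
    rwa [Matrix.conjTranspose_eq_transpose_of_trivial] at this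
  have key := det_le_one (Tᵀ * A * T) hps δ hδ hδ1 (fun x => by rw [q, hx]; exact h1 _)
    (l ∘ₗ T.mulVecLin) (fun x hlx => by
      rw [q, hx]; exact h2 _ hlx)
  have hd : (Tᵀ * A * T).det * A'.det = A.det := by
    rw [hdet, Matrix.det_mul, Matrix.det_mul, Matrix.det_transpose]
    have : B.det * T.det = 1 := by rw [← Matrix.det_mul, hBT, Matrix.det_one]
    calc T.det * A.det * T.det * B.det ^ 2 = (B.det * T.det) ^ 2 * A.det := by ring
      _ = A.det := by rw [this]; ring
  rw [← hd]
  gcongr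

section kl
variable {G : Type*} [Group G] {S : Finset G}

theorem doubling_pow {K : ℕ} (hK : ∀ r, (ball S (2 * r)).card ≤ K * (ball S r).card) (k r : ℕ) :
    (ball S (2 ^ k * r)).card ≤ K ^ k * (ball S r).card := by
  induction k with
  | zero => simp
  | succ k ih =>
    rw [pow_succ, mul_comm (2 ^ k) 2, mul_assoc]
    refine (hK _).trans ?_
    rw [pow_succ, mul_comm (K ^ k) K, mul_assoc]
    gcongr

theorem sep_count (hS : IsGen S) (σ T : ℕ) (z : G) (Y : Finset G)
    (hsep : ∀ x ∈ Y, ∀ y ∈ Y, wl S (x⁻¹ * y) ≤ 2 * σ → x = y)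
    (hY : ∀ x ∈ Y, wl S (z⁻¹ * x) ≤ T) : Y.card * (ball S σ).card ≤ (ball S (T + σ)).card := by
  rw [← Finset.card_product]
  refine Finset.card_le_card_of_injOn (fun p => z⁻¹ * p.1 * p.2) ?_ ?_
  · intro p hp
    have hp := Finset.mem_product.1 (Finset.mem_coe.1 hp)
    refine Finset.mem_coe.2 ((mem_ball hS).2 ?_)
    have h1 := wl_mul hS (z⁻¹ * p.1) p.2
    have h2 := hY _ hp.1
    have h3 := (mem_ball hS).1 hp.2
    show wl S (z⁻¹ * p.1 * p.2) ≤ _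
    omega
  · intro p hp q hq h
    have hp := Finset.mem_product.1 (Finset.mem_coe.1 hp)
    have hq := Finset.mem_product.1 (Finset.mem_coe.1 hq)
    simp only [mul_assoc] at h
    have h := mul_left_cancel h
    have h1 : p.1 = q.1 := by
      apply hsep _ hp.1 _ hq.1
      have : p.1⁻¹ * q.1 = p.2 * q.2⁻¹ := by
        rw [inv_mul_eq_iff_eq_mul, ← mul_assoc, h]; simp
      rw [this]
      have h2 := wl_mul hS p.2 q.2⁻¹
      rw [wl_inv hS] at h2
      have h3 := (mem_ball hS).1 hp.2
      have h4 := (mem_ball hS).1 hq.2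
      omega
    rw [h1] at h
    exact Prod.ext h1 (mul_left_cancel h)

theorem exists_net (hS : IsGen S) (σ R : ℕ) : ∃ X : Finset G, X ⊆ ball S R ∧
    (∀ x ∈ X, ∀ y ∈ X, wl S (x⁻¹ * y) ≤ 2 * σ → x = y) ∧
    ∀ x ∈ ball S R, ∃ y ∈ X, wl S (y⁻¹ * x) ≤ 2 * σ := by
  let p : Finset G → Prop := fun X => ∀ x ∈ X, ∀ y ∈ X, wl S (x⁻¹ * y) ≤ 2 * σ → x = y
  set F := (ball S R).powerset.filter p with hF
  have hne : F.Nonempty := ⟨∅, by simp [hF, p]⟩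
  obtain ⟨X, hX, hmax⟩ := F.exists_max_image Finset.card hne
  rw [hF, Finset.mem_filter, Finset.mem_powerset] at hX
  refine ⟨X, hX.1, hX.2, fun x hx => ?_⟩
  by_contra hcon
  push Not at hcon
  have hxX : x ∉ X := by
    intro h
    have := hcon x h
    rw [inv_mul_cancel, wl_one] at this
    omega
  have := hmax (insert x X) (by
    rw [hF, Finset.mem_filter, Finset.mem_powerset]
    refine ⟨Finset.insert_subset hx hX.1, ?_⟩
    intro a ha b hb hab
    rcases Finset.mem_insert.1 ha with rfl | ha1
    · rcases Finset.mem_insert.1 hb with rfl | hb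
      · rfl
      · have h1 := hcon b hb
        have : (a⁻¹ * b)⁻¹ = b⁻¹ * a := by simp
        rw [← this, wl_inv hS] at h1
        omega
    · rcases Finset.mem_insert.1 hb with rfl | hb
      · have h1 := hcon a ha1
        omega
      · exact hX.2 a ha1 b hb hab)
  rw [Finset.card_insert_of_notMem hxX] at this
  omega

theorem sum_biUnion_le' {α β : Type*} (X : Finset α) (t : α → Finset β) (w : β → ℝ)
    (hw : ∀ z, 0 ≤ w z) : ∑ z ∈ X.biUnion t, w z ≤ ∑ x ∈ X, ∑ z ∈ t x, w z := by
  induction X using Finset.induction_on with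
  | empty => simp
  | insert a X ha ih =>
    rw [Finset.biUnion_insert, Finset.sum_insert ha]
    have h1 := Finset.sum_union_inter (s₁ := t a) (s₂ := X.biUnion t) (f := w)
    have h2 : 0 ≤ ∑ z ∈ t a ∩ X.biUnion t, w z := Finset.sum_nonneg fun z _ => hw z
    linarith

theorem harm_translate {u : G → ℝ} (hu : Harm S u) (x : G) : Harm S (fun y => u (x * y)) := by
  intro y
  have := hu (x * y)
  simpa only [mul_assoc] using this

theorem key_step (hS : IsGen S) {K : ℕ} (hK : ∀ r, (ball S (2 * r)).card ≤ K * (ball S r).card)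
    (a σ : ℕ) (hσ : 1 ≤ σ) : ∃ X : Finset G, X.card ≤ K ^ (a + 2) ∧ ∀ u, Harm S u →
      (∀ x ∈ X, ∑ y ∈ ball S (2 * σ), u (x * y) = 0) →
      (4:ℝ) ^ a * Qn S u (2 ^ a * (2 * σ)) ≤ K ^ 4 * S.card * Qn S u (16 * (2 ^ a * (2 * σ))) := by
  set R := 2 ^ a * (2 * σ) with hR
  have h2a : 1 ≤ 2 ^ a := Nat.one_le_two_pow
  have hRσ : 2 * σ ≤ R := by rw [hR]; nlinarith
  obtain ⟨X, hXR, hsep, hcov⟩ := exists_net hS σ R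
  have hσpos := ball_card_pos hS σ
  refine ⟨X, ?_, ?_⟩
  · have h1 := sep_count hS σ R 1 X hsep (fun x hx => by
      simpa using (mem_ball hS).1 (hXR hx))
    have h2 : (ball S (R + σ)).card ≤ K ^ (a + 2) * (ball S σ).card := by
      refine le_trans (Finset.card_le_card (ball_mono hS ?_)) (doubling_pow hK (a + 2) σ)
      rw [hR, pow_add]
      nlinarith
    exact Nat.le_of_mul_le_mul_right (h1.trans h2) hσpos
  · intro u hu h0
    have hmult : ∀ z : G, ((X.filter fun x => x⁻¹ * z ∈ ball S (3 * (2 * σ))).card : ℝ) ≤ K ^ 3 := by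
      intro z
      have h1 := sep_count hS σ (3 * (2 * σ)) z (X.filter fun x => x⁻¹ * z ∈ ball S (3 * (2 * σ)))
        (fun x hx y hy => hsep x (Finset.mem_filter.1 hx).1 y (Finset.mem_filter.1 hy).1)
        (fun x hx => by
          have h2 := (mem_ball hS).1 (Finset.mem_filter.1 hx).2
          have : (x⁻¹ * z)⁻¹ = z⁻¹ * x := by simp
          rwa [← this, wl_inv hS])
      have h2 : (ball S (3 * (2 * σ) + σ)).card ≤ K ^ 3 * (ball S σ).card :=
        le_trans (Finset.card_le_card (ball_mono hS (by omega))) (doubling_pow hK 3 σ)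
      exact_mod_cast Nat.le_of_mul_le_mul_right (h1.trans h2) hσpos
    have s1 : Qn S u R ≤ ∑ x ∈ X, Qn S (fun y => u (x * y)) (2 * σ) := by
      have : ∀ x ∈ X, Qn S (fun y => u (x * y)) (2 * σ)
          = ∑ z ∈ (ball S (2 * σ)).image (fun y => x * y), u z ^ 2 := by
        intro x _
        rw [Finset.sum_image]
        · rfl
        · intro p _ q _ h
          exact mul_left_cancel h
      rw [Finset.sum_congr rfl this]
      calc Qn S u R ≤ ∑ z ∈ X.biUnion fun x => (ball S (2 * σ)).image (fun y => x * y), u z ^ 2 := by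
            refine Finset.sum_le_sum_of_subset_of_nonneg ?_ fun _ _ _ => sq_nonneg _
            intro z hz
            obtain ⟨y, hy, hyz⟩ := hcov z hz
            exact Finset.mem_biUnion.2 ⟨y, hy, Finset.mem_image.2 ⟨y⁻¹ * z, (mem_ball hS).2 hyz, by simp⟩⟩
        _ ≤ _ := by
            exact sum_biUnion_le' _ _ _ fun z => sq_nonneg _
    have s2 : ∑ x ∈ X, Qn S (fun y => u (x * y)) (2 * σ)
        ≤ ∑ x ∈ X, 2 * K * ((2 * σ : ℕ) : ℝ) ^ 2 * En S (fun y => u (x * y)) (3 * (2 * σ)) :=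
      Finset.sum_le_sum fun x hx => poincare hS hK _ _ (h0 x hx)
    have s3 : ∑ x ∈ X, En S (fun y => u (x * y)) (3 * (2 * σ)) ≤ K ^ 3 * En S u (4 * R) := by
      have : ∀ x ∈ X, En S (fun y => u (x * y)) (3 * (2 * σ))
          = ∑ z ∈ ball S (4 * R), if x⁻¹ * z ∈ ball S (3 * (2 * σ)) then grad2 S u z else 0 := by
        intro x hx
        have h1 : En S (fun y => u (x * y)) (3 * (2 * σ))
            = ∑ z ∈ (ball S (3 * (2 * σ))).image (fun y => x * y), grad2 S u z := by
          rw [Finset.sum_image]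
          · simp only [En, grad2, mul_assoc]
          · intro p _ q _ h
            exact mul_left_cancel h
        rw [h1, ← Finset.sum_filter]
        refine Finset.sum_congr ?_ fun _ _ => rfl
        ext z
        simp only [Finset.mem_image, Finset.mem_filter]
        constructor
        · rintro ⟨y, hy, rfl⟩
          refine ⟨?_, by simpa using hy⟩
          rw [mem_ball hS] at hy ⊢
          have h2 := wl_mul hS x y
          have h3 := (mem_ball hS).1 (hXR hx)
          omega
        · rintro ⟨_, h⟩
          exact ⟨x⁻¹ * z, h, by simp⟩
      rw [Finset.sum_congr rfl this, Finset.sum_comm, En, Finset.mul_sum]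
      refine Finset.sum_le_sum fun z _ => ?_
      rw [← Finset.sum_filter, Finset.sum_const, nsmul_eq_mul]
      have := grad2_nonneg (S := S) u z
      have := hmult z
      gcongr
    have s4 := caccioppoli hS u hu (4 * R)
    have s5 : Qn S u (2 * (4 * R) + 1) ≤ Qn S u (16 * R) := Qn_mono hS u (by omega)
    have hRr : (R : ℝ) = 2 ^ a * (2 * σ) := by rw [hR]; push_cast; ring
    have h4a : (4:ℝ) ^ a = 2 ^ a * 2 ^ a := by rw [← mul_pow]; norm_num
    rw [← Finset.mul_sum] at s2
    have s6 : Qn S u R ≤ 2 * K * ((2 * σ : ℕ) : ℝ) ^ 2 * (K ^ 3 * En S u (4 * R)) :=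
      (s1.trans s2).trans (by gcongr)
    have s7 : (4:ℝ) ^ a * Qn S u R ≤ 2 * K ^ 4 * (R ^ 2 * En S u (4 * R)) := by
      calc (4:ℝ) ^ a * Qn S u R
          ≤ (4:ℝ) ^ a * (2 * K * ((2 * σ : ℕ) : ℝ) ^ 2 * (K ^ 3 * En S u (4 * R))) := by gcongr
        _ = _ := by rw [h4a, hRr]; push_cast; ring
    have s8 : (R:ℝ) ^ 2 * En S u (4 * R) ≤ S.card / 2 * Qn S u (16 * R) := by
      push_cast at s4
      have : (8:ℝ) * S.card * Qn S u (2 * (4 * R) + 1) ≤ 8 * S.card * Qn S u (16 * R) := by gcongr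
      nlinarith
    calc (4:ℝ) ^ a * Qn S u R ≤ 2 * K ^ 4 * (R ^ 2 * En S u (4 * R)) := s7
      _ ≤ 2 * K ^ 4 * (S.card / 2 * Qn S u (16 * R)) := by gcongr
      _ = _ := by ring

end kl
end QIZ

namespace QIZ
open scoped Classical Matrix

section kl
variable {G : Type*} [Group G] {S : Finset G}

/-- linear combination of functions -/
def comb {D : ℕ} (u : Fin D → G → ℝ) : (Fin D → ℝ) →ₗ[ℝ] (G → ℝ) := Fintype.linearCombination ℝ u

theorem comb_apply {D : ℕ} (u : Fin D → G → ℝ) (c : Fin D → ℝ) (x : G) :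
    comb u c x = ∑ i, c i * u i x := by
  simp [comb, Fintype.linearCombination_apply]

theorem harm_comb {D : ℕ} (u : Fin D → G → ℝ) (hu : ∀ i, Harm S (u i)) (c : Fin D → ℝ) :
    Harm S (comb u c) := by
  intro x
  simp only [comb_apply]
  calc ∑ s ∈ S, (∑ i, c i * u i (x * s) - ∑ i, c i * u i x)
      = ∑ s ∈ S, ∑ i, c i * (u i (x * s) - u i x) := by
        refine Finset.sum_congr rfl fun s _ => ?_
        rw [← Finset.sum_sub_distrib]
        exact Finset.sum_congr rfl fun i _ => by ring
    _ = ∑ i, c i * ∑ s ∈ S, (u i (x * s) - u i x) := by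
        rw [Finset.sum_comm]
        exact Finset.sum_congr rfl fun i _ => by rw [Finset.mul_sum]
    _ = 0 := Finset.sum_eq_zero fun i _ => by rw [hu i x, mul_zero]

/-- Gram matrix over a ball -/
def Gm (S : Finset G) {D : ℕ} (u : Fin D → G → ℝ) (R : ℕ) : Matrix (Fin D) (Fin D) ℝ :=
  fun i k => ∑ x ∈ ball S R, u i x * u k x

theorem Gm_quad {D : ℕ} (u : Fin D → G → ℝ) (R : ℕ) (c : Fin D → ℝ) :
    c ⬝ᵥ Gm S u R *ᵥ c = Qn S (comb u c) R := by
  simp only [dotProduct, Matrix.mulVec, Gm, Qn, comb_apply, Finset.mul_sum, Finset.sum_mul, sq]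
  symm
  rw [Finset.sum_comm]
  refine Finset.sum_congr rfl fun i _ => ?_
  rw [Finset.sum_comm]
  refine Finset.sum_congr rfl fun k _ => ?_
  refine Finset.sum_congr rfl fun x _ => ?_
  ring

theorem Gm_herm {D : ℕ} (u : Fin D → G → ℝ) (R : ℕ) : (Gm S u R).IsHermitian := by
  ext i k
  simp only [Matrix.conjTranspose_apply, Gm, star_trivial]
  exact Finset.sum_congr rfl fun x _ => mul_comm _ _

theorem Gm_psd {D : ℕ} (u : Fin D → G → ℝ) (R : ℕ) : (Gm S u R).PosSemidef :=
  Matrix.PosSemidef.of_dotProduct_mulVec_nonneg (Gm_herm u R) fun c => by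
    rw [star_trivial, Gm_quad]; exact Qn_nonneg _ _

theorem Gm_pd {D : ℕ} (u : Fin D → G → ℝ) (R : ℕ)
    (h : ∀ c, (∀ x ∈ ball S R, comb u c x = 0) → c = 0) : (Gm S u R).PosDef :=
  Matrix.PosDef.of_dotProduct_mulVec_pos (Gm_herm u R) fun c hc => by
    rw [star_trivial, Gm_quad]
    refine lt_of_le_of_ne (Qn_nonneg _ _) fun h0 => hc (h c fun x hx => ?_)
    have := (Finset.sum_eq_zero_iff_of_nonneg (fun x _ => sq_nonneg (comb u c x))).1 h0.symm x hx
    exact pow_eq_zero_iff (two_ne_zero) |>.1 this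

theorem eventually_inj (hS : IsGen S) {D : ℕ} (u : Fin D → G → ℝ) (hu : LinearIndependent ℝ u) :
    ∃ r0, ∀ r ≥ r0, ∀ c, (∀ x ∈ ball S r, comb u c x = 0) → c = 0 := by
  let W : ℕ → Submodule ℝ (Fin D → ℝ) := fun r =>
    { carrier := {c | ∀ x ∈ ball S r, comb u c x = 0}
      add_mem' := by
        intro c d hc hd x hx
        rw [map_add, Pi.add_apply, hc x hx, hd x hx, add_zero]
      zero_mem' := by intro x _; simp
      smul_mem' := by
        intro t c hc x hx
        rw [map_smul, Pi.smul_apply, hc x hx, smul_zero] }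
  let Wo : ℕ →o (Submodule ℝ (Fin D → ℝ))ᵒᵈ :=
    ⟨fun r => OrderDual.toDual (W r), fun r t hrt => by
      show W t ≤ W r
      intro c hc x hx
      exact hc x (ball_mono hS hrt hx)⟩
  obtain ⟨r0, hr0⟩ := IsArtinian.monotone_stabilizes Wo
  have hW : ∀ m ≥ r0, W r0 = W m := fun m hm => hr0 m hm
  refine ⟨r0, fun r hr c hc => ?_⟩
  have hc0 : c ∈ W r0 := by rw [hW r hr]; exact hc
  have : comb u c = 0 := by
    funext x
    have h1 : c ∈ W (max r0 (wl S x)) := by rw [← hW _ (le_max_left _ _)]; exact hc0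
    exact h1 x ((mem_ball hS).2 (le_max_right _ _))
  have h2 := Fintype.linearIndependent_iff.1 hu c (by
    rw [← this, comb, Fintype.linearCombination_apply])
  exact funext h2

theorem kleiner (hS : IsGen S) {K P n : ℕ} (hK1 : 1 ≤ K)
    (hK : ∀ r, (ball S (2 * r)).card ≤ K * (ball S r).card)
    (hP : ∀ r, (ball S r).card ≤ P * (r + 1) ^ n) :
    ∃ D0 : ℕ, ∀ u : Fin D0 → G → ℝ, LinearIndependent ℝ u → (∀ i, Harm S (u i)) →
      (∀ i, ∃ L : ℝ, ∀ x, |u i x| ≤ L * (wl S x + 1)) → False := by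
  set T : ℝ := 16 ^ (n + 2) with hT
  have hT0 : 0 < T := by positivity
  have hT1 : 1 ≤ T := one_le_pow₀ (by norm_num)
  obtain ⟨a, ha⟩ : ∃ a : ℕ, 2 * ((K:ℝ) ^ 4 * S.card) * T ^ 2 < 4 ^ a :=
    pow_unbounded_of_one_lt _ (by norm_num)
  set δ : ℝ := K ^ 4 * S.card / 4 ^ a with hδdef
  have h4 : (0:ℝ) < 4 ^ a := by positivity
  have hδ0 : 0 ≤ δ := by positivity
  have hδT : δ * T ^ 2 ≤ 1 / 2 := by
    rw [hδdef, div_mul_eq_mul_div, div_le_iff₀ h4]; linarith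
  have hδ1 : δ ≤ 1 := by nlinarith [one_le_pow₀ (n := 2) hT1]
  set N := K ^ (a + 2) with hN
  have hN1 : 1 ≤ N := Nat.one_le_pow _ _ hK1
  refine ⟨2 * N, fun u hu hharm hgr => ?_⟩
  choose L0 hL0 using hgr
  set L := ∑ i, |L0 i| with hL
  have hLnn : 0 ≤ L := Finset.sum_nonneg fun _ _ => abs_nonneg _
  have hLb : ∀ i x, |u i x| ≤ L * (wl S x + 1) := by
    intro i x
    refine (hL0 i x).trans ?_
    have : L0 i ≤ L := (le_abs_self _).trans
      (Finset.single_le_sum (f := fun i => |L0 i|) (fun _ _ => abs_nonneg _) (Finset.mem_univ i))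
    gcongr
  obtain ⟨r0, hr0⟩ := eventually_inj hS u hu
  let R : ℕ → ℕ := fun j => 2 ^ a * (2 * 16 ^ j)
  have hRj : ∀ j, j ≤ R j := by
    intro j
    have h1 : j < 16 ^ j := Nat.lt_pow_self (by norm_num)
    have h2 : 1 ≤ 2 ^ a := Nat.one_le_two_pow
    show j ≤ 2 ^ a * (2 * 16 ^ j)
    nlinarith
  have hRs : ∀ j, R (j + 1) = 16 * R j := by
    intro j; simp only [R]; ring
  have hpd : ∀ j ≥ r0, (Gm S u (R j)).PosDef := fun j hj =>
    Gm_pd u _ (hr0 _ (hj.trans (hRj j)))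
  have hstep : ∀ j ≥ r0, (Gm S u (R j)).det ≤ δ ^ N * (Gm S u (R (j + 1))).det := by
    intro j hj
    obtain ⟨X, hXN, hX⟩ := key_step hS hK a (16 ^ j) (Nat.one_le_pow _ _ (by norm_num))
    let l0 : (Fin (2 * N) → ℝ) →ₗ[ℝ] (X → ℝ) :=
      LinearMap.pi fun x => ∑ y ∈ ball S (2 * 16 ^ j), LinearMap.proj (x.1 * y) ∘ₗ comb u
    let l : (Fin (2 * N) → ℝ) →ₗ[ℝ] (Fin X.card → ℝ) :=
      LinearMap.funLeft ℝ ℝ X.equivFin.symm ∘ₗ l0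
    have hd := det_le_two (Gm S u (R j)) (Gm S u (R (j + 1))) (Gm_psd u _)
      (hpd (j + 1) (by omega)) δ hδ0 hδ1 (fun c => by
        rw [Gm_quad, Gm_quad]
        refine Qn_mono hS _ ?_
        rw [hRs]; omega) l (fun c hc => by
        rw [Gm_quad, Gm_quad, hRs]
        have h1 := hX (comb u c) (harm_comb u hharm c) (fun x hx => by
          have h2 := congrFun hc (X.equivFin ⟨x, hx⟩)
          simpa [l, l0, LinearMap.funLeft_apply] using h2)
        rw [hδdef, div_mul_eq_mul_div, le_div_iff₀ h4, mul_comm]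
        exact h1)
    refine hd.trans ?_
    have : 0 < (Gm S u (R (j + 1))).det := (hpd (j + 1) (by omega)).det_pos
    have h3 : δ ^ (2 * N - X.card) ≤ δ ^ N := pow_le_pow_of_le_one hδ0 hδ1 (by omega)
    gcongr
  set A : ℝ := P * L ^ 2 * (2 ^ (a + 2)) ^ (n + 2) with hA
  have hA0 : 0 ≤ A := by positivity
  have hent : ∀ j i k, |Gm S u (R j) i k| ≤ A * T ^ j := by
    intro j i k
    have h1 : |Gm S u (R j) i k| ≤ (ball S (R j)).card • (L * (R j + 1)) ^ 2 := by
      refine (Finset.abs_sum_le_sum_abs _ _).trans ?_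
      refine Finset.sum_le_card_nsmul _ _ _ fun x hx => ?_
      have hx' : (wl S x : ℝ) ≤ R j := by exact_mod_cast (mem_ball hS).1 hx
      have hb : ∀ i, |u i x| ≤ L * (R j + 1) := fun i => (hLb i x).trans (by gcongr)
      rw [abs_mul, sq]
      exact mul_le_mul (hb i) (hb k) (abs_nonneg _) (by positivity)
    have h2 : ((ball S (R j)).card : ℝ) ≤ P * ((R j : ℝ) + 1) ^ n := by exact_mod_cast hP (R j)
    have h3 : (R j : ℝ) + 1 ≤ 2 ^ (a + 2) * 16 ^ j := by
      have h5 : (1:ℝ) ≤ 2 ^ a * 16 ^ j :=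
        one_le_mul_of_one_le_of_one_le (one_le_pow₀ (by norm_num)) (one_le_pow₀ (by norm_num))
      simp only [R]; push_cast
      rw [pow_add]; nlinarith
    rw [nsmul_eq_mul] at h1
    calc |Gm S u (R j) i k| ≤ (ball S (R j)).card * (L * (R j + 1)) ^ 2 := h1
      _ ≤ P * ((R j : ℝ) + 1) ^ n * (L * (R j + 1)) ^ 2 := by gcongr
      _ = P * L ^ 2 * ((R j : ℝ) + 1) ^ (n + 2) := by ring
      _ ≤ P * L ^ 2 * (2 ^ (a + 2) * 16 ^ j) ^ (n + 2) := by gcongr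
      _ = A * T ^ j := by rw [hA, hT, mul_pow, pow_right_comm (16:ℝ) j, mul_assoc, mul_assoc, mul_assoc]
  have hdet : ∀ j, (Gm S u (R j)).det ≤ (2 * N).factorial * (A * T ^ j) ^ (2 * N) := by
    intro j
    have := Matrix.det_le (A := Gm S u (R j)) (abv := AbsoluteValue.abs) (x := A * T ^ j)
      (fun i k => hent j i k)
    simp only [AbsoluteValue.abs_apply, Fintype.card_fin, nsmul_eq_mul] at this
    exact (le_abs_self _).trans this
  have hiter : ∀ k, (Gm S u (R r0)).det ≤ (δ ^ N) ^ k * (Gm S u (R (r0 + k))).det := by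
    intro k
    induction k with
    | zero => simp
    | succ k ih =>
      refine ih.trans ?_
      rw [pow_succ, mul_assoc]
      gcongr
      exact hstep (r0 + k) (by omega)
  set B : ℝ := (2 * N).factorial * (A * T ^ r0) ^ (2 * N) with hB
  have hB0 : 0 ≤ B := by positivity
  have hfin : ∀ k : ℕ, (Gm S u (R r0)).det ≤ B * (1 / 2) ^ k := by
    intro k
    calc (Gm S u (R r0)).det ≤ (δ ^ N) ^ k * ((2 * N).factorial * (A * T ^ (r0 + k)) ^ (2 * N)) :=
          (hiter k).trans (by gcongr; exact hdet _)
      _ = B * ((δ * T ^ 2) ^ N) ^ k := by rw [hB]; ring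
      _ ≤ B * (1 / 2) ^ k := by
          gcongr
          calc (δ * T ^ 2) ^ N ≤ (1 / 2) ^ N := by gcongr
            _ ≤ (1 / 2) ^ 1 := pow_le_pow_of_le_one (by norm_num) (by norm_num) hN1
            _ = 1 / 2 := by norm_num
  have hpos := (hpd r0 le_rfl).det_pos
  have hlim : Filter.Tendsto (fun k : ℕ => B * (1 / 2 : ℝ) ^ k) Filter.atTop (nhds (B * 0)) :=
    (tendsto_pow_atTop_nhds_zero_of_lt_one (by norm_num) (by norm_num)).const_mul B
  have := ge_of_tendsto' hlim hfin
  rw [mul_zero] at this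
  linarith

end kl
end QIZ

namespace QIZ
open scoped Classical

theorem gns.{w, v} {Γ : Type w} {V : Type v} [Group Γ] [AddCommGroup V] [Module ℝ V] (B : V →ₗ[ℝ] V →ₗ[ℝ] ℝ)
    (hsymm : ∀ v w, B v w = B w v) (hnn : ∀ v, 0 ≤ B v v) (ρ : Γ →* (V →ₗ[ℝ] V))
    (hρ : ∀ g v, B (ρ g v) (ρ g v) = B v v) :
    ∃ (H : Type v) (_ : NormedAddCommGroup H) (_ : InnerProductSpace ℝ H) (_ : CompleteSpace H)
      (ι : V →ₗ[ℝ] H) (U : Γ →* (H →L[ℝ] H)), (∀ v w, inner ℝ (ι v) (ι w) = B v w) ∧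
      (∀ g x, ‖U g x‖ = ‖x‖) ∧ ∀ g v, U g (ι v) = ι (ρ g v) := by
  let core : PreInnerProductSpace.Core ℝ V :=
    { inner := fun v w => B v w
      conj_inner_symm := fun v w => by simpa using hsymm w v
      re_inner_nonneg := fun v => by simpa using hnn v
      add_left := fun x y z => by simp
      smul_left := fun x y r => by simp }
  let : SeminormedAddCommGroup V := InnerProductSpace.Core.toSeminormedAddCommGroup (𝕜 := ℝ)
  let : InnerProductSpace ℝ V := InnerProductSpace.ofCore core
  have hin : ∀ v w : V, inner ℝ v w = B v w := fun v w => rfl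
  have hnorm : ∀ g v, ‖ρ g v‖ = ‖v‖ := by
    intro g v
    rw [@norm_eq_sqrt_real_inner V, @norm_eq_sqrt_real_inner V, hin, hin, hρ]
  let ρc : Γ → (V →L[ℝ] V) := fun g => (ρ g).mkContinuous 1 (fun v => by rw [hnorm, one_mul])
  have hρc : ∀ g v, ρc g v = ρ g v := fun g v => rfl
  refine ⟨UniformSpace.Completion V, inferInstance, inferInstance, inferInstance,
    (UniformSpace.Completion.toComplL (𝕜 := ℝ) (E := V)).toLinearMap,
    { toFun := fun g => (ρc g).completion
      map_one' := ?_
      map_mul' := ?_ }, ?_, ?_, ?_⟩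
  · ext x
    induction x using UniformSpace.Completion.induction_on with
    | hp => exact isClosed_eq (by fun_prop) (by fun_prop)
    | ih v => simp [hρc]
  · intro g h
    ext x
    induction x using UniformSpace.Completion.induction_on with
    | hp => exact isClosed_eq (by fun_prop) (by fun_prop)
    | ih v => simp [hρc]
  · intro v w
    exact UniformSpace.Completion.inner_coe v w
  · intro g x
    show ‖(ρc g).completion x‖ = ‖x‖
    induction x using UniformSpace.Completion.induction_on with
    | hp => exact isClosed_eq (by fun_prop) (by fun_prop)
    | ih v => simp [hρc, hnorm]
  · intro g v
    show (ρc g).completion (v : UniformSpace.Completion V) = (ρ g v : V)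
    simp [hρc]

end QIZ

namespace QIZ
open scoped Classical
open Filter

section mean
variable {G : Type*} [Group G] {S : Finset G}

theorem folner_radius (hS : IsGen S) {P n : ℕ} (hP : ∀ r, (ball S r).card ≤ P * (r + 1) ^ n)
    (k : ℕ) : ∃ r, ((ball S (r + 1)).card : ℝ) ≤ (1 + 1 / ((k : ℝ) + 1)) * (ball S r).card := by
  by_contra hcon
  push Not at hcon
  set q : ℝ := 1 + 1 / ((k : ℝ) + 1) with hq
  have hq1 : 1 < q := by
    have : (0:ℝ) < 1 / ((k : ℝ) + 1) := by positivity
    linarith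
  have h1 : ∀ r, q ^ r ≤ (ball S r).card := by
    intro r
    induction r with
    | zero => simpa using ball_card_pos hS 0
    | succ r ih =>
      rw [pow_succ, mul_comm]
      exact (mul_le_mul_of_nonneg_left ih (by linarith)).trans (hcon r).le
  have h2 : ∀ r : ℕ, q ^ r ≤ P * ((r : ℝ) + 1) ^ n := fun r => (h1 r).trans (by exact_mod_cast hP r)
  have h3 := ((tendsto_pow_const_div_const_pow_of_one_lt n hq1).comp (tendsto_add_atTop_nat 1)).const_mul
    ((P : ℝ) * q)
  rw [mul_zero] at h3
  have h4 : ∀ r : ℕ, (1:ℝ) ≤ P * q * (((r + 1 : ℕ) : ℝ) ^ n / q ^ (r + 1)) := by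
    intro r
    have hqr : 0 < q ^ r := by positivity
    have : (P:ℝ) * q * (((r + 1 : ℕ) : ℝ) ^ n / q ^ (r + 1)) = P * ((r : ℝ) + 1) ^ n / q ^ r := by
      rw [pow_succ]; push_cast; field_simp
    rw [this, le_div_iff₀ hqr, one_mul]
    exact h2 r
  have := ge_of_tendsto' h3 h4
  linarith

/-- bounded functions -/
def Bd (φ : G → ℝ) : Prop := ∃ M : ℝ, ∀ x, |φ x| ≤ M

theorem exists_mean (hS : IsGen S) {P n : ℕ} (hP : ∀ r, (ball S r).card ≤ P * (r + 1) ^ n) :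
    ∃ m : (G → ℝ) → ℝ, (∀ φ ψ, Bd φ → Bd ψ → m (φ + ψ) = m φ + m ψ) ∧
      (∀ (t : ℝ) φ, Bd φ → m (t • φ) = t * m φ) ∧
      (∀ φ (t : ℝ), Bd φ → (∀ x, t ≤ φ x) → t ≤ m φ) ∧
      (∀ φ (g : G), Bd φ → m (fun x => φ (x * g)) = m φ) := by
  choose r hr using folner_radius hS hP
  let A : ℕ → (G → ℝ) → ℝ := fun k φ => (∑ x ∈ ball S (r k), φ x) / (ball S (r k)).card
  have hcpos : ∀ k, (0:ℝ) < (ball S (r k)).card := fun k => by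
    exact_mod_cast ball_card_pos hS (r k)
  have hA : ∀ φ M, (∀ x, |φ x| ≤ M) → ∀ k, A k φ ∈ Set.Icc (-M) M := by
    intro φ M hM k
    have h1 : |∑ x ∈ ball S (r k), φ x| ≤ (ball S (r k)).card * M := by
      refine (Finset.abs_sum_le_sum_abs _ _).trans ?_
      rw [← nsmul_eq_mul]
      exact Finset.sum_le_card_nsmul _ _ _ fun x _ => hM x
    have := abs_le.1 h1
    constructor
    · rw [le_div_iff₀ (hcpos k)]; linarith [this.1]
    · rw [div_le_iff₀ (hcpos k)]; linarith [this.2]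
  let F : Ultrafilter ℕ := hyperfilter ℕ
  have hF : (F : Filter ℕ) ≤ atTop := by
    have := Filter.hyperfilter_le_cofinite (α := ℕ)
    rwa [Nat.cofinite_eq_atTop] at this
  have hlim : ∀ φ, Bd φ → ∃ a, Tendsto (fun k => A k φ) F (nhds a) := by
    rintro φ ⟨M, hM⟩
    obtain ⟨a, _, ha⟩ := (isCompact_Icc (a := -M) (b := M)).ultrafilter_le_nhds
      (F.map fun k => A k φ) (by
        rw [Filter.le_principal_iff]
        exact Filter.mem_map.2 (Filter.univ_mem' (hA φ M hM)))
    exact ⟨a, ha⟩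
  let m : (G → ℝ) → ℝ := fun φ => if h : Bd φ then (hlim φ h).choose else 0
  have hm : ∀ φ, Bd φ → Tendsto (fun k => A k φ) F (nhds (m φ)) := by
    intro φ h
    simp only [m, h, dif_pos]
    exact (hlim φ h).choose_spec
  have hadd : ∀ φ ψ : G → ℝ, Bd φ → Bd ψ → Bd (φ + ψ) := by
    rintro φ ψ ⟨M, hM⟩ ⟨N, hN⟩
    exact ⟨M + N, fun x => (abs_add_le _ _).trans (add_le_add (hM x) (hN x))⟩
  have hsm : ∀ (t : ℝ) (φ : G → ℝ), Bd φ → Bd (t • φ) := by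
    rintro t φ ⟨M, hM⟩
    refine ⟨|t| * M, fun x => ?_⟩
    rw [Pi.smul_apply, smul_eq_mul, abs_mul]
    exact mul_le_mul_of_nonneg_left (hM x) (abs_nonneg _)
  have htr : ∀ (g : G) (φ : G → ℝ), Bd φ → Bd (fun x => φ (x * g)) := by
    rintro g φ ⟨M, hM⟩
    exact ⟨M, fun x => hM _⟩
  have hinvS : ∀ s ∈ S, ∀ φ : G → ℝ, Bd φ → m (fun x => φ (x * s)) = m φ := by
    rintro s hs φ ⟨M, hM⟩
    have hM0 : 0 ≤ M := (abs_nonneg _).trans (hM 1)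
    have h1 := (hm _ (htr s φ ⟨M, hM⟩)).sub (hm φ ⟨M, hM⟩)
    have h2 : Tendsto (fun k => A k (fun x => φ (x * s)) - A k φ) F (nhds 0) := by
      refine Tendsto.mono_left ?_ hF
      have h3 : Tendsto (fun k : ℕ => 2 * M * (1 / ((k : ℝ) + 1))) atTop (nhds (2 * M * 0)) :=
        tendsto_one_div_add_atTop_nhds_zero_nat.const_mul _
      rw [mul_zero] at h3
      refine squeeze_zero_norm (fun k => ?_) h3
      set Bk := ball S (r k) with hBk
      set Bs := Bk.image (fun x => x * s) with hBs
      have hcs : Bs.card = Bk.card := Finset.card_image_of_injective _ (mul_left_injective s)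
      have e1 : ∑ x ∈ Bk, φ (x * s) = ∑ x ∈ Bs, φ x := by
        rw [hBs, Finset.sum_image]
        intro x _ y _ h
        exact mul_right_cancel h
      have e2 : ∑ x ∈ Bs, φ x - ∑ x ∈ Bk, φ x = ∑ x ∈ Bs \ Bk, φ x - ∑ x ∈ Bk \ Bs, φ x := by
        rw [← Finset.sum_inter_add_sum_sdiff Bs Bk φ, ← Finset.sum_inter_add_sum_sdiff Bk Bs φ,
          Finset.inter_comm]
        ring
      have c1 : (Bs \ Bk).card + Bk.card ≤ (ball S (r k + 1)).card := by
        rw [← Finset.card_union_of_disjoint Finset.sdiff_disjoint]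
        refine Finset.card_le_card ?_
        intro x hx
        rcases Finset.mem_union.1 hx with h | h
        · obtain ⟨y, hy, rfl⟩ := Finset.mem_image.1 (Finset.mem_sdiff.1 h).1
          rw [mem_ball hS]
          have h4 := wl_mul hS y s
          have h5 := wl_mem hs
          have h6 := (mem_ball hS).1 hy
          omega
        · exact ball_mono hS (Nat.le_succ _) h
      have c2 : (Bk \ Bs).card = (Bs \ Bk).card := by
        have h7 := Finset.card_sdiff_add_card_inter Bk Bs
        have h8 := Finset.card_sdiff_add_card_inter Bs Bk
        rw [Finset.inter_comm] at h8
        omega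
      have c3 : ((Bs \ Bk).card : ℝ) ≤ 1 / ((k : ℝ) + 1) * Bk.card := by
        have h9 : ((Bs \ Bk).card : ℝ) + Bk.card ≤ (ball S (r k + 1)).card := by exact_mod_cast c1
        have := hr k
        rw [← hBk] at this
        linarith
      have bd : ∀ Y : Finset G, |∑ x ∈ Y, φ x| ≤ Y.card * M := by
        intro Y
        refine (Finset.abs_sum_le_sum_abs _ _).trans ?_
        rw [← nsmul_eq_mul]
        exact Finset.sum_le_card_nsmul _ _ _ fun x _ => hM x
      have hc := hcpos k
      rw [← hBk] at hc
      rw [Real.norm_eq_abs]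
      show |(∑ x ∈ Bk, φ (x * s)) / Bk.card - (∑ x ∈ Bk, φ x) / Bk.card| ≤ _
      rw [← sub_div, e1, e2, abs_div, abs_of_pos hc, div_le_iff₀ hc]
      have b1 := bd (Bs \ Bk)
      have b2 := bd (Bk \ Bs)
      rw [c2] at b2
      have b3 : |∑ x ∈ Bs \ Bk, φ x - ∑ x ∈ Bk \ Bs, φ x| ≤ 2 * M * (Bs \ Bk).card := by
        refine (abs_sub _ _).trans ?_
        linarith
      refine b3.trans ?_
      rw [mul_assoc (2 * M)]
      gcongr
    exact sub_eq_zero.1 (tendsto_nhds_unique h1 h2)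
  refine ⟨m, ?_, ?_, ?_, ?_⟩
  · intro φ ψ hφ hψ
    refine tendsto_nhds_unique (hm _ (hadd _ _ hφ hψ)) (((hm _ hφ).add (hm _ hψ)).congr fun k => ?_)
    simp only [A, Pi.add_apply, Finset.sum_add_distrib]
    ring
  · intro t φ hφ
    refine tendsto_nhds_unique (hm _ (hsm t _ hφ)) (((hm _ hφ).const_mul t).congr fun k => ?_)
    simp only [A, Pi.smul_apply, smul_eq_mul, ← Finset.mul_sum]
    ring
  · intro φ t hφ h
    refine ge_of_tendsto' (hm _ hφ) fun k => ?_
    rw [le_div_iff₀ (hcpos k), mul_comm, ← nsmul_eq_mul]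
    exact Finset.card_nsmul_le_sum _ _ _ fun x _ => h x
  · intro φ g hφ
    obtain ⟨l, hl, rfl⟩ := exists_list hS g
    clear * - hl hinvS htr hφ
    induction l generalizing φ with
    | nil => simp
    | cons s l ih =>
      have h1 := ih φ hφ (fun x hx => hl x (List.mem_cons_of_mem _ hx))
      have h2 := hinvS s (hl s (by simp)) _ (htr l.prod φ hφ)
      rw [← h1, ← h2]
      simp only [List.prod_cons, mul_assoc]

end mean
end QIZ

namespace QIZ
open scoped Classical
open Filter

section coc
variable {G : Type*} [Group G] {S : Finset G}

/-- bounded vector valued functions -/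
def Vb (G : Type*) (n : ℕ) : Submodule ℝ (G → Fin n → ℝ) where
  carrier := {φ | ∃ M : ℝ, ∀ x i, |φ x i| ≤ M}
  add_mem' := by
    rintro φ ψ ⟨M, hM⟩ ⟨N, hN⟩
    exact ⟨M + N, fun x i => (abs_add_le _ _).trans (add_le_add (hM x i) (hN x i))⟩
  zero_mem' := ⟨0, fun x i => by simp⟩
  smul_mem' := by
    rintro t φ ⟨M, hM⟩
    refine ⟨|t| * M, fun x i => ?_⟩
    rw [Pi.smul_apply, Pi.smul_apply, smul_eq_mul, abs_mul]
    exact mul_le_mul_of_nonneg_left (hM x i) (abs_nonneg _)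

theorem Vb_bd {n : ℕ} (φ ψ : Vb G n) : Bd (fun x => ∑ i, φ.1 x i * ψ.1 x i) := by
  obtain ⟨φ, M, hM⟩ := φ
  obtain ⟨ψ, N, hN⟩ := ψ
  refine ⟨∑ _i : Fin n, |M| * |N|, fun x => (Finset.abs_sum_le_sum_abs _ _).trans
    (Finset.sum_le_sum fun i _ => ?_)⟩
  rw [abs_mul]
  exact mul_le_mul ((hM x i).trans (le_abs_self _)) ((hN x i).trans (le_abs_self _))
    (abs_nonneg _) (abs_nonneg _)

theorem exists_cocycle.{w} {G : Type w} [Group G] {S : Finset G}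
    (hS : IsGen S) {n : ℕ} {f : G → Fin n → ℤ} {c C : ℕ} (hf : IsQI S f c C) :
    ∃ (H : Type w) (_ : NormedAddCommGroup H) (_ : InnerProductSpace ℝ H) (_ : CompleteSpace H)
      (U : G →* (H →L[ℝ] H)) (b : G → H), (∀ g x, ‖U g x‖ = ‖x‖) ∧
      (∀ g h, b (g * h) = b g + U g (b h)) ∧
      ∃ α : ℝ, 0 < α ∧ ∃ β : ℝ, ∀ g, α * wl S g - β ≤ ‖b g‖ := by
  obtain ⟨P, hP⟩ := growth_upper hS hf
  obtain ⟨m, madd, msmul, mle, minv⟩ := exists_mean hS hP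
  let B : Vb G n →ₗ[ℝ] Vb G n →ₗ[ℝ] ℝ :=
    LinearMap.mk₂ ℝ (fun φ ψ => m (fun x => ∑ i, φ.1 x i * ψ.1 x i))
      (fun φ φ' ψ => by
        rw [← madd _ _ (Vb_bd _ _) (Vb_bd _ _)]
        congr 1
        funext x
        simp [add_mul, Finset.sum_add_distrib])
      (fun t φ ψ => by
        rw [smul_eq_mul, ← msmul _ _ (Vb_bd _ _)]
        congr 1
        funext x
        simp [Finset.mul_sum, mul_assoc])
      (fun φ ψ ψ' => by
        rw [← madd _ _ (Vb_bd _ _) (Vb_bd _ _)]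
        congr 1
        funext x
        simp [mul_add, Finset.sum_add_distrib])
      (fun t φ ψ => by
        rw [smul_eq_mul, ← msmul _ _ (Vb_bd _ _)]
        congr 1
        funext x
        simp [Finset.mul_sum, mul_left_comm])
  have hB : ∀ φ ψ, B φ ψ = m (fun x => ∑ i, φ.1 x i * ψ.1 x i) := fun φ ψ => rfl
  let ρ : G →* (Vb G n →ₗ[ℝ] Vb G n) :=
    { toFun := fun g =>
        { toFun := fun φ => ⟨fun x => φ.1 (x * g), by
            obtain ⟨M, hM⟩ := φ.2
            exact ⟨M, fun x i => hM _ i⟩⟩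
          map_add' := fun φ ψ => rfl
          map_smul' := fun t φ => rfl }
      map_one' := by
        ext φ x i
        simp
      map_mul' := fun g h => by
        ext φ x i
        simp [mul_assoc] }
  have hρ : ∀ g φ x, (ρ g φ).1 x = φ.1 (x * g) := fun g φ x => rfl
  obtain ⟨H, i1, i2, i3, ι, U, hι, hU, hUι⟩ := gns B
    (fun φ ψ => by rw [hB, hB]; simp only [mul_comm])
    (fun φ => by
      rw [hB]
      exact mle _ 0 (Vb_bd _ _) fun x => Finset.sum_nonneg fun i _ => mul_self_nonneg _)
    ρ (fun g φ => by
      rw [hB, hB]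
      exact minv (fun x => ∑ i, φ.1 x i * φ.1 x i) g (Vb_bd _ _))
  let b0 : G → Vb G n := fun g => ⟨fun x i => (f (x * g) i : ℝ) - f x i, by
    refine ⟨c * wl S g + C, fun x i => ?_⟩
    have h1 := zdN_coord (f x) (f (x * g)) i
    have h2 := hf.up x (x * g)
    rw [inv_mul_cancel_left] at h2
    have h3 : (((f x i - f (x * g) i).natAbs : ℕ) : ℝ) ≤ c * wl S g + C := by
      exact_mod_cast h1.trans h2
    rw [Nat.cast_natAbs] at h3
    push_cast at h3
    rwa [abs_sub_comm]⟩
  refine ⟨H, i1, i2, i3, U, fun g => ι (b0 g), hU, ?_, 1 / (c + 1) / (n + 1), by positivity,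
    C / (n + 1), ?_⟩
  · intro g h
    rw [hUι, ← map_add]
    refine congrArg ι ?_
    apply Subtype.ext
    funext x i
    show (f (x * (g * h)) i : ℝ) - f x i = (f (x * g) i - f x i) + (f (x * g * h) i - f (x * g) i)
    rw [mul_assoc]; ring
  · intro g
    set t : ℝ := 1 / (c + 1) * wl S g - C with ht
    have e : (1:ℝ) / (c + 1) / (n + 1) * wl S g - C / (n + 1) = t / (n + 1) := by
      rw [ht]; ring
    rw [e]
    rcases le_or_gt t 0 with h0 | h0
    · exact (div_nonpos_of_nonpos_of_nonneg h0 (by positivity)).trans (norm_nonneg _)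
    · rw [← pow_le_pow_iff_left₀ (by positivity) (norm_nonneg _) two_ne_zero,
        ← real_inner_self_eq_norm_sq, hι, hB]
      refine mle _ _ (Vb_bd _ _) fun x => ?_
      have h1 := hf.low x (x * g)
      rw [inv_mul_cancel_left] at h1
      have h2 : (wl S g : ℝ) ≤ c * (zdN (f x) (f (x * g)) + C) := by exact_mod_cast h1
      have h3 : t ≤ zdN (f x) (f (x * g)) := by
        rw [ht, sub_le_iff_le_add, div_mul_eq_mul_div, one_mul, div_le_iff₀ (by positivity)]
        nlinarith [Nat.cast_nonneg (α := ℝ) (zdN (f x) (f (x * g))), Nat.cast_nonneg (α := ℝ) C]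
      have h4 : (zdN (f x) (f (x * g)) : ℝ) = ∑ i, |(f (x * g) i : ℝ) - f x i| := by
        rw [← zDist_eq, zDist]
        exact Finset.sum_congr rfl fun i _ => abs_sub_comm _ _
      have h5 := sq_sum_le_card_mul_sum_sq (s := Finset.univ)
        (f := fun i => |(f (x * g) i : ℝ) - f x i|)
      rw [← h4] at h5
      simp only [sq_abs, Finset.card_univ, Fintype.card_fin] at h5
      have h6 : ∑ i, (b0 g).1 x i * (b0 g).1 x i = ∑ i, ((f (x * g) i : ℝ) - f x i) ^ 2 :=
        Finset.sum_congr rfl fun i _ => (sq _).symm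
      rw [h6, div_pow, div_le_iff₀ (by positivity)]
      have h7 : 0 ≤ ∑ i, ((f (x * g) i : ℝ) - f x i) ^ 2 := Finset.sum_nonneg fun _ _ => sq_nonneg _
      have h8 : t ^ 2 ≤ (zdN (f x) (f (x * g)) : ℝ) ^ 2 := by gcongr
      have h9 : (n:ℝ) ≤ (n + 1) ^ 2 := by nlinarith [Nat.cast_nonneg (α := ℝ) n]
      nlinarith

end coc
end QIZ

namespace QIZ
open scoped Classical
open Filter

section harm
variable {G : Type*} [Group G] {S : Finset G}
variable {H : Type*} [NormedAddCommGroup H] [InnerProductSpace ℝ H]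

theorem cocycle_one (U : G →* (H →L[ℝ] H)) (d : G → H)
    (hd : ∀ g h, d (g * h) = d g + U g (d h)) : d 1 = 0 := by
  have := hd 1 1
  simpa using this

theorem cocycle_bound (hS : IsGen S) (U : G →* (H →L[ℝ] H)) (hU : ∀ g x, ‖U g x‖ = ‖x‖) (d : G → H)
    (hd : ∀ g h, d (g * h) = d g + U g (d h)) (ε : ℝ) (hε : ∀ s ∈ S, ‖d s‖ ≤ ε) (g : G) :
    ‖d g‖ ≤ ε * wl S g := by
  obtain ⟨l, hl, hl', rfl⟩ := exists_word hS g
  rw [← hl]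
  clear hl
  induction l with
  | nil => simp [cocycle_one U d hd]
  | cons s l ih =>
    rw [List.prod_cons, hd, List.length_cons]
    refine (norm_add_le _ _).trans ?_
    rw [hU]
    have h1 := hε s (hl' s (by simp))
    have h2 := ih (fun x hx => hl' x (by simp [hx]))
    push_cast
    linarith

theorem inner_U (U : G →* (H →L[ℝ] H)) (hU : ∀ g x, ‖U g x‖ = ‖x‖) (g : G) (x y : H) :
    inner ℝ (U g x) (U g y) = inner ℝ x y :=
  LinearIsometry.inner_map_map (⟨(U g).toLinearMap, hU g⟩ : H →ₗᵢ[ℝ] H) x y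

theorem harmonic_of_min (hS : IsGen S) (U : G →* (H →L[ℝ] H)) (hU : ∀ g x, ‖U g x‖ = ‖x‖) (b : G → H)
    (hb : ∀ g h, b (g * h) = b g + U g (b h))
    (hmin : ∀ ψ, ∑ s ∈ S, ‖b s‖ ^ 2 ≤ ∑ s ∈ S, ‖b s + U s ψ - ψ‖ ^ 2) : ∑ s ∈ S, b s = 0 := by
  set z := ∑ s ∈ S, b s with hz
  have h1 : ∀ ψ s, inner ℝ (b s) (U s ψ) = - inner ℝ (b s⁻¹) ψ := by
    intro ψ s
    have h2 := hb s s⁻¹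
    rw [mul_inv_cancel, cocycle_one U b hb] at h2
    have h3 : b s = - U s (b s⁻¹) := eq_neg_of_add_eq_zero_left h2.symm
    rw [h3, inner_neg_left, inner_U U hU]
  have h2 : ∀ ψ, ∑ s ∈ S, inner ℝ (b s) (U s ψ - ψ) = -2 * inner ℝ z ψ := by
    intro ψ
    have h3 : ∑ s ∈ S, inner ℝ (b s⁻¹) ψ = ∑ s ∈ S, inner ℝ (b s) ψ :=
      Finset.sum_bij' (fun s _ => s⁻¹) (fun s _ => s⁻¹) (fun s hs => hS.inv_mem s hs)
        (fun s hs => hS.inv_mem s hs) (by simp) (by simp) (by simp)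
    simp only [inner_sub_right, h1, Finset.sum_sub_distrib, Finset.sum_neg_distrib, h3]
    rw [← sum_inner, ← hz]; ring
  set t : ℝ := 1 / (2 * ((S.card : ℝ) + 1)) with ht
  have h3 := hmin (t • z)
  have h4 : ∀ s, ‖b s + U s (t • z) - t • z‖ ^ 2
      = ‖b s‖ ^ 2 + 2 * t * inner ℝ (b s) (U s z - z) + t ^ 2 * ‖U s z - z‖ ^ 2 := by
    intro s
    have : b s + U s (t • z) - t • z = b s + t • (U s z - z) := by
      rw [map_smul, smul_sub]; abel
    rw [this, norm_add_sq_real, inner_smul_right, norm_smul, mul_pow, Real.norm_eq_abs, sq_abs]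
    ring
  simp only [h4, Finset.sum_add_distrib, ← Finset.mul_sum, h2] at h3
  have h5 : ∑ s ∈ S, ‖U s z - z‖ ^ 2 ≤ S.card * (4 * ‖z‖ ^ 2) := by
    rw [← nsmul_eq_mul]
    refine Finset.sum_le_card_nsmul _ _ _ fun s _ => ?_
    have h6 := norm_sub_le (U s z) z
    rw [hU] at h6
    have := norm_nonneg (U s z - z)
    nlinarith [norm_nonneg z]
  rw [real_inner_self_eq_norm_sq] at h3
  have ht0 : 0 < t := by positivity
  have ht1 : t * S.card ≤ 1 / 2 := by
    rw [ht, div_mul_eq_mul_div, div_le_iff₀ (by positivity)]; linarith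
  have h7 : t ^ 2 * ∑ s ∈ S, ‖U s z - z‖ ^ 2 ≤ t * (2 * ‖z‖ ^ 2) := by
    calc t ^ 2 * ∑ s ∈ S, ‖U s z - z‖ ^ 2 ≤ t ^ 2 * (S.card * (4 * ‖z‖ ^ 2)) := by gcongr
      _ = t * ((t * S.card) * (4 * ‖z‖ ^ 2)) := by ring
      _ ≤ t * (1 / 2 * (4 * ‖z‖ ^ 2)) := by gcongr
      _ = _ := by ring
  have h8 : t * ‖z‖ ^ 2 ≤ 0 := by nlinarith
  have h9 : ‖z‖ ^ 2 ≤ 0 := by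
    by_contra hc
    push Not at hc
    have := mul_pos ht0 hc
    linarith
  exact norm_eq_zero.1 (pow_eq_zero_iff two_ne_zero |>.1 (le_antisymm h9 (sq_nonneg _)))

theorem exists_harmonic [CompleteSpace H] (hS : IsGen S) (U : G →* (H →L[ℝ] H))
    (hU : ∀ g x, ‖U g x‖ = ‖x‖) (b : G → H)
    (hb : ∀ g h, b (g * h) = b g + U g (b h))
    (hlow : ∃ α : ℝ, 0 < α ∧ ∃ β : ℝ, ∀ g, α * wl S g - β ≤ ‖b g‖) :
    ∃ b' : G → H, (∀ g h, b' (g * h) = b' g + U g (b' h)) ∧ ∑ s ∈ S, b' s = 0 ∧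
      ∃ α : ℝ, 0 < α ∧ ∃ β : ℝ, ∀ g, α * wl S g - β ≤ ‖b' g‖ := by
  let bv : H → G → H := fun v g => b g + U g v - v
  have hbv : ∀ v g h, bv v (g * h) = bv v g + U g (bv v h) := by
    intro v g h
    simp only [bv, hb, map_mul, map_sub, map_add, mul_apply_eq_comp]
    abel
  let e : H → ℝ := fun v => ∑ s ∈ S, ‖bv v s‖ ^ 2
  have he0 : ∀ v, 0 ≤ e v := fun v => Finset.sum_nonneg fun _ _ => sq_nonneg _
  set I := ⨅ v, e v with hI
  have hbdd : BddBelow (Set.range e) := ⟨0, by rintro _ ⟨v, rfl⟩; exact he0 v⟩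
  have hIle : ∀ v, I ≤ e v := fun v => ciInf_le hbdd v
  have hex : ∀ k : ℕ, ∃ v, e v < I + 1 / ((k:ℝ) + 1) := fun k =>
    exists_lt_of_ciInf_lt (lt_add_of_pos_right I (by positivity))
  choose v hv using hex
  have hpar : ∀ x y, ∑ s ∈ S, ‖bv x s - bv y s‖ ^ 2 ≤ 2 * (e x + e y) - 4 * I := by
    intro x y
    have h1 := hIle ((1/2 : ℝ) • (x + y))
    have h2 : ∀ s, ‖bv x s - bv y s‖ ^ 2 = 2 * ‖bv x s‖ ^ 2 + 2 * ‖bv y s‖ ^ 2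
        - 4 * ‖bv ((1/2 : ℝ) • (x + y)) s‖ ^ 2 := by
      intro s
      have h3 : bv ((1/2 : ℝ) • (x + y)) s = (1/2 : ℝ) • (bv x s + bv y s) := by
        simp only [bv, map_smul, map_add]
        module
      have h4 := parallelogram_law_with_norm ℝ (bv x s) (bv y s)
      rw [h3, norm_smul, Real.norm_eq_abs, abs_of_pos (by norm_num : (0:ℝ) < 1/2)]
      nlinarith
    simp only [h2, Finset.sum_sub_distrib, Finset.sum_add_distrib, ← Finset.mul_sum]
    show 2 * e x + 2 * e y - 4 * e ((1/2 : ℝ) • (x + y)) ≤ _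
    linarith
  let ε : ℕ → ℝ := fun k => Real.sqrt (4 * (1 / ((k:ℝ) + 1)))
  have hε : Tendsto ε atTop (nhds 0) := by
    have h1 : Tendsto (fun k : ℕ => 4 * (1 / ((k:ℝ) + 1))) atTop (nhds (4 * 0)) :=
      tendsto_one_div_add_atTop_nhds_zero_nat.const_mul _
    rw [mul_zero] at h1
    have h2 := h1.sqrt
    rwa [Real.sqrt_zero] at h2
  have hcau : ∀ k l, k ≤ l → ∀ g, ‖bv (v k) g - bv (v l) g‖ ≤ ε k * wl S g := by
    intro k l hkl g
    refine cocycle_bound hS U hU (fun g => bv (v k) g - bv (v l) g) ?_ (ε k) ?_ g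
    · intro g h
      simp only [hbv, map_sub]
      abel
    · intro s hs
      refine Real.le_sqrt_of_sq_le ?_
      have h1 := Finset.single_le_sum (f := fun s => ‖bv (v k) s - bv (v l) s‖ ^ 2)
        (fun _ _ => sq_nonneg _) hs
      have h2 := hpar (v k) (v l)
      have h3 := (hv k).le
      have h4 := (hv l).le
      have h5 : 1 / ((l:ℝ) + 1) ≤ 1 / ((k:ℝ) + 1) := by gcongr
      linarith
  have hlim : ∀ g, ∃ x, Tendsto (fun k => bv (v k) g) atTop (nhds x) := by
    intro g
    apply cauchySeq_tendsto_of_complete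
    have h0 : Tendsto (fun k => 2 * (ε k * wl S g)) atTop (nhds 0) := by
      have := (hε.mul_const (wl S g : ℝ)).const_mul 2
      simpa using this
    refine cauchySeq_of_le_tendsto_0 (fun k => 2 * (ε k * wl S g)) ?_ h0
    intro p q N hp hq
    have h1 := hcau N p hp g
    have h2 := hcau N q hq g
    rw [dist_eq_norm]
    have : bv (v p) g - bv (v q) g = (bv (v N) g - bv (v q) g) - (bv (v N) g - bv (v p) g) := by abel
    rw [this]
    refine (norm_sub_le _ _).trans ?_
    linarith
  choose b' hb' using hlim
  have hclose : ∀ k g, ‖bv (v k) g - b' g‖ ≤ ε k * wl S g := by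
    intro k g
    have h1 : Tendsto (fun l => ‖bv (v k) g - bv (v l) g‖) atTop (nhds ‖bv (v k) g - b' g‖) :=
      ((hb' g).const_sub _).norm
    exact le_of_tendsto h1 (eventually_atTop.2 ⟨k, fun l hl => hcau k l hl g⟩)
  have hcoc : ∀ g h, b' (g * h) = b' g + U g (b' h) := by
    intro g h
    refine tendsto_nhds_unique (hb' (g * h)) ?_
    simp only [hbv]
    exact (hb' g).add (((U g).continuous.tendsto _).comp (hb' h))
  refine ⟨b', hcoc, ?_, ?_⟩
  · apply harmonic_of_min hS U hU b' hcoc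
    intro ψ
    have h1 : Tendsto (fun k => e (v k)) atTop (nhds (∑ s ∈ S, ‖b' s‖ ^ 2)) :=
      tendsto_finsetSum _ fun s _ => ((hb' s).norm.pow 2)
    have h2 : Tendsto (fun k => e (v k + ψ)) atTop (nhds (∑ s ∈ S, ‖b' s + U s ψ - ψ‖ ^ 2)) := by
      refine tendsto_finsetSum _ fun s _ => ?_
      have h3 : ∀ k, bv (v k + ψ) s = bv (v k) s + U s ψ - ψ := by
        intro k; simp only [bv, map_add]; abel
      simp only [h3]
      exact (((hb' s).add_const _).sub_const _).norm.pow 2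
    have h3 : ∑ s ∈ S, ‖b' s‖ ^ 2 ≤ I := by
      have h4 : Tendsto (fun k : ℕ => I + 1 / ((k:ℝ) + 1)) atTop (nhds (I + 0)) :=
        tendsto_one_div_add_atTop_nhds_zero_nat.const_add _
      rw [add_zero] at h4
      exact le_of_tendsto_of_tendsto' h1 h4 fun k => (hv k).le
    exact h3.trans (ge_of_tendsto' h2 fun k => hIle _)
  · obtain ⟨α, hα, β, hβ⟩ := hlow
    obtain ⟨k, hk⟩ := (hε.eventually (gt_mem_nhds (half_pos hα))).exists
    refine ⟨α / 2, half_pos hα, β + 2 * ‖v k‖, fun g => ?_⟩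
    have h1 := hclose k g
    have h2 := hβ g
    have h3 : b g = b' g + (bv (v k) g - b' g) - U g (v k) + v k := by
      simp only [bv]; abel
    have h4 : ‖b g‖ ≤ ‖b' g‖ + ‖bv (v k) g - b' g‖ + ‖v k‖ + ‖v k‖ := by
      conv_lhs => rw [h3]
      refine (norm_add_le _ _).trans ?_
      gcongr
      refine (norm_sub_le _ _).trans ?_
      rw [hU]
      gcongr
      exact norm_add_le _ _
    have h5 : ε k * wl S g ≤ α / 2 * wl S g := by gcongr
    linarith

end harm
end QIZ

namespace QIZ
open scoped Classical

theorem exists_findim.{w} {G : Type w} [Group G] {S : Finset G}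
    (hS : IsGen S) {n : ℕ} {f : G → Fin n → ℤ} {c C : ℕ} (hf : IsQI S f c C) :
    ∃ (E : Type w) (_ : NormedAddCommGroup E) (_ : InnerProductSpace ℝ E)
      (_ : FiniteDimensional ℝ E)
      (U : G →* (E →L[ℝ] E)) (b : G → E), (∀ g x, ‖U g x‖ = ‖x‖) ∧
      (∀ g h, b (g * h) = b g + U g (b h)) ∧
      ∃ α : ℝ, 0 < α ∧ ∃ β : ℝ, ∀ g, α * wl S g - β ≤ ‖b g‖ := by
  obtain ⟨H, i1, i2, i3, U, b0, hU, hb0, hlow0⟩ := exists_cocycle hS hf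
  obtain ⟨b, hb, hharm, hlow⟩ := exists_harmonic hS U hU b0 hb0 hlow0
  obtain ⟨K, hK1, hK⟩ := doubling hS hf
  obtain ⟨P, hP⟩ := growth_upper hS hf
  obtain ⟨D0, hD0⟩ := kleiner hS hK1 hK hP
  set E := Submodule.span ℝ (Set.range b) with hE
  have hbE : ∀ g, b g ∈ E := fun g => Submodule.subset_span ⟨g, rfl⟩
  have hfin : FiniteDimensional ℝ E := by
    by_contra hcon
    have hrank : (D0 : Cardinal) ≤ Module.rank ℝ E := by
      by_contra h
      push Not at h
      exact hcon (Module.rank_lt_aleph0_iff.1 (h.trans Cardinal.natCast_lt_aleph0))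
    obtain ⟨v, hv⟩ := exists_linearIndependent_of_le_rank hrank
    refine hD0 (fun i x => inner ℝ (b x) (v i : H)) ?_ ?_ ?_
    · rw [Fintype.linearIndependent_iff]
      intro t ht
      refine Fintype.linearIndependent_iff.1 hv t ?_
      have h1 : ∀ x, inner ℝ (b x) ((∑ i, t i • v i : E) : H) = 0 := by
        intro x
        have := congrFun ht x
        simp only [Finset.sum_apply, Pi.smul_apply, smul_eq_mul, Pi.zero_apply] at this
        rw [← this]
        push_cast
        rw [inner_sum]
        simp only [inner_smul_right]
      have h2 : ∀ y ∈ E, inner ℝ y ((∑ i, t i • v i : E) : H) = 0 := by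
        intro y hy
        induction hy using Submodule.span_induction with
        | mem x hx => obtain ⟨g, rfl⟩ := hx; exact h1 g
        | zero => simp
        | add x y _ _ hx hy => rw [inner_add_left, hx, hy, add_zero]
        | smul a x _ hx => rw [real_inner_smul_left, hx, mul_zero]
      have h3 := h2 _ (∑ i, t i • v i : E).2
      exact Subtype.ext (inner_self_eq_zero.1 h3)
    · intro i x
      have h1 : ∀ s, inner ℝ (b (x * s)) (v i : H) - inner ℝ (b x) (v i : H)
          = inner ℝ (U x (b s)) (v i : H) := by
        intro s; rw [hb, inner_add_left]; ring
      simp only [h1]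
      rw [← sum_inner, ← map_sum, hharm, map_zero, inner_zero_left]
    · intro i
      refine ⟨(∑ s ∈ S, ‖b s‖) * ‖(v i : H)‖, fun x => ?_⟩
      refine (abs_real_inner_le_norm _ _).trans ?_
      have h1 := cocycle_bound hS U hU b hb (∑ s ∈ S, ‖b s‖)
        (fun s hs => Finset.single_le_sum (f := fun s => ‖b s‖) (fun _ _ => norm_nonneg _) hs) x
      have h0 : 0 ≤ ∑ s ∈ S, ‖b s‖ := Finset.sum_nonneg fun _ _ => norm_nonneg _
      have h2 : ‖b x‖ ≤ (∑ s ∈ S, ‖b s‖) * (wl S x + 1) := by linarith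
      calc ‖b x‖ * ‖(v i : H)‖ ≤ (∑ s ∈ S, ‖b s‖) * (wl S x + 1) * ‖(v i : H)‖ := by gcongr
        _ = _ := by ring
  have hinv : ∀ g, ∀ y ∈ E, U g y ∈ E := by
    intro g y hy
    induction hy using Submodule.span_induction with
    | mem x hx =>
      obtain ⟨h, rfl⟩ := hx
      have : U g (b h) = b (g * h) - b g := by rw [hb]; abel
      rw [this]
      exact E.sub_mem (hbE _) (hbE _)
    | zero => rw [map_zero]; exact E.zero_mem
    | add x y _ _ hx hy => rw [map_add]; exact E.add_mem hx hy
    | smul a x _ hx => rw [map_smul]; exact E.smul_mem _ hx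
  refine ⟨E, inferInstance, inferInstance, hfin,
    { toFun := fun g => (U g).restrict (hinv g)
      map_one' := ?_
      map_mul' := ?_ }, fun g => ⟨b g, hbE g⟩, ?_, ?_, ?_⟩
  · ext x; simp
  · intro g h; ext x; simp
  · intro g x
    exact hU g x
  · intro g h
    exact Subtype.ext (hb g h)
  · exact hlow

end QIZ

namespace QIZ
open scoped Classical

section rep
variable {G : Type*} [Group G] {E : Type*} [NormedAddCommGroup E] [InnerProductSpace ℝ E]
  [FiniteDimensional ℝ E]

/-- Restriction of a representation to an invariant subspace. -/
def subRep (U : G →* (E →L[ℝ] E)) (W : Submodule ℝ E) (hinv : ∀ g, ∀ w ∈ W, U g w ∈ W) :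
    G →* (W →L[ℝ] W) where
  toFun := fun g => (U g).restrict (hinv g)
  map_one' := by ext x; simp
  map_mul' := by intro g h; ext x; simp

theorem subRep_coe (U : G →* (E →L[ℝ] E)) (W : Submodule ℝ E)
    (hinv : ∀ g, ∀ w ∈ W, U g w ∈ W) (g : G) (w : W) :
    ((subRep U W hinv g w : W) : E) = U g w := rfl

theorem proj_comm (U : G →* (E →L[ℝ] E)) (hU : ∀ g x, ‖U g x‖ = ‖x‖) (W : Submodule ℝ E)
    (hinv : ∀ g, ∀ w ∈ W, U g w ∈ W) (g : G) (v : E) :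
    W.starProjection (U g v) = U g (W.starProjection v) := by
  apply Submodule.eq_starProjection_of_mem_of_inner_eq_zero
  · exact hinv g _ (W.starProjection_apply_mem v)
  · intro w hw
    have h1 : w = U g (U g⁻¹ w) := by
      rw [← mul_apply_eq_comp, ← map_mul]; simp
    rw [h1, ← map_sub, inner_U U hU]
    exact W.starProjection_inner_eq_zero v _ (hinv _ _ hw)

/-- The affine action. -/
def aff (U : G →* (E →L[ℝ] E)) (b : G → E) (hb : ∀ g h, b (g * h) = b g + U g (b h)) :
    G →* Function.End E where
  toFun := fun g w => U g w + b g
  map_one' := by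
    funext w
    rw [cocycle_one U b hb]
    simp
    rfl
  map_mul' := by
    intro g h
    funext w
    change U (g * h) w + b (g * h) = U g (U h w + b h) + b g
    rw [hb, map_mul, map_add, mul_apply_eq_comp]
    abel

end rep

/-- Iterated commutators. -/
def comms {G : Type*} [Group G] (X0 : Set G) : ℕ → Set G
  | 0 => X0
  | j + 1 => {z | ∃ x ∈ comms X0 j, ∃ y ∈ X0, z = x * y * x⁻¹ * y⁻¹}

theorem nilp_fixed.{w} {G : Type*} [Group G] (X0 : Set G) (hX0 : Subgroup.closure X0 = ⊤) (k : ℕ)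
    (d : ℕ) : ∀ (E : Type w) [NormedAddCommGroup E] [InnerProductSpace ℝ E]
    [FiniteDimensional ℝ E] (U : G →* (E →L[ℝ] E)) (b : G → E),
    Module.finrank ℝ E = d →
    (∀ g x, ‖U g x‖ = ‖x‖) → (∀ g h, b (g * h) = b g + U g (b h)) →
    (∀ x ∈ comms X0 k, U x = 1 ∧ b x = 0) → (∀ v, (∀ g, U g v = v) → v = 0) →
    ∃ p, ∀ g, b g = p - U g p := by
  induction d using Nat.strong_induction_on with
  | _ d ih =>
  intro E _ _ _ U b hd hU hb hk hfix
  by_cases hcase : ∃ z, (∀ g, aff U b hb (z * g) = aff U b hb (g * z)) ∧ U z ≠ 1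
  · obtain ⟨z, hz, hz1⟩ := hcase
    have e1 : ∀ g w, U z (U g w) + (b z + U z (b g)) = U g (U z w) + (b g + U g (b z)) := by
      intro g w
      have := congrFun (hz g) w
      change U (z * g) w + b (z * g) = U (g * z) w + b (g * z) at this
      rwa [hb, hb, map_mul, map_mul, mul_apply_eq_comp, mul_apply_eq_comp] at this
    have e2 : ∀ g, b z + U z (b g) = b g + U g (b z) := by
      intro g
      have := e1 g 0
      simpa using this
    have e3 : ∀ g w, U z (U g w) = U g (U z w) := by
      intro g w
      have := e1 g w
      rw [e2 g] at this
      exact add_right_cancel this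
    let W : Submodule ℝ E := LinearMap.ker ((U z : E →ₗ[ℝ] E) - LinearMap.id)
    have hW : ∀ w, w ∈ W ↔ U z w = w := by
      intro w
      simp [W, LinearMap.mem_ker, sub_eq_zero]
    have hinv : ∀ g, ∀ w ∈ W, U g w ∈ W := by
      intro g w hw
      rw [hW] at hw ⊢
      rw [e3, hw]
    have hQ := proj_comm U hU W hinv
    have hQW : ∀ w, w ∈ W → W.starProjection w = w := fun w hw =>
      Submodule.starProjection_eq_self_iff.2 hw
    have hQm : ∀ v, W.starProjection v ∈ W := W.starProjection_apply_mem
    have hlt : Module.finrank ℝ W < d := by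
      rw [← hd]
      apply Submodule.finrank_lt
      intro h
      apply hz1
      ext w
      have : w ∈ W := h ▸ Submodule.mem_top
      simpa using (hW w).1 this
    obtain ⟨p0, hp0⟩ := ih _ hlt W (subRep U W hinv)
      (fun g => ⟨W.starProjection (b g), hQm _⟩) rfl
      (fun g x => hU g x)
      (by
        intro g h
        apply Subtype.ext
        change W.starProjection (b (g * h)) = W.starProjection (b g) + U g (W.starProjection (b h))
        rw [hb, map_add, hQ])
      (by
        intro x hx
        obtain ⟨h1, h2⟩ := hk x hx
        constructor
        · ext w
          rw [subRep_coe, h1]; rfl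
        · apply Subtype.ext
          change W.starProjection (b x) = 0
          rw [h2, map_zero])
      (by
        intro v hv
        apply Subtype.ext
        apply hfix
        intro g
        exact congrArg Subtype.val (hv g))
    have hp0' : ∀ g, W.starProjection (b g) = (p0 : E) - U g p0 := fun g =>
      congrArg Subtype.val (hp0 g)
    let T : E →ₗ[ℝ] E := ((U z : E →ₗ[ℝ] E) - LinearMap.id) + (W.starProjection : E →ₗ[ℝ] E)
    have hT : ∀ v, T v = U z v - v + W.starProjection v := fun v => rfl
    have hQT : ∀ v, W.starProjection (T v) = W.starProjection v := by
      intro v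
      rw [hT, map_add, map_sub, hQ, (hW _).1 (hQm v), hQW _ (hQm v)]
      abel
    have hTi : Function.Injective T := by
      rw [← LinearMap.ker_eq_bot, LinearMap.ker_eq_bot']
      intro v hv
      have h1 : W.starProjection v = 0 := by rw [← hQT, hv, map_zero]
      have h2 : U z v = v := by
        rw [hT, h1, add_zero] at hv
        exact sub_eq_zero.1 hv
      rw [← hQW v ((hW v).2 h2), h1]
    obtain ⟨v, hv⟩ := LinearMap.surjective_of_injective hTi (-(b z - W.starProjection (b z)))
    have hv0 : W.starProjection v = 0 := by
      rw [← hQT, hv, map_neg, map_sub, hQW _ (hQm _), sub_self, neg_zero]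
    rw [hT, hv0, add_zero] at hv
    refine ⟨p0 + v, fun g => ?_⟩
    have key : b g - W.starProjection (b g) - (v - U g v) ∈ W := by
      rw [hW]
      have q1 : U z (W.starProjection (b g)) = W.starProjection (b g) := (hW _).1 (hQm _)
      have q2 : W.starProjection (b z) + W.starProjection (b g)
          = W.starProjection (b g) + U g (W.starProjection (b z)) := by
        have := congrArg W.starProjection (e2 g)
        rwa [map_add, map_add, hQ, hQ, q1] at this
      have q3 := congrArg (U g) hv
      rw [map_sub, map_neg, map_sub] at q3
      have q4 := e2 g
      rw [map_sub, map_sub, map_sub, q1, e3]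
      have r1 : U z v = v - (b z - W.starProjection (b z)) := by
        rw [eq_sub_iff_add_eq, ← sub_eq_zero]
        have := sub_eq_zero.2 hv
        rw [← this]; abel
      have r3 : U g (U z v) = U g v - (U g (b z) - U g (W.starProjection (b z))) := by
        rw [r1, map_sub, map_sub]
      have r4 : U z (b g) = b g + U g (b z) - b z := by rw [← q4]; abel
      have r5 : U g (W.starProjection (b z)) = W.starProjection (b z) := by
        have : W.starProjection (b g) + U g (W.starProjection (b z))
          = W.starProjection (b g) + W.starProjection (b z) := by rw [← q2]; abel
        exact add_left_cancel this
      rw [r3, r4, r5, r1]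
      abel
    have key2 := hQW _ key
    rw [map_sub, map_sub, map_sub, hQW _ (hQm _), hQ, hv0, map_zero] at key2
    have key3 : b g - W.starProjection (b g) - (v - U g v) = 0 := by
      rw [← key2]; abel
    rw [hp0'] at key3
    rw [map_add, ← sub_eq_zero, ← key3]
    abel
  · push Not at hcase
    have hN : ∀ g, aff U b hb g = 1 ↔ U g = 1 ∧ b g = 0 := by
      intro g
      constructor
      · intro h
        have h0 := congrFun h 0
        change U g 0 + b g = 0 at h0
        rw [map_zero, zero_add] at h0
        refine ⟨?_, h0⟩
        ext w
        have h1 := congrFun h w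
        change U g w + b g = w at h1
        rwa [h0, add_zero] at h1
      · rintro ⟨h1, h2⟩
        funext w
        change U g w + b g = w
        rw [h1, h2, add_zero]; rfl
    have hcent : ∀ z, (∀ g, aff U b hb (z * g) = aff U b hb (g * z)) → aff U b hb z = 1 := by
      intro z hz
      have hz1 := hcase z hz
      rw [hN]
      refine ⟨hz1, ?_⟩
      apply hfix
      intro g
      have := congrFun (hz g) 0
      change U (z * g) 0 + b (z * g) = U (g * z) 0 + b (g * z) at this
      rw [map_zero, map_zero, zero_add, zero_add, hb, hb, hz1] at this
      have h2 : b g + b z = b g + U g (b z) := by rw [← this]; simp [add_comm]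
      exact (add_left_cancel h2).symm
    have hdesc : ∀ j, (∀ x ∈ comms X0 (j + 1), aff U b hb x = 1) →
        ∀ x ∈ comms X0 j, aff U b hb x = 1 := by
      intro j hj x hx
      apply hcent
      have hc : ∀ g, Commute ((aff U b hb).toHomUnits x) ((aff U b hb).toHomUnits g) := by
        intro g
        have hg : g ∈ Subgroup.closure X0 := by rw [hX0]; trivial
        induction hg using Subgroup.closure_induction with
        | mem y hy =>
          have h1 := hj (x * y * x⁻¹ * y⁻¹) ⟨x, hx, y, hy, rfl⟩
          have h2 : x * y = x * y * x⁻¹ * y⁻¹ * (y * x) := by group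
          apply Units.ext
          change aff U b hb x * aff U b hb y = aff U b hb y * aff U b hb x
          rw [← map_mul, ← map_mul, h2, map_mul, h1, one_mul]
        | one => rw [map_one]; exact Commute.one_right _
        | mul a c _ _ ha hc => rw [map_mul]; exact ha.mul_right hc
        | inv a _ ha => rw [map_inv]; exact ha.inv_right
      intro g
      rw [map_mul, map_mul]
      exact congrArg Units.val (hc g)
    have h0 : ∀ j, ∀ x ∈ comms X0 (k - j), aff U b hb x = 1 := by
      intro j
      induction j with
      | zero => exact fun x hx => (hN x).2 (hk x hx)
      | succ j ihj =>
        by_cases hjk : j < k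
        · have : k - j = (k - (j + 1)) + 1 := by omega
          rw [this] at ihj
          exact hdesc _ ihj
        · have : k - (j + 1) = k - j := by omega
          rw [this]; exact ihj
    have h00 := h0 k
    rw [Nat.sub_self] at h00
    refine ⟨0, fun g => ?_⟩
    have hker : Subgroup.closure X0 ≤ (aff U b hb).ker := by
      rw [Subgroup.closure_le]
      intro x hx
      exact h00 x hx
    have : g ∈ (aff U b hb).ker := hker (hX0 ▸ Subgroup.mem_top g)
    rw [((hN g).1 this).2]; simp

end QIZ

namespace QIZ
open scoped Classical

section bieb
variable {G : Type*} [Group G] {E : Type*} [NormedAddCommGroup E] [InnerProductSpace ℝ E]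

theorem opnorm_le (U : G →* (E →L[ℝ] E)) (hU : ∀ g x, ‖U g x‖ = ‖x‖) (g : G) : ‖U g‖ ≤ 1 :=
  ContinuousLinearMap.opNorm_le_bound _ zero_le_one fun x => by rw [hU, one_mul]

theorem opnorm_mul_le (U : G →* (E →L[ℝ] E)) (hU : ∀ g x, ‖U g x‖ = ‖x‖) (g : G)
    (A : E →L[ℝ] E) : ‖U g * A‖ ≤ ‖A‖ := by
  refine (norm_mul_le _ _).trans ?_
  have := opnorm_le U hU g
  have := norm_nonneg A
  nlinarith

theorem opnorm_mul_le' (U : G →* (E →L[ℝ] E)) (hU : ∀ g x, ‖U g x‖ = ‖x‖) (g : G)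
    (A : E →L[ℝ] E) : ‖A * U g‖ ≤ ‖A‖ := by
  refine (norm_mul_le _ _).trans ?_
  have := opnorm_le U hU g
  have := norm_nonneg A
  nlinarith

theorem comm_rot (U : G →* (E →L[ℝ] E)) (hU : ∀ g x, ‖U g x‖ = ‖x‖) (x y : G) :
    ‖U (x * y * x⁻¹ * y⁻¹) - 1‖ ≤ 2 * ‖U x - 1‖ * ‖U y - 1‖ := by
  have h1 : U (x * y * x⁻¹ * y⁻¹) - 1
      = ((U x - 1) * (U y - 1) - (U y - 1) * (U x - 1)) * U (x⁻¹ * y⁻¹) := by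
    have e : (U x - 1) * (U y - 1) - (U y - 1) * (U x - 1) = U (x * y) - U (y * x) := by
      rw [map_mul, map_mul]; noncomm_ring
    rw [e, sub_mul, ← map_mul, ← map_mul]
    have e2 : y * x * (x⁻¹ * y⁻¹) = 1 := by group
    rw [e2, map_one, ← mul_assoc]
  rw [h1]
  refine (opnorm_mul_le' U hU _ _).trans ((norm_sub_le _ _).trans ?_)
  have := norm_mul_le (U x - 1) (U y - 1)
  have := norm_mul_le (U y - 1) (U x - 1)
  nlinarith

theorem comm_trans (U : G →* (E →L[ℝ] E)) (hU : ∀ g x, ‖U g x‖ = ‖x‖) (b : G → E)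
    (hb : ∀ g h, b (g * h) = b g + U g (b h)) (x y : G) :
    ‖b (x * y * x⁻¹ * y⁻¹)‖ ≤ ‖U x - 1‖ * ‖b y‖ + ‖U y - 1‖ * ‖b x‖
      + ‖U (x * y * x⁻¹ * y⁻¹) - 1‖ * (‖b x‖ + ‖b y‖) := by
  set c := x * y * x⁻¹ * y⁻¹ with hc
  have h0 : x * y = c * (y * x) := by rw [hc]; group
  have h1 : b c = (U x - 1) (b y) - (U y - 1) (b x) - (U c - 1) (b (y * x)) := by
    have e : b (x * y) = b c + U c (b (y * x)) := by rw [h0, hb]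
    have e2 : b c = b (x * y) - U c (b (y * x)) := by rw [e]; abel
    have e3 : ∀ (g : G) v, (U g - 1) v = U g v - v := fun g v => rfl
    rw [e2, e3, e3, e3, hb x y]
    have e4 := hb y x
    have e5 : b y = b (y * x) - U y (b x) := by rw [e4]; abel
    calc b x + U x (b y) - U c (b (y * x))
        = b x + U x (b y) - (b y - (b (y * x) - U y (b x))) - U c (b (y * x)) := by
          rw [← e5]; abel
      _ = _ := by abel
  have h2 : ‖b (y * x)‖ ≤ ‖b x‖ + ‖b y‖ := by
    rw [hb]
    refine (norm_add_le _ _).trans ?_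
    rw [hU]; linarith
  rw [h1]
  refine (norm_sub_le _ _).trans ?_
  refine add_le_add ((norm_sub_le _ _).trans (add_le_add ?_ ?_)) ?_
  · exact ContinuousLinearMap.le_opNorm _ _
  · exact ContinuousLinearMap.le_opNorm _ _
  · refine (ContinuousLinearMap.le_opNorm _ _).trans ?_
    gcongr

theorem comms_bound (U : G →* (E →L[ℝ] E)) (hU : ∀ g x, ‖U g x‖ = ‖x‖) (b : G → E)
    (hb : ∀ g h, b (g * h) = b g + U g (b h)) (X0 : Set G) (L : ℝ) (hL0 : 0 ≤ L)
    (hX : ∀ x ∈ X0, ‖U x - 1‖ ≤ 1 / 8) (hL : ∀ x ∈ X0, ‖b x‖ ≤ L) (j : ℕ) :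
    ∀ x ∈ comms X0 j, ‖U x - 1‖ ≤ (1 / 2) ^ j ∧ ‖U x - 1‖ ≤ 1 / 8 * (1 / 2) ^ j ∧
      ‖b x‖ ≤ L * (1 / 2) ^ j := by
  induction j with
  | zero =>
    intro x hx
    have h1 := hX x hx
    have h2 := hL x hx
    simp only [pow_zero, mul_one]
    exact ⟨by linarith, h1, h2⟩
  | succ j ih =>
    rintro z ⟨x, hx, y, hy, rfl⟩
    obtain ⟨-, h1, h2⟩ := ih x hx
    have h3 := hX y hy
    have h4 := hL y hy
    have hp : (0 : ℝ) < (1 / 2) ^ j := by positivity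
    have r := comm_rot U hU x y
    have t := comm_trans U hU b hb x y
    set a := ‖U (x * y * x⁻¹ * y⁻¹) - 1‖
    set q : ℝ := (1 / 2) ^ j with hq
    have hq1 : q ≤ 1 := pow_le_one₀ (by norm_num) (by norm_num)
    have n1 := norm_nonneg (U x - 1)
    have n2 := norm_nonneg (U y - 1)
    have n3 := norm_nonneg (b x)
    have n4 := norm_nonneg (b y)
    have r2 : ‖U x - 1‖ * ‖U y - 1‖ ≤ 1 / 8 * q * (1 / 8) := mul_le_mul h1 h3 n2 (by positivity)
    have r3 : a ≤ 1 / 32 * q := by linarith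
    have t1 : ‖U x - 1‖ * ‖b y‖ ≤ 1 / 8 * q * L := mul_le_mul h1 h4 n4 (by positivity)
    have t2 : ‖U y - 1‖ * ‖b x‖ ≤ 1 / 8 * (L * q) := mul_le_mul h3 h2 n3 (by positivity)
    have hLq : L * q ≤ L := by nlinarith
    have t3 : a * (‖b x‖ + ‖b y‖) ≤ 1 / 32 * q * (2 * L) :=
      mul_le_mul r3 (by linarith) (by positivity) (by positivity)
    have hLq0 : 0 ≤ L * q := by positivity
    rw [pow_succ, ← hq]
    refine ⟨by linarith, by linarith, by nlinarith⟩

theorem exists_comms_trivial (U : G →* (E →L[ℝ] E)) (hU : ∀ g x, ‖U g x‖ = ‖x‖) (b : G → E)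
    (hb : ∀ g h, b (g * h) = b g + U g (b h)) (X0 : Set G) (L : ℝ) (hL0 : 0 ≤ L)
    (hX : ∀ x ∈ X0, ‖U x - 1‖ ≤ 1 / 8) (hL : ∀ x ∈ X0, ‖b x‖ ≤ L)
    (hfin : ∀ R : ℝ, {g | ‖b g‖ ≤ R}.Finite) :
    ∃ k, ∀ x ∈ comms X0 k, U x = 1 ∧ b x = 0 := by
  have hδ : ∃ δ : ℝ, 0 < δ ∧ ∀ g, ‖b g‖ ≤ L → ‖U g - 1‖ + ‖b g‖ ≠ 0 → δ ≤ ‖U g - 1‖ + ‖b g‖ := by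
    by_cases hne : ((hfin L).toFinset.filter (fun g => ‖U g - 1‖ + ‖b g‖ ≠ 0)).Nonempty
    · obtain ⟨g0, hg0, hmin⟩ := Finset.exists_min_image _ (fun g => ‖U g - 1‖ + ‖b g‖) hne
      have := (Finset.mem_filter.1 hg0).2
      refine ⟨_, lt_of_le_of_ne (by positivity) this.symm, fun g hg hg' => hmin g ?_⟩
      rw [Finset.mem_filter]
      exact ⟨(hfin L).mem_toFinset.2 hg, hg'⟩
    · refine ⟨1, one_pos, fun g hg hg' => (hne ⟨g, ?_⟩).elim⟩
      rw [Finset.mem_filter]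
      exact ⟨(hfin L).mem_toFinset.2 hg, hg'⟩
  obtain ⟨δ, hδ0, hδ⟩ := hδ
  obtain ⟨k, hk⟩ := exists_pow_lt_of_lt_one (show 0 < δ / (1 + L) by positivity)
    (show (1 / 2 : ℝ) < 1 by norm_num)
  refine ⟨k, fun x hx => ?_⟩
  obtain ⟨h1, -, h2⟩ := comms_bound U hU b hb X0 L hL0 hX hL k x hx
  have hq1 : (1 / 2 : ℝ) ^ k ≤ 1 := pow_le_one₀ (by norm_num) (by norm_num)
  rw [lt_div_iff₀ (by positivity)] at hk
  have h3 : ‖U x - 1‖ + ‖b x‖ = 0 := by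
    by_contra h
    have := hδ x (by nlinarith) h
    nlinarith
  have n1 := norm_nonneg (U x - 1)
  have n2 := norm_nonneg (b x)
  exact ⟨sub_eq_zero.1 (norm_eq_zero.1 (by linarith)), norm_eq_zero.1 (by linarith)⟩

variable [FiniteDimensional ℝ E]

theorem exists_opnet (U : G →* (E →L[ℝ] E)) (hU : ∀ g x, ‖U g x‖ = ‖x‖) :
    ∃ T : Finset G, 1 ∈ T ∧ ∀ g, ∃ t ∈ T, ‖U (t⁻¹ * g) - 1‖ ≤ 1 / 8 := by
  have hfd : FiniteDimensional ℝ (E →L[ℝ] E) := inferInstance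
  have hpr : ProperSpace (E →L[ℝ] E) := FiniteDimensional.proper ℝ _
  have htb : TotallyBounded (Set.range U) := by
    refine TotallyBounded.subset ?_ (isCompact_closedBall (0 : E →L[ℝ] E) 1).totallyBounded
    rintro _ ⟨g, rfl⟩
    simpa using opnorm_le U hU g
  obtain ⟨t, ht, htf, hcov⟩ := Metric.finite_approx_of_totallyBounded htb (1 / 8) (by norm_num)
  have ht2 : ∀ A, A ∈ t → ∃ g, U g = A := fun A hA => ht hA
  choose! σ hσ using ht2
  refine ⟨insert 1 (htf.toFinset.image σ), Finset.mem_insert_self _ _, fun g => ?_⟩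
  obtain ⟨A, hA, hgA⟩ := Set.mem_iUnion₂.1 (hcov ⟨g, rfl⟩)
  refine ⟨σ A, Finset.mem_insert_of_mem (Finset.mem_image_of_mem _ (htf.mem_toFinset.2 hA)), ?_⟩
  have h1 : U ((σ A)⁻¹ * g) - 1 = U (σ A)⁻¹ * (U g - U (σ A)) := by
    rw [mul_sub, ← map_mul, ← map_mul, inv_mul_cancel, map_one]
  rw [h1]
  refine (opnorm_mul_le U hU _ _).trans ?_
  rw [hσ A hA, ← dist_eq_norm]
  exact (Metric.mem_ball.1 hgA).le

theorem exists_sub {S : Finset G} (hS : IsGen S) (U : G →* (E →L[ℝ] E))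
    (hU : ∀ g x, ‖U g x‖ = ‖x‖) :
    ∃ X0 : Finset G, (∀ x ∈ X0, ‖U x - 1‖ ≤ 1 / 8) ∧
      (Subgroup.closure (X0 : Set G)).FiniteIndex := by
  obtain ⟨T, hT1, hT⟩ := exists_opnet U hU
  let X0 : Finset G := ((T ×ˢ T ×ˢ S).image (fun p => p.1⁻¹ * (p.2.2 * p.2.1))).filter
    (fun x => ‖U x - 1‖ ≤ 1 / 8)
  refine ⟨X0, fun x hx => (Finset.mem_filter.1 hx).2, ?_⟩
  set H := Subgroup.closure (X0 : Set G) with hH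
  have hcov : ∀ l : List G, (∀ x ∈ l, x ∈ S) → ∃ t ∈ T, t⁻¹ * l.prod ∈ H := by
    intro l
    induction l with
    | nil => exact fun _ => ⟨1, hT1, by simp⟩
    | cons s l ih =>
      intro hl
      obtain ⟨t, ht, htl⟩ := ih fun x hx => hl x (List.mem_cons_of_mem _ hx)
      obtain ⟨t', ht', hx⟩ := hT (s * t)
      refine ⟨t', ht', ?_⟩
      have hxm : t'⁻¹ * (s * t) ∈ H := by
        apply Subgroup.subset_closure
        refine Finset.mem_coe.2 (Finset.mem_filter.2 ⟨Finset.mem_image.2 ⟨(t', t, s), ?_, rfl⟩, hx⟩)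
        simp [ht, ht', hl s]
      have : t'⁻¹ * (s :: l).prod = t'⁻¹ * (s * t) * (t⁻¹ * l.prod) := by
        rw [List.prod_cons]; group
      rw [this]
      exact H.mul_mem hxm htl
  have hfin : Finite (G ⧸ H) := by
    refine Finite.of_surjective (fun t : T => (QuotientGroup.mk (t : G) : G ⧸ H)) ?_
    intro q
    obtain ⟨g, rfl⟩ := QuotientGroup.mk_surjective q
    obtain ⟨l, hl, rfl⟩ := exists_list hS g
    obtain ⟨t, ht, h⟩ := hcov l hl
    exact ⟨⟨t, ht⟩, QuotientGroup.eq.2 h⟩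
  exact Subgroup.finiteIndex_of_finite_quotient

end bieb

theorem exists_tau {G : Type*} [Group G] {E : Type*} [NormedAddCommGroup E]
    [InnerProductSpace ℝ E] [FiniteDimensional ℝ E] (X0 : Set G) (hX0 : Subgroup.closure X0 = ⊤)
    (k : ℕ) (U : G →* (E →L[ℝ] E)) (hU : ∀ g x, ‖U g x‖ = ‖x‖) (b : G → E)
    (hb : ∀ g h, b (g * h) = b g + U g (b h))
    (hk : ∀ x ∈ comms X0 k, U x = 1 ∧ b x = 0)
    (hfin : ∀ R : ℝ, {g | ‖b g‖ ≤ R}.Finite) :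
    ∃ τ : G →* Multiplicative E, Finite τ.ker := by
  let F : Submodule ℝ E :=
    { carrier := {v | ∀ g, U g v = v}
      add_mem' := by
        intro v w hv hw g
        rw [map_add, hv g, hw g]
      zero_mem' := by intro g; rw [map_zero]
      smul_mem' := by
        intro a v hv g
        rw [map_smul, hv g] }
  have hF : ∀ v, v ∈ F ↔ ∀ g, U g v = v := fun v => Iff.rfl
  have hinvF : ∀ g, ∀ w ∈ F, U g w ∈ F := by
    intro g w hw
    rw [(hF w).1 hw g]; exact hw
  have hQ := proj_comm U hU F hinvF
  have hQm : ∀ v, F.starProjection v ∈ F := F.starProjection_apply_mem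
  have hinv : ∀ g, ∀ w ∈ Fᗮ, U g w ∈ Fᗮ := by
    intro g w hw u hu
    have : u = U g u := ((hF u).1 hu g).symm
    rw [this, inner_U U hU]
    exact hw u hu
  have hQ2 := proj_comm U hU Fᗮ hinv
  obtain ⟨p, hp⟩ := nilp_fixed X0 hX0 k _ Fᗮ (subRep U Fᗮ hinv)
    (fun g => ⟨Fᗮ.starProjection (b g), Fᗮ.starProjection_apply_mem _⟩) rfl
    (fun g x => hU g x)
    (by
      intro g h
      apply Subtype.ext
      change Fᗮ.starProjection (b (g * h))
        = Fᗮ.starProjection (b g) + U g (Fᗮ.starProjection (b h))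
      rw [hb, map_add, hQ2])
    (by
      intro x hx
      obtain ⟨h1, h2⟩ := hk x hx
      constructor
      · ext w
        rw [subRep_coe, h1]; rfl
      · apply Subtype.ext
        change Fᗮ.starProjection (b x) = 0
        rw [h2, map_zero])
    (by
      intro v hv
      have h1 : (v : E) ∈ F := fun g => congrArg Subtype.val (hv g)
      have h2 := v.2 v h1
      exact Subtype.ext (inner_self_eq_zero.1 h2))
  have hp' : ∀ g, Fᗮ.starProjection (b g) = (p : E) - U g p := fun g =>
    congrArg Subtype.val (hp g)
  let τ : G →* Multiplicative E :=
    { toFun := fun g => Multiplicative.ofAdd (F.starProjection (b g))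
      map_one' := by rw [cocycle_one U b hb, map_zero]; rfl
      map_mul' := by
        intro g h
        rw [hb, map_add, hQ, (hF _).1 (hQm (b h)) g]; rfl }
  refine ⟨τ, ?_⟩
  have hsub : ((τ.ker : Set G)) ⊆ {g | ‖b g‖ ≤ 2 * ‖p‖} := by
    intro g hg
    have h0 : F.starProjection (b g) = 0 := hg
    have h1 := F.starProjection_add_starProjection_orthogonal (b g)
    rw [h0, zero_add, hp'] at h1
    change ‖b g‖ ≤ _
    rw [← h1]
    refine (norm_sub_le _ _).trans ?_
    rw [hU]
    simp only [Submodule.coe_norm]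
    linarith
  exact ((hfin _).subset hsub).to_subtype

theorem exists_tau_final.{w} {G : Type w} [Group G] {S : Finset G}
    (hS : IsGen S) {n : ℕ} {f : G → Fin n → ℤ} {c C : ℕ} (hf : IsQI S f c C) :
    ∃ H : Subgroup G, H.FiniteIndex ∧ ∃ (E : Type w) (_ : AddCommGroup E) (_ : Module ℝ E),
      ∃ τ : H →* Multiplicative E, Finite τ.ker := by
  obtain ⟨E, i1, i2, i3, U, b, hU, hb, α, hα, β, hlow⟩ := exists_findim hS hf
  have hfin : ∀ R : ℝ, {g | ‖b g‖ ≤ R}.Finite := by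
    intro R
    refine (ball S ⌈(R + β) / α⌉₊).finite_toSet.subset ?_
    intro g hg
    have hg' : ‖b g‖ ≤ R := hg
    refine Finset.mem_coe.2 ((mem_ball hS).2 ?_)
    have h1 : (wl S g : ℝ) ≤ (R + β) / α := by
      rw [le_div_iff₀ hα]
      have := hlow g
      linarith
    exact_mod_cast h1.trans (Nat.le_ceil _)
  obtain ⟨X0, hX, hfi⟩ := exists_sub hS U hU
  set H := Subgroup.closure (X0 : Set G) with hH
  refine ⟨H, hfi, E, inferInstance, inferInstance, ?_⟩
  let X1 : Set H := Subtype.val ⁻¹' (X0 : Set G)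
  have hX1 : Subgroup.closure X1 = ⊤ := Subgroup.closure_closure_coe_preimage
  let U' : H →* (E →L[ℝ] E) := U.comp H.subtype
  let b' : H → E := fun h => b h
  have hU' : ∀ g x, ‖U' g x‖ = ‖x‖ := fun g x => hU g x
  have hb' : ∀ g h, b' (g * h) = b' g + U' g (b' h) := fun g h => hb g h
  have hfin' : ∀ R : ℝ, {g | ‖b' g‖ ≤ R}.Finite := fun R =>
    (hfin R).preimage Subtype.val_injective.injOn
  obtain ⟨k, hk⟩ := exists_comms_trivial U' hU' b' hb' X1 (∑ x ∈ X0, ‖b x‖)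
    (Finset.sum_nonneg fun _ _ => norm_nonneg _) (fun x hx => hX x hx)
    (fun x hx => Finset.single_le_sum (f := fun x => ‖b x‖) (fun _ _ => norm_nonneg _) hx) hfin'
  exact exists_tau X1 hX1 k U' hU' b' hb' hk hfin'

end QIZ

namespace QIZ
open scoped Classical

theorem add_split {A : Type*} [AddCommGroup A] [Module.Finite ℤ A] {E : Type*} [AddCommGroup E]
    [Module ℝ E] (θ : A →+ E) :
    ∃ (m : ℕ) (j : (Fin m → ℤ) →+ A), Function.Injective j ∧
      ∀ a, ∃ x, θ (a - j x) = 0 := by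
  let θ' : A →ₗ[ℤ] E := θ.toIntLinearMap
  let M := LinearMap.range θ'
  have htf : Module.IsTorsionFree ℤ E := by
    have : IsAddTorsionFree E := IsAddTorsionFree.of_isTorsionFree ℝ E
    infer_instance
  have hMf : Module.Finite ℤ M := inferInstance
  have hMfree : Module.Free ℤ M := inferInstance
  let bs := Module.finBasis ℤ M
  obtain ⟨σ, hσ⟩ := Module.projective_lifting_property θ'.rangeRestrict LinearMap.id
    θ'.surjective_rangeRestrict
  have hσ' : ∀ x, θ'.rangeRestrict (σ x) = x := fun x => LinearMap.congr_fun hσ x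
  refine ⟨_, (σ.comp bs.equivFun.symm.toLinearMap).toAddMonoidHom, ?_, ?_⟩
  · intro x y hxy
    have h1 : σ (bs.equivFun.symm x) = σ (bs.equivFun.symm y) := hxy
    have h2 := congrArg θ'.rangeRestrict h1
    rw [hσ', hσ'] at h2
    exact bs.equivFun.symm.injective h2
  · intro a
    refine ⟨bs.equivFun (θ'.rangeRestrict a), ?_⟩
    have h1 : θ'.rangeRestrict (a - σ (bs.equivFun.symm (bs.equivFun (θ'.rangeRestrict a)))) = 0 := by
      rw [map_sub, hσ', LinearEquiv.symm_apply_apply, sub_self]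
    exact congrArg Subtype.val h1

theorem mul_split {A : Type*} [CommGroup A] [Group.FG A] {E : Type*} [AddCommGroup E]
    [Module ℝ E] (θ : A →* Multiplicative E) (hfin : Finite θ.ker) :
    ∃ (m : ℕ) (R : Subgroup A), R.FiniteIndex ∧ Nonempty (R ≃* Multiplicative (Fin m → ℤ)) := by
  have : Module.Finite ℤ (Additive A) := by
    rw [Module.Finite.iff_addGroup_fg]
    infer_instance
  obtain ⟨m, j, hj, hcov⟩ := add_split (MonoidHom.toAdditiveLeft θ)
  let J : Multiplicative (Fin m → ℤ) →* A := AddMonoidHom.toMultiplicativeLeft j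
  have hJ : Function.Injective J := hj
  refine ⟨m, J.range, ?_, ⟨(MonoidHom.ofInjective hJ).symm⟩⟩
  have hfq : Finite (A ⧸ J.range) := by
    refine Finite.of_surjective (fun t : θ.ker => (QuotientGroup.mk (t : A) : A ⧸ J.range)) ?_
    intro q
    obtain ⟨a, rfl⟩ := QuotientGroup.mk_surjective q
    obtain ⟨x, hx⟩ := hcov (Additive.ofMul a)
    have hx' : θ (a / J (Multiplicative.ofAdd x)) = 1 := hx
    refine ⟨⟨a / J (Multiplicative.ofAdd x), hx'⟩, QuotientGroup.eq.2 ?_⟩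
    refine ⟨Multiplicative.ofAdd x, ?_⟩
    simp
  exact Subgroup.finiteIndex_of_finite_quotient

theorem mul_split' {A : Type*} [i : Group A] [hfg : Group.FG A] (hc : ∀ x y : A, x * y = y * x)
    {E : Type*} [AddCommGroup E]
    [Module ℝ E] (θ : A →* Multiplicative E) (hfin : Finite θ.ker) :
    ∃ (m : ℕ) (R : Subgroup A), R.FiniteIndex ∧ Nonempty (R ≃* Multiplicative (Fin m → ℤ)) :=
  @mul_split A { i with mul_comm := hc } hfg E _ _ θ hfin

theorem exists_lattice {G : Type*} [Group G] {S : Finset G}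
    (hS : IsGen S) {n : ℕ} {f : G → Fin n → ℤ} {c C : ℕ} (hf : IsQI S f c C) :
    ∃ (m : ℕ) (Λ : Subgroup G), Λ.FiniteIndex ∧ Nonempty (Λ ≃* Multiplicative (Fin m → ℤ)) := by
  obtain ⟨H, hH, E, i1, i2, τ, hτ⟩ := exists_tau_final hS hf
  have hG : Group.FG G := ⟨⟨S, hS.gen⟩⟩
  have hHfg : Group.FG H := inferInstance
  have hcomm : Finite (commutatorSet H) := by
    have : commutatorSet H ⊆ (τ.ker : Set H) := by
      rintro _ ⟨x, y, rfl⟩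
      rw [SetLike.mem_coe, MonoidHom.mem_ker, map_commutatorElement]
      exact commutatorElement_eq_one_iff_mul_comm.2 (mul_comm _ _)
    exact (Set.toFinite (τ.ker : Set H)).subset this
  have hZ : (Subgroup.center H).FiniteIndex := inferInstance
  have hZfg : Group.FG (Subgroup.center H) := inferInstance
  let θ : Subgroup.center H →* Multiplicative E := τ.comp (Subgroup.center H).subtype
  have hθ : Finite θ.ker := by
    have hinj : Function.Injective
        (fun x : θ.ker => (⟨((x : Subgroup.center H) : H), x.2⟩ : τ.ker)) := by
      intro x y hxy
      apply Subtype.ext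
      apply Subtype.ext
      exact congrArg (fun z : τ.ker => (z : H)) hxy
    exact Finite.of_injective _ hinj
  obtain ⟨m, R, hR, ⟨e⟩⟩ := mul_split' (fun x y => Subtype.ext (Subgroup.mem_center_iff.1 y.2 x)) θ hθ
  refine ⟨m, (R.map (Subgroup.center H).subtype).map H.subtype, ⟨?_⟩, ⟨?_⟩⟩
  · rw [Subgroup.index_map_subtype, Subgroup.index_map_subtype]
    exact mul_ne_zero (mul_ne_zero hR.index_ne_zero hZ.index_ne_zero) hH.index_ne_zero
  · exact ((Subgroup.equivMapOfInjective _ _ H.subtype_injective).symm.trans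
      (Subgroup.equivMapOfInjective _ _ (Subgroup.center H).subtype_injective).symm).trans e

end QIZ

namespace QIZ
open scoped Classical

theorem pow_compare {m n P : ℕ} (h : ∀ r : ℕ, (r + 1) ^ m ≤ P * (r + 1) ^ n) : m ≤ n := by
  by_contra hlt
  push Not at hlt
  have h1 := h P
  have h2 : (P + 1) ^ (n + 1) ≤ (P + 1) ^ m := Nat.pow_le_pow_right (by omega) hlt
  have h3 : (P + 1) ^ (n + 1) = (P + 1) * (P + 1) ^ n := by ring
  have h4 : 0 < (P + 1) ^ n := by positivity
  nlinarith

section rank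
variable {G : Type*} [Group G] {S : Finset G} {m : ℕ}

theorem wl_lattice (hS : IsGen S) (j : (Fin m → ℤ) → G)
    (hj : ∀ x y, j (x + y) = j x * j y) :
    ∃ K : ℕ, ∀ r, ∀ x ∈ box (0 : Fin m → ℤ) r, wl S (j x) ≤ K * r := by
  have h0 : j 0 = 1 := by
    have := hj 0 0
    rw [add_zero] at this
    exact left_eq_mul.1 this
  have hneg : ∀ x, j (-x) = (j x)⁻¹ := by
    intro x
    rw [eq_inv_iff_mul_eq_one, ← hj, neg_add_cancel, h0]
  have hadd : ∀ x y, wl S (j (x + y)) ≤ wl S (j x) + wl S (j y) := by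
    intro x y; rw [hj]; exact wl_mul hS _ _
  have hnat : ∀ (k : ℕ) x, wl S (j ((k : ℤ) • x)) ≤ k * wl S (j x) := by
    intro k x
    induction k with
    | zero => simp [h0, wl_one]
    | succ k ih =>
      have e : ((k + 1 : ℕ) : ℤ) • x = (k : ℤ) • x + x := by
        push_cast; rw [add_smul, one_smul]
      rw [e]
      refine (hadd _ _).trans ?_
      rw [Nat.succ_mul]
      omega
  have hzmul : ∀ (k : ℤ) x, wl S (j (k • x)) ≤ k.natAbs * wl S (j x) := by
    intro k x
    rcases Int.natAbs_eq k with h | h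
    · conv_lhs => rw [h]
      exact hnat _ _
    · conv_lhs => rw [h, neg_smul, hneg, wl_inv hS]
      exact hnat _ _
  have hsum : ∀ (s : Finset (Fin m)) (v : Fin m → (Fin m → ℤ)),
      wl S (j (∑ i ∈ s, v i)) ≤ ∑ i ∈ s, wl S (j (v i)) := by
    intro s v
    induction s using Finset.induction_on with
    | empty => simp [h0, wl_one]
    | insert a s ha ih =>
      rw [Finset.sum_insert ha, Finset.sum_insert ha]
      exact (hadd _ _).trans (by omega)
  refine ⟨∑ i, wl S (j (Pi.single i 1)), fun r x hx => ?_⟩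
  rw [mem_box] at hx
  have e : x = ∑ i, (x i) • (Pi.single i (1 : ℤ) : Fin m → ℤ) := by
    funext k
    simp [Finset.sum_apply, Pi.single_apply]
  conv_lhs => rw [e]
  refine (hsum _ _).trans ?_
  rw [Finset.sum_mul]
  refine Finset.sum_le_sum fun i _ => (hzmul _ _).trans ?_
  rw [mul_comm]
  have := hx i
  simp only [Pi.zero_apply, sub_zero] at this
  exact Nat.mul_le_mul_left _ this

theorem rank_le (hS : IsGen S) {n : ℕ} {f : G → Fin n → ℤ} {c C : ℕ} (hf : IsQI S f c C)
    (j : (Fin m → ℤ) → G) (hj : ∀ x y, j (x + y) = j x * j y) (hinj : Function.Injective j) :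
    m ≤ n := by
  obtain ⟨K, hK⟩ := wl_lattice hS j hj
  obtain ⟨P, hP⟩ := growth_upper hS hf
  apply pow_compare (P := P * (K + 1) ^ n)
  intro r
  have h1 : (box (0 : Fin m → ℤ) r).card ≤ (ball S (K * r)).card :=
    Finset.card_le_card_of_injOn j (fun x hx => (mem_ball hS).2 (hK r x hx)) hinj.injOn
  rw [card_box] at h1
  calc (r + 1) ^ m ≤ (2 * r + 1) ^ m := Nat.pow_le_pow_left (by omega) _
    _ ≤ _ := h1
    _ ≤ _ := hP _
    _ ≤ P * ((K + 1) * (r + 1)) ^ n := by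
      refine Nat.mul_le_mul_left _ (Nat.pow_le_pow_left ?_ _)
      nlinarith
    _ = _ := by rw [mul_pow]; ring

theorem rank_ge (hS : IsGen S) {n : ℕ} {f : G → Fin n → ℤ} {c C : ℕ} (hf : IsQI S f c C)
    (j : (Fin m → ℤ) → G) (hj : ∀ x y, j (x + y) = j x * j y)
    (T : Finset G) (hT : ∀ g, ∃ t ∈ T, ∃ x, g = t * j x) : n ≤ m := by
  have h0 : j 0 = 1 := by
    have := hj 0 0
    rw [add_zero] at this
    exact left_eq_mul.1 this
  choose τ hτ ξ hξ using hT
  obtain ⟨Q, hQ⟩ := growth_lower hS hf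
  let T1 := insert 1 T
  let M : ℕ := ∑ p ∈ S ×ˢ T1, ∑ i, (ξ (p.1 * p.2) i).natAbs
  have hM : ∀ s ∈ S, ∀ t ∈ T1, ∀ i, (ξ (s * t) i).natAbs ≤ M := by
    intro s hs t ht i
    have h1 := Finset.single_le_sum (f := fun p : G × G => ∑ i, (ξ (p.1 * p.2) i).natAbs)
      (fun _ _ => Nat.zero_le _) (Finset.mk_mem_product hs ht)
    have h2 := Finset.single_le_sum (f := fun i => (ξ (s * t) i).natAbs)
      (fun _ _ => Nat.zero_le _) (Finset.mem_univ i)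
    exact h2.trans h1
  have hcov : ∀ l : List G, (∀ x ∈ l, x ∈ S) →
      ∃ t ∈ T1, ∃ x ∈ box (0 : Fin m → ℤ) (M * l.length), l.prod = t * j x := by
    intro l
    induction l with
    | nil =>
      refine fun _ => ⟨1, Finset.mem_insert_self _ _, 0, ?_, by simp [h0]⟩
      rw [mem_box]; simp
    | cons s l ih =>
      intro hl
      obtain ⟨t, ht, x, hx, hp⟩ := ih fun x hx => hl x (List.mem_cons_of_mem _ hx)
      refine ⟨τ (s * t), Finset.mem_insert_of_mem (hτ _), ξ (s * t) + x, ?_, ?_⟩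
      · rw [mem_box] at hx ⊢
        intro i
        have h1 := hM s (hl s List.mem_cons_self) t ht i
        have h2 := hx i
        simp only [Pi.zero_apply, sub_zero, Pi.add_apply, List.length_cons] at h2 ⊢
        refine (Int.natAbs_add_le _ _).trans ?_
        rw [Nat.mul_succ]
        omega
      · rw [List.prod_cons, hp, hj, ← mul_assoc, ← mul_assoc, ← hξ]
  apply pow_compare (P := Q * (T1.card * (2 * M + 1) ^ m))
  intro r
  have h1 : (ball S r).card ≤ T1.card * (2 * (M * r) + 1) ^ m := by
    rw [← card_box (0 : Fin m → ℤ), ← Finset.card_product]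
    refine (Finset.card_le_card ?_).trans
      (Finset.card_image_le (f := fun p : G × (Fin m → ℤ) => p.1 * j p.2))
    intro g hg
    obtain ⟨l, hl, hl2, rfl⟩ := exists_word hS g
    have hle : l.length ≤ r := by rw [hl]; exact (mem_ball hS).1 hg
    obtain ⟨t, ht, x, hx, hp⟩ := hcov l hl2
    refine Finset.mem_image.2 ⟨(t, x), Finset.mk_mem_product ht ?_, hp.symm⟩
    rw [mem_box] at hx ⊢
    exact fun i => (hx i).trans (Nat.mul_le_mul_left _ hle)
  calc (r + 1) ^ n ≤ _ := hQ r
    _ ≤ Q * (T1.card * (2 * (M * r) + 1) ^ m) := Nat.mul_le_mul_left _ h1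
    _ ≤ Q * (T1.card * ((2 * M + 1) * (r + 1)) ^ m) := by
      refine Nat.mul_le_mul_left _ (Nat.mul_le_mul_left _ (Nat.pow_le_pow_left ?_ _))
      nlinarith
    _ = _ := by rw [mul_pow]; ring

theorem exists_lattice_final (hS : IsGen S) {n : ℕ} {f : G → Fin n → ℤ} {c C : ℕ}
    (hf : IsQI S f c C) :
    ∃ Λ : Subgroup G, Λ.FiniteIndex ∧ Nonempty (Λ ≃* Multiplicative (Fin n → ℤ)) := by
  obtain ⟨m, Λ, hΛ, ⟨e⟩⟩ := exists_lattice hS hf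
  let j : (Fin m → ℤ) → G := fun x => (e.symm (Multiplicative.ofAdd x) : G)
  have hj : ∀ x y, j (x + y) = j x * j y := by
    intro x y
    simp only [j, ofAdd_add, map_mul, Subgroup.coe_mul]
  have hinj : Function.Injective j := by
    intro x y hxy
    exact Multiplicative.ofAdd.injective (e.symm.injective (Subtype.ext hxy))
  have hfq : Fintype (G ⧸ Λ) := Fintype.ofFinite _
  have h1 : m ≤ n := rank_le hS hf j hj hinj
  have h2 : n ≤ m := by
    refine rank_ge hS hf j hj (Finset.univ.image (fun q : G ⧸ Λ => Quotient.out q)) ?_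
    intro g
    refine ⟨Quotient.out (QuotientGroup.mk g : G ⧸ Λ), Finset.mem_image_of_mem _ (Finset.mem_univ _),
      ?_⟩
    have hmem : (Quotient.out (QuotientGroup.mk g : G ⧸ Λ))⁻¹ * g ∈ Λ :=
      QuotientGroup.eq.1 (Quotient.out_eq _)
    refine ⟨Multiplicative.toAdd (e ⟨_, hmem⟩), ?_⟩
    simp [j]
  obtain rfl := le_antisymm h1 h2
  exact ⟨Λ, hΛ, ⟨e⟩⟩

end rank
end QIZ

theorem qi_to_Zn_implies_virtually_Zn
    (Γ : Type*) [Group Γ] (S : Set Γ) (hSfin : S.Finite) (hSsymm : S⁻¹ = S)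
    (hSgen : Subgroup.closure S = ⊤) (n : ℕ)
    -- a quasi-isometry `f : Γ → ℤⁿ` :
    (f : Γ → (Fin n → ℤ)) (c : ℝ) (hc : 1 ≤ c) (C : ℝ) (hC : 0 ≤ C)
    (hlower : ∀ x y : Γ, (1 / c) * wordDist S x y - C ≤ zDist (f x) (f y))
    (hupper : ∀ x y : Γ, zDist (f x) (f y) ≤ c * wordDist S x y + C)
    (hdense : ∀ z : Fin n → ℤ, ∃ x : Γ, zDist (f x) z ≤ C) :
    ∃ Λ : Subgroup Γ, Λ.FiniteIndex ∧ Nonempty (Λ ≃* Multiplicative (Fin n → ℤ)) := by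
  obtain ⟨T, rfl⟩ : ∃ T : Finset Γ, (T : Set Γ) = S := ⟨hSfin.toFinset, hSfin.coe_toFinset⟩
  have hT : QIZ.IsGen T := by
    refine ⟨fun s hs => ?_, hSgen⟩
    have : s⁻¹ ∈ (T : Set Γ)⁻¹ := by simpa using hs
    rw [hSsymm] at this
    exact this
  exact QIZ.exists_lattice_final hT (QIZ.isQI_of T f c hc C hlower hupper hdense)
end
end

section
/- Let r ≥ 3 and let T be a simple graph that is connected, has no cycles, and in which every vertex has degree r (a regular tree of degree r), equipped with the graph distance. Then T does not admit a quasi-isometric embedding into any Hilbert space. -/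
open scoped BigOperators

noncomputable section

namespace RegTreeAux

open SimpleGraph

/-- In a tree, geodesics leaving `u` through distinct neighbours concatenate to a geodesic. -/
theorem dist_through {V : Type*} {T : SimpleGraph V} (hconn : T.Connected)
    (hac : T.IsAcyclic) {u q₁ q₂ x y : V} (h₁ : T.Adj u q₁) (h₂ : T.Adj u q₂) (hne : q₁ ≠ q₂)
    (hx : T.dist q₁ x + 1 = T.dist u x) (hy : T.dist q₂ y + 1 = T.dist u y) :
    T.dist x y = T.dist u x + T.dist u y := by
  obtain ⟨p₁, hp₁⟩ := hconn.exists_walk_length_eq_dist q₁ x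
  obtain ⟨p₂, hp₂⟩ := hconn.exists_walk_length_eq_dist q₂ y
  have l₁ : (Walk.cons h₁ p₁).length = T.dist u x := by simp [hp₁, hx]
  have l₂ : (Walk.cons h₂ p₂).length = T.dist u y := by simp [hp₂, hy]
  have i₁ := ((Walk.cons h₁ p₁).isPath_of_length_eq_dist l₁).reverse
  have i₂ := (Walk.cons h₂ p₂).isPath_of_length_eq_dist l₂
  have hw : ((Walk.cons h₁ p₁).reverse.append (Walk.cons h₂ p₂)).IsPath := by
    rw [hac.isPath_iff_isChain] at i₁ i₂ ⊢
    rw [Walk.edges_append]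
    refine i₁.append i₂ ?_
    intro a ha b hb
    rw [Walk.edges_reverse, Walk.edges_cons] at ha
    rw [Walk.edges_cons] at hb
    simp at ha hb
    subst ha hb
    intro h
    rw [Sym2.eq_iff] at h
    rcases h with h | h
    · exact hne h.2
    · exact hne (h.2.trans h.1)
  obtain ⟨p, hp, hl⟩ := hconn.exists_path_of_dist x y
  have e := congrArg Subtype.val (hac.path_unique ⟨p, hp⟩ ⟨_, hw⟩)
  simp only at e
  rw [← hl, e, Walk.length_append, Walk.length_reverse, l₁, l₂]

/-- The fork inequality in an inner product space. -/
theorem fork {H : Type*} [NormedAddCommGroup H] [InnerProductSpace ℝ H] (a b x y : H) :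
    ‖x - a‖ ^ 2 + ‖y - a‖ ^ 2 ≤
      4 * ‖b - a‖ ^ 2 + 2 * ‖x - b‖ ^ 2 + 2 * ‖y - b‖ ^ 2 - ‖x - y‖ ^ 2 / 2 := by
  obtain ⟨u, rfl⟩ : ∃ u, b = a + u := ⟨b - a, by abel⟩
  obtain ⟨v, rfl⟩ : ∃ v, x = a + u + v := ⟨x - (a + u), by abel⟩
  obtain ⟨w, rfl⟩ : ∃ w, y = a + u + w := ⟨y - (a + u), by abel⟩
  have e1 : a + u + v - a = u + v := by abel
  have e2 : a + u + w - a = u + w := by abel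
  have e3 : a + u + v - (a + u) = v := by abel
  have e4 : a + u + w - (a + u) = w := by abel
  have e5 : a + u + v - (a + u + w) = v - w := by abel
  have e6 : a + u - a = u := by abel
  rw [e1, e2, e3, e4, e5, e6]
  have key : 0 ≤ ‖(2 : ℝ) • u - (v + w)‖ ^ 2 := sq_nonneg _
  rw [norm_sub_sq_real, norm_add_sq_real, norm_smul, inner_smul_left, inner_add_right] at key
  rw [norm_add_sq_real, norm_add_sq_real, norm_sub_sq_real]
  simp at key
  nlinarith

/-- Every direction contains a vertex at distance `k` with squared displacement at most `N`. -/
def Good {V : Type*} (T : SimpleGraph V) {H : Type*} [NormedAddCommGroup H]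
    (f : V → H) (k : ℕ) (N : ℝ) : Prop :=
  ∀ v p, T.Adj v p → ∃ x, T.dist v x = k ∧ T.dist p x + 1 = k ∧ ‖f x - f v‖ ^ 2 ≤ N

theorem good_step {V : Type*} {T : SimpleGraph V} (hconn : T.Connected)
    (hac : T.IsAcyclic) {r : ℕ} (hr : 3 ≤ r) (hreg : ∀ v : V, (T.neighborSet v).ncard = r)
    {H : Type*} [NormedAddCommGroup H] [InnerProductSpace ℝ H] (f : V → H)
    {k : ℕ} (hk : 1 ≤ k) {N D : ℝ} (hD : ∀ x y, T.dist x y = 2 * k → D ≤ ‖f x - f y‖ ^ 2)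
    (h : Good T f k N) : Good T f (2 * k) (4 * N - D / 4) := by
  intro v p hvp
  obtain ⟨u, hvu, hpu, hu⟩ := h v p hvp
  -- the neighbour of `u` towards `v`
  obtain ⟨q₀, hq₀, hq₀v⟩ : ∃ q₀, T.Adj u q₀ ∧ T.dist q₀ v + 1 = T.dist u v := by
    obtain ⟨w, hw⟩ := hconn.exists_walk_length_eq_dist u v
    have huv : T.dist u v = k := by rw [SimpleGraph.dist_comm, hvu]
    cases w with
    | nil => rw [SimpleGraph.dist_self] at huv; omega
    | cons hq w =>
      rename_i q
      refine ⟨q, hq, ?_⟩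
      have h1 := dist_le w
      have h2 := hconn.dist_triangle (u := u) (v := q) (w := v)
      have h3 := dist_eq_one_iff_adj.mpr hq
      simp at hw
      omega
  obtain ⟨q₁, q₂, hq₁, hq₂, h01, h02, h12⟩ : ∃ q₁ q₂, T.Adj u q₁ ∧ T.Adj u q₂ ∧
      q₀ ≠ q₁ ∧ q₀ ≠ q₂ ∧ q₁ ≠ q₂ := by
    have hc : 1 < (T.neighborSet u \ {q₀}).ncard := by
      have := Set.pred_ncard_le_ncard_sdiff_singleton (T.neighborSet u) q₀
      rw [hreg u] at this
      omega
    obtain ⟨a, b, ha, hb, hab⟩ := (Set.one_lt_ncard_iff (Set.finite_of_ncard_pos (by omega))).mp hc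
    exact ⟨a, b, ha.1, hb.1, fun e => ha.2 e.symm, fun e => hb.2 e.symm, hab⟩
  obtain ⟨x, hx, hqx, hxN⟩ := h u q₁ hq₁
  obtain ⟨y, hy, hqy, hyN⟩ := h u q₂ hq₂
  have hvx := dist_through hconn hac hq₀ hq₁ h01 hq₀v (hqx.trans hx.symm)
  have hvy := dist_through hconn hac hq₀ hq₂ h02 hq₀v (hqy.trans hy.symm)
  have hxy := dist_through hconn hac hq₁ hq₂ h12 (hqx.trans hx.symm) (hqy.trans hy.symm)
  have huv : T.dist u v = k := by rw [SimpleGraph.dist_comm, hvu]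
  have h1 := dist_eq_one_iff_adj.mpr hvp
  have hd := hD x y (by omega)
  have hf := fork (f v) (f u) (f x) (f y)
  have tx1 := hconn.dist_triangle (u := v) (v := p) (w := x)
  have tx2 := hconn.dist_triangle (u := p) (v := u) (w := x)
  have ty1 := hconn.dist_triangle (u := v) (v := p) (w := y)
  have ty2 := hconn.dist_triangle (u := p) (v := u) (w := y)
  by_cases hle : ‖f x - f v‖ ^ 2 ≤ ‖f y - f v‖ ^ 2
  · exact ⟨x, by omega, by omega, by linarith⟩
  · exact ⟨y, by omega, by omega, by linarith⟩

end RegTreeAux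

/-- A regular tree of degree `r` (with its graph distance) admits no quasi-isometric
embedding into any Hilbert space (`r ≥ 3`). -/
theorem regular_tree_no_qi_embedding
    (r : ℕ) (hr : 3 ≤ r)
    (V : Type*) (T : SimpleGraph V) (hconn : T.Connected) (hacyclic : T.IsAcyclic)
    (hreg : ∀ v : V, (T.neighborSet v).ncard = r)
    (H : Type*) [NormedAddCommGroup H] [InnerProductSpace ℝ H] [CompleteSpace H] :
    ¬ ∃ (f : V → H) (c : ℝ) (_ : 1 ≤ c) (C : ℝ) (_ : 0 ≤ C),
        (∀ x y : V, (1 / c) * (T.dist x y : ℝ) - C ≤ ‖f x - f y‖) ∧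
        (∀ x y : V, ‖f x - f y‖ ≤ c * (T.dist x y : ℝ) + C) := by
  rintro ⟨f, c, hc, C, hC, hlow, hup⟩
  have hc0 : 0 < c := by linarith
  have base : ∀ j : ℕ, RegTreeAux.Good T f (2 ^ j) (4 ^ j * (c + C) ^ 2) := by
    intro j
    induction j with
    | zero =>
      intro v p hvp
      have h1 := SimpleGraph.dist_eq_one_iff_adj.mpr hvp
      refine ⟨p, by simpa using h1, by simp, ?_⟩
      have := hup p v
      rw [SimpleGraph.dist_comm, h1] at this
      simp only [Nat.cast_one, mul_one] at this
      rw [pow_zero, one_mul]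
      exact pow_le_pow_left₀ (norm_nonneg _) this 2
    | succ j ih =>
      have := RegTreeAux.good_step hconn hacyclic hr hreg f Nat.one_le_two_pow
        (D := 0) (fun x y _ => sq_nonneg _) ih
      convert this using 1 <;> ring
  obtain ⟨j, hj⟩ := pow_unbounded_of_one_lt (c * C) (one_lt_two : (1 : ℝ) < 2)
  have main : ∀ n : ℕ, RegTreeAux.Good T f (2 ^ (j + n))
      (4 ^ (j + n) * ((c + C) ^ 2 - n * (1 / (16 * c ^ 2)))) := by
    intro n
    induction n with
    | zero => simpa using base j
    | succ n ih =>
      have := RegTreeAux.good_step hconn hacyclic hr hreg f Nat.one_le_two_pow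
        (D := (2 ^ (j + n) / c) ^ 2) (fun x y hxy => by
          have h1 := hlow x y
          rw [hxy] at h1
          push_cast at h1
          refine pow_le_pow_left₀ (by positivity) (le_trans ?_ h1) 2
          have h2 : (2 : ℝ) ^ j ≤ 2 ^ (j + n) := pow_le_pow_right₀ (by norm_num) (by omega)
          have h3 : C ≤ 2 ^ (j + n) / c := by
            rw [le_div_iff₀ hc0]; linarith
          have h4 : 1 / c * (2 * (2 : ℝ) ^ (j + n)) = 2 * (2 ^ (j + n) / c) := by ring
          linarith) ih
      convert this using 1
      · ring
      · have h4 : (4 : ℝ) ^ (j + n) = (2 ^ (j + n)) ^ 2 := by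
          rw [← pow_mul, mul_comm, pow_mul]; norm_num
        rw [← add_assoc, pow_succ, h4]
        push_cast
        field_simp
        ring
  obtain ⟨n, hn⟩ := exists_nat_gt ((c + C) ^ 2 * (16 * c ^ 2))
  obtain ⟨v⟩ := hconn.nonempty
  obtain ⟨p, hp⟩ : (T.neighborSet v).Nonempty := by
    apply Set.nonempty_of_ncard_ne_zero
    rw [hreg v]; omega
  obtain ⟨x, -, -, hx⟩ := main n v p hp
  have hneg : (c + C) ^ 2 - n * (1 / (16 * c ^ 2)) < 0 := by
    rw [mul_one_div, sub_neg, lt_div_iff₀ (by positivity)]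
    exact hn
  have := mul_neg_of_pos_of_neg (by positivity : (0 : ℝ) < 4 ^ (j + n)) hneg
  linarith [sq_nonneg ‖f x - f v‖]
end
end

section
/- Let n ≥ 0 and let G be a closed subgroup of the isometry group Isom(ℝⁿ) of the Euclidean space ℝⁿ (with its compact-open topology). The following are equivalent: (i) G is cocompact in Isom(ℝⁿ), i.e. the quotient Isom(ℝⁿ)/G is compact; (ii) the action of G on ℝⁿ is cocompact, i.e. there is a compact set L ⊆ ℝⁿ with G·L = ℝⁿ; (iii) G does not preserve any proper nonempty affine subspace of ℝⁿ (there is no affine subspace A ⊊ ℝⁿ, A ≠ ∅, with gA = A for all g ∈ G). -/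
open Filter Topology

noncomputable section

/-- A continuous map `f : ℝⁿ → ℝⁿ` "is" an element of `Isom(ℝⁿ)` lying in the subgroup
`G`. `C(ℝⁿ,ℝⁿ)` carries the compact-open topology, which induces the natural topology on
`Isom(ℝⁿ)`. -/
def ReprIn {n : ℕ}
    (G : Subgroup (EuclideanSpace ℝ (Fin n) ≃ᵢ EuclideanSpace ℝ (Fin n)))
    (f : C(EuclideanSpace ℝ (Fin n), EuclideanSpace ℝ (Fin n))) : Prop :=
  ∃ φ ∈ G, ∀ x, f x = φ x

section Helpers

set_option linter.unusedSectionVars false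

variable {E : Type*} [NormedAddCommGroup E] [InnerProductSpace ℝ E] [FiniteDimensional ℝ E]

/-- Chebyshev centre: common fixed point of the affine isometries preserving a bounded set. -/
theorem exists_common_fixed (S : Set E) (hne : S.Nonempty) (hb : Bornology.IsBounded S) :
    ∃ x ∈ closure (convexHull ℝ S), ∀ T : E →ᵃⁱ[ℝ] E, T '' S = S → T x = x := by
  set K := closure (convexHull ℝ S) with hK
  have hKc : IsCompact K :=
    Metric.isCompact_of_isClosed_isBounded isClosed_closure
      ((isBounded_convexHull.2 hb).closure)
  have hKconv : Convex ℝ K := (convex_convexHull ℝ S).closure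
  have hSK : S ⊆ K := (subset_convexHull ℝ S).trans subset_closure
  have hKne : K.Nonempty := hne.mono hSK
  have hTK : ∀ T : E →ᵃⁱ[ℝ] E, T '' S = S → T '' K = K := by
    intro T hT
    have h1 : T '' convexHull ℝ S = convexHull ℝ S := by
      have := T.toAffineMap.image_convexHull S
      rw [AffineIsometry.coe_toAffineMap, hT] at this
      exact this
    have hc : IsCompact (closure (convexHull ℝ S)) := hKc
    have := image_closure_of_isCompact (f := T) hc T.continuous.continuousOn
    rw [h1] at this
    exact this
  let f : E → ℝ := fun x => sSup ((fun s => dist x s) '' K)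
  have hf : Continuous f := hKc.continuous_sSup (f := fun x s => dist x s) continuous_dist
  have hbdd : ∀ x, BddAbove ((fun s => dist x s) '' K) := fun x =>
    (hKc.image (continuous_const.dist continuous_id)).bddAbove
  have hle : ∀ x, ∀ s ∈ K, dist x s ≤ f x := fun x s hs => le_csSup (hbdd x) ⟨s, hs, rfl⟩
  obtain ⟨x, hxK, hxmin⟩ := hKc.exists_isMinOn hKne hf.continuousOn
  refine ⟨x, hxK, fun T hT => ?_⟩
  have hTxK : T x ∈ K := by rw [← hTK T hT]; exact ⟨x, hxK, rfl⟩
  have hTf : ∀ s ∈ K, dist (T x) s ≤ f x := by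
    intro s hs
    rw [← hTK T hT] at hs
    obtain ⟨s, hs, rfl⟩ := hs
    rw [T.dist_map]
    exact hle x s hs
  set m := (1/2 : ℝ) • x + (1/2 : ℝ) • T x with hm
  have hmK : m ∈ K := hKconv hxK hTxK (by norm_num) (by norm_num) (by norm_num)
  obtain ⟨s, hs, hsf⟩ := (hKc.image (f := fun s => dist m s)
    (continuous_const.dist continuous_id)).sSup_mem (hKne.image _)
  have h1 : f x ≤ dist m s := by
    have := hxmin hmK
    exact (show f x ≤ f m from this).trans hsf.ge
  have h2 := hle x s hs
  have h3 := hTf s hs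
  rw [dist_eq_norm] at h1 h2 h3
  have hpar := parallelogram_law_with_norm ℝ (x - s) (T x - s)
  have e1 : x - s + (T x - s) = (2:ℝ) • (m - s) := by
    rw [hm]; module
  have e2 : x - s - (T x - s) = x - T x := by abel
  rw [e1, e2, norm_smul] at hpar
  norm_num at hpar
  have h0 : ‖x - T x‖ = 0 := by
    have := norm_nonneg (x - s)
    have := norm_nonneg (T x - s)
    have := norm_nonneg (m - s)
    have := norm_nonneg (x - T x)
    nlinarith
  exact (sub_eq_zero.1 (norm_eq_zero.1 h0)).symm

theorem cone_interior (D : Set E) (h0 : (0:E) ∈ D) (hconv : Convex ℝ D) :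
    ∃ p ∈ Submodule.span ℝ D, ∃ ε > 0, ∀ v ∈ Submodule.span ℝ D, ‖v‖ < ε → p + v ∈ D := by
  set V := Submodule.span ℝ D with hV
  let D' : Set V := (fun v : V => (v : E)) ⁻¹' D
  have hD' : Convex ℝ D' := hconv.linear_preimage V.subtype
  have hspan : Submodule.span ℝ D' = ⊤ := Submodule.span_span_coe_preimage
  have haff : affineSpan ℝ D' = ⊤ := by
    have h0' : (0 : V) ∈ D' := h0
    rw [← Set.insert_eq_of_mem h0']
    apply SetLike.coe_injective
    rw [affineSpan_insert_zero, hspan]; rfl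
  obtain ⟨p, hp⟩ := hD'.interior_nonempty_iff_affineSpan_eq_top.2 haff
  obtain ⟨ε, hε, hball⟩ := Metric.isOpen_iff.1 isOpen_interior p hp
  refine ⟨p, p.2, ε, hε, fun v hv hvε => ?_⟩
  have : p + ⟨v, hv⟩ ∈ D' := by
    apply interior_subset
    apply hball
    rw [Metric.mem_ball, dist_eq_norm, add_sub_cancel_left]
    exact hvε
  exact this

/-- the linear part -/
def linPart (φ : E ≃ᵢ E) : E ≃ₗᵢ[ℝ] E := φ.toRealLinearIsometryEquiv

theorem apply_eq (φ : E ≃ᵢ E) (x : E) : φ x = linPart φ x + φ 0 := by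
  simp [linPart]

theorem linPart_inv (φ : E ≃ᵢ E) (x : E) : linPart φ⁻¹ (linPart φ x) = x := by
  have h1 : φ⁻¹ (φ x) = x := φ.symm_apply_apply x
  have h2 : φ⁻¹ (φ 0) = 0 := φ.symm_apply_apply 0
  have h3 : linPart φ x = φ x - φ 0 := by rw [apply_eq φ x]; abel
  rw [h3, map_sub]
  rw [apply_eq φ⁻¹] at h1 h2
  rw [← eq_sub_iff_add_eq] at h1 h2
  rw [h1, h2]
  abel

theorem linPart_inv' (φ : E ≃ᵢ E) (x : E) : linPart φ (linPart φ⁻¹ x) = x := by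
  have := linPart_inv φ⁻¹ x
  rwa [inv_inv] at this

theorem inner_linPart (φ : E ≃ᵢ E) (x y : E) :
    inner ℝ (linPart φ x) y = inner ℝ x (linPart φ⁻¹ y) := by
  conv_lhs => rw [← linPart_inv' φ y]
  exact (linPart φ).inner_map_map _ _

/-- directions bounded above on the orbit of `0` -/
def barrier (G : Subgroup (E ≃ᵢ E)) : Set E :=
  {u | ∃ M : ℝ, ∀ φ ∈ G, inner ℝ u (φ 0) ≤ M}

theorem barrier_add {G : Subgroup (E ≃ᵢ E)} {u v : E} (hu : u ∈ barrier G) (hv : v ∈ barrier G) :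
    u + v ∈ barrier G := by
  obtain ⟨M, hM⟩ := hu
  obtain ⟨N, hN⟩ := hv
  refine ⟨M + N, fun φ hφ => ?_⟩
  rw [inner_add_left]
  exact add_le_add (hM φ hφ) (hN φ hφ)

theorem barrier_smul {G : Subgroup (E ≃ᵢ E)} {u : E} (hu : u ∈ barrier G) {c : ℝ} (hc : 0 ≤ c) :
    c • u ∈ barrier G := by
  obtain ⟨M, hM⟩ := hu
  refine ⟨c * M, fun φ hφ => ?_⟩
  rw [real_inner_smul_left]
  exact mul_le_mul_of_nonneg_left (hM φ hφ) hc

theorem barrier_zero {G : Subgroup (E ≃ᵢ E)} : (0:E) ∈ barrier G :=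
  ⟨0, fun φ _ => by simp⟩

theorem barrier_convex {G : Subgroup (E ≃ᵢ E)} : Convex ℝ (barrier G) :=
  fun _ hu _ hv _ _ ha hb _ => barrier_add (barrier_smul hu ha) (barrier_smul hv hb)

theorem barrier_lin {G : Subgroup (E ≃ᵢ E)} {u : E} (hu : u ∈ barrier G) {ψ : E ≃ᵢ E}
    (hψ : ψ ∈ G) : linPart ψ u ∈ barrier G := by
  obtain ⟨M, hM⟩ := hu
  refine ⟨M - inner ℝ u (ψ⁻¹ 0), fun φ hφ => ?_⟩
  have := hM (ψ⁻¹ * φ) (G.mul_mem (G.inv_mem hψ) hφ)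
  rw [IsometryEquiv.mul_apply, apply_eq ψ⁻¹, inner_add_right] at this
  rw [inner_linPart]
  linarith

theorem linPart_mul (φ ψ : E ≃ᵢ E) (x : E) : linPart (φ * ψ) x = linPart φ (linPart ψ x) := by
  have h : ∀ (φ : E ≃ᵢ E) x, linPart φ x = φ x - φ 0 := fun φ x => by rw [apply_eq φ x]; abel
  rw [h ψ, map_sub, h φ, h φ, h (φ * ψ), IsometryEquiv.mul_apply, IsometryEquiv.mul_apply]
  abel

/-- the barrier cone is a linear subspace -/
theorem barrier_eq_span (G : Subgroup (E ≃ᵢ E)) {v : E}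
    (hv : v ∈ Submodule.span ℝ (barrier G)) : v ∈ barrier G := by
  obtain ⟨p, hpV, ε, hε, hp⟩ := cone_interior (barrier G) barrier_zero barrier_convex
  set V := Submodule.span ℝ (barrier G) with hV
  have hVinv : ∀ ψ ∈ G, ∀ v ∈ V, linPart ψ v ∈ V := by
    intro ψ hψ v hv
    refine Submodule.span_induction (p := fun v _ => linPart ψ v ∈ V) ?_ ?_ ?_ ?_ hv
    · exact fun u hu => Submodule.subset_span (barrier_lin hu hψ)
    · simp
    · intro x y _ _ hx hy; rw [map_add]; exact V.add_mem hx hy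
    · intro a x _ hx; rw [map_smul]; exact V.smul_mem _ hx
  let S : Set E := {q | ∃ ψ ∈ G, q = linPart ψ p}
  have hSb : Bornology.IsBounded S := by
    refine (Metric.isBounded_closedBall (x := (0:E)) (r := ‖p‖)).subset ?_
    rintro q ⟨ψ, _, rfl⟩
    simp
  obtain ⟨w, hw, hwfix⟩ := exists_common_fixed S ⟨linPart 1 p, 1, G.one_mem, rfl⟩ hSb
  have hwf : ∀ ψ ∈ G, linPart ψ w = w := by
    intro ψ hψ
    apply hwfix (linPart ψ).toLinearIsometry.toAffineIsometry
    ext q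
    constructor
    · rintro ⟨_, ⟨χ, hχ, rfl⟩, rfl⟩
      exact ⟨ψ * χ, G.mul_mem hψ hχ, (linPart_mul ψ χ p).symm⟩
    · rintro ⟨χ, hχ, rfl⟩
      refine ⟨linPart (ψ⁻¹ * χ) p, ⟨_, G.mul_mem (G.inv_mem hψ) hχ, rfl⟩, ?_⟩
      rw [linPart_mul]
      exact linPart_inv' ψ _
  have hconv : ∀ q ∈ convexHull ℝ S, q ∈ V ∧ ∀ v ∈ V, ‖v‖ < ε → q + v ∈ barrier G := by
    have hcv : Convex ℝ {q : E | q ∈ V ∧ ∀ v ∈ V, ‖v‖ < ε → q + v ∈ barrier G} := by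
      intro x hx y hy a b ha hb hab
      refine ⟨V.add_mem (V.smul_mem _ hx.1) (V.smul_mem _ hy.1), fun v hv hvε => ?_⟩
      have : a • x + b • y + v = a • (x + v) + b • (y + v) := by
        have : v = (a + b) • v := by rw [hab, one_smul]
        nth_rewrite 1 [this]
        module
      rw [this]
      exact barrier_convex (hx.2 v hv hvε) (hy.2 v hv hvε) ha hb hab
    refine fun q hq => convexHull_min ?_ hcv hq
    rintro q ⟨ψ, hψ, rfl⟩
    refine ⟨hVinv ψ hψ p hpV, fun v hv hvε => ?_⟩
    have := barrier_lin (hp (linPart ψ⁻¹ v) (hVinv _ (G.inv_mem hψ) v hv) (by simpa using hvε)) hψ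
    rwa [map_add, linPart_inv'] at this
  have hwV : w ∈ V := by
    have : closure (convexHull ℝ S) ⊆ V :=
      closure_minimal (fun q hq => (hconv q hq).1) V.closed_of_finiteDimensional
    exact this hw
  obtain ⟨q, hq, hqw⟩ := Metric.mem_closure_iff.1 hw (ε/2) (by linarith)
  have hball : ∀ v ∈ V, ‖v‖ < ε/2 → w + v ∈ barrier G := by
    intro v hv hvε
    have h := (hconv q hq).2 (w - q + v) (V.add_mem (V.sub_mem hwV (hconv q hq).1) hv) (by
      rw [dist_eq_norm] at hqw
      have := norm_add_le (w - q) v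
      linarith)
    have e : q + (w - q + v) = w + v := by abel
    rwa [e] at h
  have hwB : w ∈ barrier G := by
    have := hball 0 V.zero_mem (by simpa using hε)
    rwa [add_zero] at this
  have hnw : -w ∈ barrier G := by
    obtain ⟨M, hM⟩ := hwB
    refine ⟨M, fun φ hφ => ?_⟩
    have h1 := hM φ⁻¹ (G.inv_mem hφ)
    have h2 : φ (φ⁻¹ 0) = 0 := φ.apply_symm_apply 0
    rw [apply_eq] at h2
    have h3 : inner ℝ w (linPart φ (φ⁻¹ 0) + φ 0) = 0 := by rw [h2, inner_zero_right]
    have h4 : inner ℝ w (linPart φ (φ⁻¹ 0)) = inner ℝ w (φ⁻¹ 0) := by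
      nth_rewrite 1 [← hwf φ hφ]
      exact (linPart φ).inner_map_map _ _
    rw [inner_add_right, h4] at h3
    rw [inner_neg_left]
    linarith
  have hsmall : ∀ v ∈ V, ‖v‖ < ε/2 → v ∈ barrier G := by
    intro v hv hvε
    have := barrier_add (hball v hv hvε) hnw
    have e : w + v + -w = v := by abel
    rwa [e] at this
  have hc : 0 < ε / 4 / (‖v‖ + 1) := by positivity
  have h := hsmall ((ε / 4 / (‖v‖ + 1)) • v) (V.smul_mem _ hv) (by
    rw [norm_smul, Real.norm_of_nonneg hc.le, div_mul_eq_mul_div, div_lt_iff₀ (by positivity)]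
    nlinarith [norm_nonneg v])
  have := barrier_smul h (inv_nonneg.2 hc.le)
  rwa [smul_smul, inv_mul_cancel₀ hc.ne', one_smul] at this

theorem invariant_of_barrier (G : Subgroup (E ≃ᵢ E)) {u : E} (hu : u ∈ barrier G) (hu0 : u ≠ 0) :
    ∃ A : AffineSubspace ℝ E, A ≠ ⊥ ∧ A ≠ ⊤ ∧ ∀ φ ∈ G, (fun x => φ x) '' (A : Set E) = A := by
  set V := Submodule.span ℝ (barrier G) with hV
  have hVB : ∀ v ∈ V, v ∈ barrier G := fun v hv => barrier_eq_span G hv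
  have hVinv : ∀ ψ ∈ G, ∀ v ∈ V, linPart ψ v ∈ V := fun ψ hψ v hv =>
    Submodule.subset_span (barrier_lin (hVB v hv) hψ)
  have hVo : ∀ ψ ∈ G, ∀ v ∈ Vᗮ, linPart ψ v ∈ Vᗮ := by
    intro ψ hψ v hv
    rw [Submodule.mem_orthogonal'] at hv ⊢
    intro x hx
    rw [inner_linPart]
    exact hv _ (hVinv _ (G.inv_mem hψ) x hx)
  have hproj : ∀ ψ ∈ G, ∀ x, linPart ψ (V.starProjection x) = V.starProjection (linPart ψ x) := by
    intro ψ hψ x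
    symm
    apply Submodule.eq_starProjection_of_mem_orthogonal
    · exact hVinv ψ hψ _ (V.starProjection_apply_mem x)
    · rw [← map_sub]
      exact hVo ψ hψ _ (Submodule.sub_starProjection_mem_orthogonal x)
  let S : Set E := {q | ∃ ψ ∈ G, q = V.starProjection (ψ 0)}
  have hSb : Bornology.IsBounded S := by
    let b := stdOrthonormalBasis ℝ V
    have hb : ∀ i, ∃ M : ℝ, ∀ ψ ∈ G, |inner ℝ (b i : E) (ψ 0)| ≤ M := by
      intro i
      obtain ⟨M, hM⟩ := hVB (b i) (b i).2
      obtain ⟨N, hN⟩ := hVB (-(b i : E)) (V.neg_mem (b i).2)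
      refine ⟨max M N, fun ψ hψ => abs_le.2 ⟨?_, (hM ψ hψ).trans (le_max_left _ _)⟩⟩
      have := (hN ψ hψ).trans (le_max_right M N)
      rw [inner_neg_left] at this
      linarith
    choose M hM using hb
    refine (Metric.isBounded_closedBall (x := (0:E)) (r := ∑ i, M i)).subset ?_
    rintro q ⟨ψ, hψ, rfl⟩
    rw [mem_closedBall_zero_iff]
    have e : V.starProjection (ψ 0) = ∑ i, inner ℝ (b i : E) (ψ 0) • (b i : E) := by
      rw [b.starProjection_eq_sum_rankOne]
      simp
    rw [e]
    refine (norm_sum_le _ _).trans (Finset.sum_le_sum fun i _ => ?_)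
    have hn : ‖(b i : E)‖ = 1 := b.orthonormal.1 i
    rw [norm_smul, hn, mul_one]
    exact hM i ψ hψ
  obtain ⟨x, -, hxfix⟩ := exists_common_fixed S ⟨_, 1, G.one_mem, rfl⟩ hSb
  have key : ∀ φ ∈ G, linPart φ x + V.starProjection (φ 0) = x := by
    intro φ hφ
    have hS : ∀ ψ ∈ G, ∀ χ ∈ G, V.starProjection ((ψ * χ) 0) =
        linPart ψ (V.starProjection (χ 0)) + V.starProjection (ψ 0) := by
      intro ψ hψ χ hχ
      rw [IsometryEquiv.mul_apply, apply_eq ψ (χ 0), map_add, hproj ψ hψ]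
    let T : E →ᵃⁱ[ℝ] E :=
      { toFun := fun v => linPart φ v + V.starProjection (φ 0)
        linear := (linPart φ).toLinearEquiv.toLinearMap
        map_vadd' := by
          intro p v
          simp [add_assoc]
        norm_map := by intro v; simp }
    have hT : ∀ v, T v = linPart φ v + V.starProjection (φ 0) := fun v => rfl
    rw [← hT]
    apply hxfix T
    ext q
    constructor
    · rintro ⟨_, ⟨χ, hχ, rfl⟩, rfl⟩
      exact ⟨φ * χ, G.mul_mem hφ hχ, by rw [hS φ hφ χ hχ, hT]⟩
    · rintro ⟨χ, hχ, rfl⟩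
      refine ⟨_, ⟨φ⁻¹ * χ, G.mul_mem (G.inv_mem hφ) hχ, rfl⟩, ?_⟩
      rw [hT, ← hS φ hφ _ (G.mul_mem (G.inv_mem hφ) hχ), mul_inv_cancel_left]
  refine ⟨AffineSubspace.mk' x Vᗮ, ?_, ?_, ?_⟩
  · intro h
    have : x ∈ AffineSubspace.mk' x Vᗮ := AffineSubspace.self_mem_mk' x _
    rw [h] at this
    exact this
  · intro h
    have : u + x ∈ AffineSubspace.mk' x Vᗮ := by rw [h]; trivial
    rw [AffineSubspace.mem_mk', vsub_eq_sub, add_sub_cancel_right] at this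
    have h2 := (Submodule.mem_orthogonal' V u).1 this u (Submodule.subset_span hu)
    exact hu0 (inner_self_eq_zero.1 h2)
  · have hsub : ∀ φ ∈ G, ∀ y ∈ AffineSubspace.mk' x Vᗮ, φ y ∈ AffineSubspace.mk' x Vᗮ := by
      intro φ hφ y hy
      rw [AffineSubspace.mem_mk', vsub_eq_sub] at hy ⊢
      have e : φ y - x = linPart φ (y - x) + (φ 0 - V.starProjection (φ 0)) := by
        nth_rewrite 1 [← key φ hφ]
        rw [apply_eq φ y, map_sub]
        abel
      rw [e]
      exact Vᗮ.add_mem (hVo φ hφ _ hy) (Submodule.sub_starProjection_mem_orthogonal _)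
    intro φ hφ
    ext y
    constructor
    · rintro ⟨z, hz, rfl⟩
      exact hsub φ hφ z hz
    · intro hy
      exact ⟨φ⁻¹ y, hsub _ (G.inv_mem hφ) y hy, φ.apply_symm_apply y⟩

theorem exists_barrier (G : Subgroup (E ≃ᵢ E))
    (h : ¬ ∃ L : Set E, IsCompact L ∧ ∀ x : E, ∃ φ ∈ G, ∃ y ∈ L, φ y = x) :
    ∃ u ∈ barrier G, u ≠ 0 := by
  have hz : ∀ k : ℕ, ∃ z : E, (k : ℝ) + 1 ≤ ‖z‖ ∧ ∀ ψ ∈ G, ‖z‖ - 1 ≤ ‖z - ψ 0‖ := by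
    intro k
    by_contra hcon
    push Not at hcon
    apply h
    refine ⟨Metric.closedBall 0 (k + 1), isCompact_closedBall _ _, fun x => ?_⟩
    by_contra hx
    push Not at hx
    have hx' : ∀ φ ∈ G, (k:ℝ) + 1 < ‖φ x‖ := by
      intro φ hφ
      by_contra hle
      push Not at hle
      exact hx φ⁻¹ (G.inv_mem hφ) (φ x) (by simpa using hle) (φ.symm_apply_apply x)
    let R : Set ℝ := {r | ∃ φ ∈ G, r = ‖φ x‖}
    have hR : BddBelow R := ⟨0, by rintro r ⟨φ, _, rfl⟩; exact norm_nonneg _⟩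
    obtain ⟨_, ⟨φ, hφ, rfl⟩, hlt⟩ := Real.lt_sInf_add_pos (s := R) ⟨_, 1, G.one_mem, rfl⟩ one_pos
    obtain ⟨ψ, hψ, hlt2⟩ := hcon (φ x) (hx' φ hφ).le
    have h1 := csInf_le hR ⟨ψ⁻¹ * φ, G.mul_mem (G.inv_mem hψ) hφ, rfl⟩
    have h2 : ‖(ψ⁻¹ * φ) x‖ = ‖φ x - ψ 0‖ := by
      have h3 : ψ⁻¹ (ψ 0) = 0 := ψ.symm_apply_apply 0
      rw [← sub_zero ((ψ⁻¹ * φ) x), ← dist_eq_norm, ← dist_eq_norm]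
      nth_rewrite 1 [← h3]
      rw [IsometryEquiv.mul_apply]
      exact ψ⁻¹.dist_eq _ _
    linarith
  choose z hz1 hz2 using hz
  have hpos : ∀ k, 0 < ‖z k‖ := fun k => by
    have := hz1 k
    have : (0:ℝ) ≤ k := Nat.cast_nonneg k
    linarith
  obtain ⟨u, hu, σ, hσ, hlim⟩ := (isCompact_sphere (0:E) 1).tendsto_subseq
    (x := fun k => ‖z k‖⁻¹ • z k) (fun k => by
      rw [mem_sphere_zero_iff_norm, norm_smul, norm_inv, norm_norm, inv_mul_cancel₀ (hpos k).ne'])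
  refine ⟨u, ⟨1, fun φ hφ => ?_⟩, ?_⟩
  · have hle : ∀ k : ℕ, inner ℝ (‖z k‖⁻¹ • z k) (φ 0) ≤ 1 + ‖φ 0‖^2 * (1 / ((k:ℝ) + 1)) := by
      intro k
      have h1 := hz2 k φ hφ
      have h2 := hz1 k
      have hk : (0:ℝ) ≤ k := Nat.cast_nonneg k
      have h3 : (‖z k‖ - 1)^2 ≤ ‖z k - φ 0‖^2 := pow_le_pow_left₀ (by linarith) h1 2
      rw [norm_sub_sq_real] at h3
      have h4 : inner ℝ (z k) (φ 0) ≤ ‖z k‖ + ‖φ 0‖^2 := by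
        nlinarith [sq_nonneg ‖φ 0‖]
      rw [real_inner_smul_left]
      calc ‖z k‖⁻¹ * inner ℝ (z k) (φ 0) ≤ ‖z k‖⁻¹ * (‖z k‖ + ‖φ 0‖^2) :=
            mul_le_mul_of_nonneg_left h4 (inv_nonneg.2 (hpos k).le)
        _ = 1 + ‖φ 0‖^2 * (1 / ‖z k‖) := by
            have := (hpos k).ne'
            field_simp
        _ ≤ _ := by gcongr
    have hl1 : Tendsto (fun k => inner ℝ (((fun k => ‖z k‖⁻¹ • z k) ∘ σ) k) (φ 0)) atTop
        (𝓝 (inner ℝ u (φ 0))) := hlim.inner tendsto_const_nhds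
    have hl2 : Tendsto (fun k : ℕ => 1 + ‖φ 0‖^2 * (1 / ((k:ℝ) + 1))) atTop
        (𝓝 (1 + ‖φ 0‖^2 * 0)) :=
      tendsto_const_nhds.add (tendsto_const_nhds.mul tendsto_one_div_add_atTop_nhds_zero_nat)
    rw [mul_zero, add_zero] at hl2
    exact le_of_tendsto_of_tendsto' hl1 (hl2.comp hσ.tendsto_atTop) (fun k => hle (σ k))
  · rintro rfl
    simp at hu

theorem no_invariant_of_cocompact (G : Subgroup (E ≃ᵢ E))
    (h : ∃ L : Set E, IsCompact L ∧ ∀ x : E, ∃ φ ∈ G, ∃ y ∈ L, φ y = x) :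
    ¬ ∃ A : AffineSubspace ℝ E, A ≠ ⊥ ∧ A ≠ ⊤ ∧
      ∀ φ ∈ G, (fun x => φ x) '' (A : Set E) = A := by
  rintro ⟨A, hbot, htop, hA⟩
  obtain ⟨L, hL, hGL⟩ := h
  obtain ⟨a, ha⟩ := (AffineSubspace.nonempty_iff_ne_bot A).2 hbot
  obtain ⟨M, hM⟩ := (hL.image (Metric.continuous_infDist_pt (A : Set E))).bddAbove
  have hdist : ∀ x, Metric.infDist x (A : Set E) ≤ M := by
    intro x
    obtain ⟨φ, hφ, y, hy, rfl⟩ := hGL x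
    have := Metric.infDist_image (t := (A : Set E)) (x := y) φ.isometry
    have h2 : φ '' (A : Set E) = A := hA φ hφ
    rw [h2] at this
    rw [this]
    exact hM ⟨y, hy, rfl⟩
  have hdir : A.directionᗮ ≠ ⊥ := by
    intro h
    rw [Submodule.orthogonal_eq_bot_iff] at h
    exact htop ((AffineSubspace.direction_eq_top_iff_of_nonempty ⟨a, ha⟩).1 h)
  obtain ⟨w, hw, hw0⟩ := Submodule.exists_mem_ne_zero_of_ne_bot hdir
  have hwn : 0 < ‖w‖ := norm_pos_iff.2 hw0
  set t : ℝ := (|M| + 1) / ‖w‖ with ht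
  have hlow : |M| + 1 ≤ Metric.infDist (t • w + a) (A : Set E) := by
    rw [Metric.le_infDist ⟨a, ha⟩]
    intro y hy
    have h1 : y - a ∈ A.direction := AffineSubspace.vsub_mem_direction hy ha
    have h2 : inner ℝ w (y - a) = 0 := (Submodule.mem_orthogonal' _ _).1 hw _ h1
    have h3 : inner ℝ w (t • w + a - y) = t * ‖w‖^2 := by
      have : t • w + a - y = t • w - (y - a) := by abel
      rw [this, inner_sub_right, h2, real_inner_smul_right, real_inner_self_eq_norm_sq, sub_zero]
    have h4 := real_inner_le_norm w (t • w + a - y)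
    rw [h3] at h4
    rw [dist_eq_norm]
    have h5 : t * ‖w‖ = |M| + 1 := by rw [ht]; field_simp
    nlinarith
  have := hdist (t • w + a)
  have := le_abs_self M
  linarith

theorem cocompact_action_of_cocompact (G : Subgroup (E ≃ᵢ E))
    (h : ∃ C : Set C(E, E), IsCompact C ∧ (∀ f ∈ C, ∃ ψ : E ≃ᵢ E, ∀ x, f x = ψ x) ∧
        (∀ ψ : E ≃ᵢ E, ∃ f ∈ C, ∃ φ ∈ G, ∀ x, ψ x = f (φ x))) :
    ∃ L : Set E, IsCompact L ∧ ∀ x : E, ∃ φ ∈ G, ∃ y ∈ L, φ y = x := by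
  obtain ⟨C, hC, hiso, hcov⟩ := h
  obtain ⟨R, hR⟩ := (hC.image (f := fun f : C(E, E) => ‖f 0‖)
    ((continuous_eval_const (0:E)).norm)).bddAbove
  refine ⟨Metric.closedBall 0 R, isCompact_closedBall _ _, fun x => ?_⟩
  obtain ⟨f, hf, φ, hφ, hψ⟩ := hcov (IsometryEquiv.subRight x)
  obtain ⟨χ, hχ⟩ := hiso f hf
  refine ⟨φ⁻¹, G.inv_mem hφ, φ x, ?_, φ.symm_apply_apply x⟩
  have h1 := hψ x
  have h0 : χ (φ x) = 0 := by rw [← hχ, ← h1]; simp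
  have h2 : dist (φ x) 0 = ‖f 0‖ := by
    rw [← χ.dist_eq, h0, dist_comm, dist_zero_right, hχ]
  rw [Metric.mem_closedBall, h2]
  exact hR ⟨f, hf, rfl⟩

theorem cocompact_of_cocompact_action (G : Subgroup (E ≃ᵢ E))
    (h : ∃ L : Set E, IsCompact L ∧ ∀ x : E, ∃ φ ∈ G, ∃ y ∈ L, φ y = x) :
    ∃ C : Set C(E, E), IsCompact C ∧ (∀ f ∈ C, ∃ ψ : E ≃ᵢ E, ∀ x, f x = ψ x) ∧
        (∀ ψ : E ≃ᵢ E, ∃ f ∈ C, ∃ φ ∈ G, ∀ x, ψ x = f (φ x)) := by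
  obtain ⟨L, hL, hGL⟩ := h
  obtain ⟨R, hR⟩ := (hL.image continuous_norm).bddAbove
  let F : (E →L[ℝ] E) × E → C(E, E) := fun p => ⟨fun x => p.1 x + p.2, by fun_prop⟩
  have hF : Continuous F := by
    apply ContinuousMap.continuous_of_continuous_uncurry
    change Continuous fun q : ((E →L[ℝ] E) × E) × E => q.1.1 q.2 + q.1.2
    fun_prop
  let O : Set (E →L[ℝ] E) := {A | ∀ x, ‖A x‖ = ‖x‖}
  have hO : IsCompact O := by
    apply Metric.isCompact_of_isClosed_isBounded
    · have : O = ⋂ x, {A : E →L[ℝ] E | ‖A x‖ = ‖x‖} := by ext; simp [O]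
      rw [this]
      exact isClosed_iInter fun x => isClosed_eq (by fun_prop) continuous_const
    · refine (Metric.isBounded_closedBall (x := (0 : E →L[ℝ] E)) (r := 1)).subset fun A hA => ?_
      rw [mem_closedBall_zero_iff]
      exact A.opNorm_le_bound zero_le_one fun x => by rw [hA x, one_mul]
  refine ⟨F '' (O ×ˢ Metric.closedBall 0 R), (hO.prod (isCompact_closedBall _ _)).image hF, ?_, ?_⟩
  · rintro _ ⟨⟨A, v⟩, ⟨hA, -⟩, rfl⟩
    let Al : E →ₗᵢ[ℝ] E := ⟨A.toLinearMap, hA⟩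
    exact ⟨(Al.toLinearIsometryEquiv rfl).toIsometryEquiv.trans (IsometryEquiv.addRight v),
      fun x => rfl⟩
  · intro ψ
    obtain ⟨φ, hφ, y, hy, hyx⟩ := hGL (ψ⁻¹ 0)
    refine ⟨F ((linPart (ψ * φ)).toContinuousLinearEquiv.toContinuousLinearMap, (ψ * φ) 0),
      ⟨_, ⟨fun x => by simp, ?_⟩, rfl⟩, φ⁻¹, G.inv_mem hφ, fun x => ?_⟩
    · have h1 : (ψ * φ) y = 0 := by
        rw [IsometryEquiv.mul_apply, hyx]; exact ψ.apply_symm_apply 0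
      have h2 : dist ((ψ * φ) 0) 0 = ‖y‖ := by
        nth_rewrite 2 [← h1]
        rw [IsometryEquiv.dist_eq, dist_zero_left]
      rw [Metric.mem_closedBall, h2]
      exact hR ⟨y, hy, rfl⟩
    · have h1 : F ((linPart (ψ * φ)).toContinuousLinearEquiv.toContinuousLinearMap, (ψ * φ) 0)
          (φ⁻¹ x) = (ψ * φ) (φ⁻¹ x) := (apply_eq (ψ * φ) (φ⁻¹ x)).symm
      rw [h1, IsometryEquiv.mul_apply]
      exact congrArg ψ (φ.apply_symm_apply x).symm

end Helpers

/-- For a closed subgroup `G` of `Isom(ℝⁿ)`, the following are equivalent: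
(i) `G` is cocompact in `Isom(ℝⁿ)`;
(ii) the action of `G` on `ℝⁿ` is cocompact;
(iii) `G` preserves no proper nonempty affine subspace of `ℝⁿ`. -/
theorem closed_subgroup_isom_euclidean_tfae
    (n : ℕ) (G : Subgroup (EuclideanSpace ℝ (Fin n) ≃ᵢ EuclideanSpace ℝ (Fin n)))
    (hGclosed : IsClosed {f : C(EuclideanSpace ℝ (Fin n), EuclideanSpace ℝ (Fin n)) |
      ReprIn G f}) :
    -- (i) ↔ (ii) :
    ((∃ C : Set C(EuclideanSpace ℝ (Fin n), EuclideanSpace ℝ (Fin n)),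
        IsCompact C ∧
        (∀ f ∈ C, ∃ ψ : EuclideanSpace ℝ (Fin n) ≃ᵢ EuclideanSpace ℝ (Fin n),
          ∀ x, f x = ψ x) ∧
        (∀ ψ : EuclideanSpace ℝ (Fin n) ≃ᵢ EuclideanSpace ℝ (Fin n),
          ∃ f ∈ C, ∃ φ ∈ G, ∀ x, ψ x = f (φ x))) ↔
      (∃ L : Set (EuclideanSpace ℝ (Fin n)), IsCompact L ∧
        ∀ x : EuclideanSpace ℝ (Fin n), ∃ φ ∈ G, ∃ y ∈ L, φ y = x)) ∧
    -- (ii) ↔ (iii) :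
    ((∃ L : Set (EuclideanSpace ℝ (Fin n)), IsCompact L ∧
        ∀ x : EuclideanSpace ℝ (Fin n), ∃ φ ∈ G, ∃ y ∈ L, φ y = x) ↔
      ¬ ∃ A : AffineSubspace ℝ (EuclideanSpace ℝ (Fin n)),
          A ≠ ⊥ ∧ A ≠ ⊤ ∧ ∀ φ ∈ G, (fun x => φ x) '' (A : Set (EuclideanSpace ℝ (Fin n))) = A) := by
  refine ⟨⟨cocompact_action_of_cocompact G, cocompact_of_cocompact_action G⟩,
    ⟨no_invariant_of_cocompact G, fun h => ?_⟩⟩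
  by_contra hL
  obtain ⟨u, hu, hu0⟩ := exists_barrier G hL
  exact h (invariant_of_barrier G hu hu0)
end
end
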